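/- arXiv:1612.04790 — 3 statements merged into one kernel-verified Lean document; each statement's English description precedes it below -/
import Mathlib

section
/- Let D be an open ear-decomposition of a 2-vertex-connected graph G with exactly φ(G) even ears, and let P be a 3-ear of D with endpoints x and z and internal vertices v and y, where v is adjacent to x and y is adjacent to z along P. Then D cannot contain both an ear Q1 with endpoints x and y and an ear Q2 with endpoints v and z such that Q1 and Q2 each have an even number of edges. -/
open SimpleGraph

variable {V : Type*}

/-- An *ear* of a graph `G`: a walk of length at least `1` whose two endpoints may
coincide, but all of whose other vertices are distinct (from each other and from the
endpoints); i.e. the walk is an (open) path, or a cycle when the endpoints coincide. -/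
structure Ear (G : SimpleGraph V) where
  a : V
  b : V
  walk : G.Walk a b
  length_pos : 1 ≤ walk.length
  ear : (a ≠ b ∧ walk.IsPath) ∨ (∃ h : a = b, (walk.copy rfl h.symm).IsCycle)

namespace Ear

variable {G : SimpleGraph V}

/-- The set of vertices of an ear. -/
def vertices (P : Ear G) : Set V := {v | v ∈ P.walk.support}

/-- The (set of) endpoints of an ear. -/
def endpoints (P : Ear G) : Set V := {P.a, P.b}

/-- The set `in(P)` of internal vertices of an ear. -/
def internal (P : Ear G) : Set V := P.vertices \ P.endpoints

/-- The internal vertices of an ear, as a `Finset`. -/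
def internalFinset [DecidableEq V] (P : Ear G) : Finset V :=
  P.walk.support.toFinset \ {P.a, P.b}

/-- The list of edges of an ear. -/
def edges (P : Ear G) : List (Sym2 V) := P.walk.edges

/-- A *trivial* ear has a single edge. -/
def IsTrivial (P : Ear G) : Prop := P.walk.length = 1

/-- A *short* ear has `2` or `3` edges. -/
def IsShort (P : Ear G) : Prop := P.walk.length = 2 ∨ P.walk.length = 3

/-- A *long* ear has at least `4` edges. -/
def IsLong (P : Ear G) : Prop := 4 ≤ P.walk.length

/-- An *open* ear has distinct endpoints. -/
def IsOpen (P : Ear G) : Prop := P.a ≠ P.b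

end Ear

/-- The trivial ear corresponding to a single edge `wy` of `G`. -/
def trivialEar (G : SimpleGraph V) {w y : V} (h : G.Adj w y) : Ear G where
  a := w
  b := y
  walk := SimpleGraph.Walk.cons h SimpleGraph.Walk.nil
  length_pos := by simp
  ear := Or.inl ⟨h.ne, by simp [h.ne]⟩

/-- The set of vertices appearing in the root or in the first `i` ears (those with
index `< i`) of a putative ear-decomposition. -/
def priorVerts {G : SimpleGraph V} (root : V) (ears : List (Ear G)) (i : ℕ) : Set V :=
  insert root {v | ∃ j : Fin ears.length, (j : ℕ) < i ∧ v ∈ (ears.get j).vertices}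

/-- An *ear-decomposition* of `G`: a root vertex `P₀` together with a sequence of ears
`P₁, …, P_k` such that each ear shares exactly its endpoints with the set of vertices
appearing earlier, and every edge of `G` lies in exactly one ear. -/
structure EarDecomp (G : SimpleGraph V) where
  root : V
  ears : List (Ear G)
  endpoints_sub : ∀ i : Fin ears.length,
    (ears.get i).endpoints ⊆ priorVerts root ears (i : ℕ)
  internal_new : ∀ i : Fin ears.length,
    (ears.get i).internal ∩ priorVerts root ears (i : ℕ) = ∅
  edge_cover : ∀ e ∈ G.edgeSet, ∃! i : Fin ears.length, e ∈ (ears.get i).edges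

namespace EarDecomp

variable {G : SimpleGraph V}

/-- An ear-decomposition is *open* if every ear except the first one is open. -/
def IsOpen (D : EarDecomp G) : Prop :=
  ∀ i : Fin D.ears.length, 1 ≤ (i : ℕ) → (D.ears.get i).IsOpen

/-- The number of even ears of an ear-decomposition. -/
def evenEars (D : EarDecomp G) : ℕ :=
  D.ears.countP fun P => decide (Even P.walk.length)

/-- The ear with index `i` is *pendant*: it is nontrivial, and no other nontrivial ear
has an endpoint among its internal vertices. -/
def IsPendant (D : EarDecomp G) (i : Fin D.ears.length) : Prop :=
  ¬ (D.ears.get i).IsTrivial ∧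
  ∀ j : Fin D.ears.length, j ≠ i → ¬ (D.ears.get j).IsTrivial →
    (D.ears.get j).a ∉ (D.ears.get i).internal ∧ (D.ears.get j).b ∉ (D.ears.get i).internal

/-- A *nice* ear-decomposition: open, all short ears are pendant, and no edge of `G`
connects internal vertices of two different short ears. -/
def IsNice (D : EarDecomp G) : Prop :=
  D.IsOpen ∧
  (∀ i : Fin D.ears.length, (D.ears.get i).IsShort → D.IsPendant i) ∧
  (∀ i j : Fin D.ears.length, i ≠ j → (D.ears.get i).IsShort → (D.ears.get j).IsShort →
    ∀ u ∈ (D.ears.get i).internal, ∀ v ∈ (D.ears.get j).internal, ¬ G.Adj u v)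

/-- The number `π` of pendant ears of an ear-decomposition. -/
noncomputable def numPendant (D : EarDecomp G) : ℕ :=
  letI := Classical.decPred fun i : Fin D.ears.length => D.IsPendant i
  (Finset.univ.filter fun i : Fin D.ears.length => D.IsPendant i).card

/-- The set `E'` of edges lying in nontrivial ears of an ear-decomposition. -/
noncomputable def nontrivialEdges [DecidableEq V] (D : EarDecomp G) : Finset (Sym2 V) :=
  letI := Classical.decPred fun i : Fin D.ears.length => ¬ (D.ears.get i).IsTrivial
  (Finset.univ.filter fun i : Fin D.ears.length => ¬ (D.ears.get i).IsTrivial).biUnion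
    fun i => (D.ears.get i).edges.toFinset

/-- The eardrum `M` arising from the pendant short ears of an ear-decomposition: for each
pendant `2`-ear its internal vertex, and for each pendant `3`-ear the pair of its internal
vertices (joined by an edge). -/
noncomputable def eardrum [DecidableEq V] (D : EarDecomp G) : Finset (Finset V) :=
  letI := Classical.decPred fun i : Fin D.ears.length =>
    (D.ears.get i).IsShort ∧ D.IsPendant i
  ((Finset.univ.filter fun i : Fin D.ears.length =>
      (D.ears.get i).IsShort ∧ D.IsPendant i).image
    fun i => (D.ears.get i).internalFinset)

/-- The set `V_I` of internal vertices of the non-pendant ears (including the root). -/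
noncomputable def VI [DecidableEq V] (D : EarDecomp G) : Finset V :=
  letI := Classical.decPred fun i : Fin D.ears.length => D.IsPendant i
  insert D.root ((Finset.univ.filter fun i : Fin D.ears.length => ¬ D.IsPendant i).biUnion
    fun i => (D.ears.get i).internalFinset)

end EarDecomp

/-- `φ(G)`: the minimum number of even ears over all ear-decompositions of `G`. -/
noncomputable def phi (G : SimpleGraph V) : ℕ :=
  sInf {n | ∃ D : EarDecomp G, D.evenEars = n}

/-- A graph is 2-vertex-connected if it has at least `3` vertices and deleting any single
vertex leaves a connected graph. -/
def TwoVertexConnected {W : Type*} (G : SimpleGraph W) : Prop :=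
  3 ≤ Nat.card W ∧ ∀ v : W, (G.induce ({v}ᶜ : Set W)).Connected

/-- `OPT_2VC(G)`: the minimum number of edges of a 2-vertex-connected spanning subgraph. -/
noncomputable def OPT2VC {W : Type*} (G : SimpleGraph W) : ℕ :=
  sInf {n | ∃ H : SimpleGraph W, H ≤ G ∧ TwoVertexConnected H ∧ H.edgeSet.ncard = n}

/-- An *eardrum* in `G`: a set of pairwise vertex-disjoint subgraphs, each consisting of a
single vertex or a single edge (encoded by their vertex sets). -/
def IsEardrum [DecidableEq V] (G : SimpleGraph V) (M : Finset (Finset V)) : Prop :=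
  (∀ f ∈ M, (∃ v, f = {v}) ∨ (∃ u v, G.Adj u v ∧ f = {u, v})) ∧
  ∀ f ∈ M, ∀ g ∈ M, f ≠ g → Disjoint f g

/-- `V(M)`: the set of vertices of the members of an eardrum. -/
def eardrumVerts (M : Finset (Finset V)) : Set V := {v | ∃ f ∈ M, v ∈ f}

/-- An *earmuff* for the eardrum `M`: a collection of paths `P_f`, for `f` in a subset
`F ⊆ M` (here given as a duplicate-free list of pairs `(f, P_f)`), such that each `P_f` is
a path whose set of internal vertices is exactly the vertex set of `f` (containing the
edge of `f` when `f` is an edge), whose two distinct endpoints lie outside `V(M)`, and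
such that the union of all the paths is a forest. -/
structure Earmuff (G : SimpleGraph V) (M : Finset (Finset V)) where
  pairs : List (Finset V × Ear G)
  nodup_fst : (pairs.map Prod.fst).Nodup
  mem_M : ∀ pr ∈ pairs, pr.1 ∈ M
  is_path : ∀ pr ∈ pairs, pr.2.a ≠ pr.2.b ∧ pr.2.walk.IsPath
  internal_eq : ∀ pr ∈ pairs, pr.2.internal = ↑pr.1
  edge_mem : ∀ pr ∈ pairs, ∀ u v : V, u ∈ pr.1 → v ∈ pr.1 → u ≠ v → s(u, v) ∈ pr.2.edges
  ends_outside : ∀ pr ∈ pairs, pr.2.a ∉ eardrumVerts M ∧ pr.2.b ∉ eardrumVerts M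
  forest : (SimpleGraph.fromEdgeSet {e : Sym2 V | ∃ pr ∈ pairs, e ∈ pr.2.edges}).IsAcyclic

/-- `µ(G, M)`: the maximum size of an earmuff for `M` in `G`. -/
noncomputable def mu (G : SimpleGraph V) (M : Finset (Finset V)) : ℕ :=
  sSup {n | ∃ em : Earmuff G M, em.pairs.length = n}


theorem aux_count {α : Type*} (q : α → Prop) [DecidablePred q] (l : List α) :
    l.countP (fun a => decide (q a)) = (Finset.univ.filter fun i : Fin l.length => q (l.get i)).card := by
  induction l with
  | nil => simp
  | cons a l ih =>
    rw [List.countP_cons, ih]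
    have := Fin.card_filter_univ_succ (fun i : Fin (l.length+1) => q ((a::l).get i))
    simp only [List.length_cons] at *
    rw [this]
    by_cases h : q a <;> simp [h]

theorem aux_mk {V : Type*} {G : SimpleGraph V} (root : V) (n : ℕ) (f : Fin n → Ear G)
    (h1 : ∀ i, ∀ u ∈ (f i).endpoints, u = root ∨ ∃ j, j < i ∧ u ∈ (f j).vertices)
    (h2 : ∀ i, ∀ u ∈ (f i).internal, u ≠ root ∧ ∀ j, j < i → u ∉ (f j).vertices)
    (h3 : ∀ e ∈ G.edgeSet, ∃! i, e ∈ (f i).edges) :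
    ∃ D : EarDecomp G, D.evenEars =
      (Finset.univ.filter fun i => Even (f i).walk.length).card := by
  obtain ⟨l, hl, hf⟩ : ∃ l : List (Ear G), ∃ h : l.length = n, f = fun i => l.get (i.cast h.symm) :=
    ⟨List.ofFn f, by simp, by funext i; simp⟩
  subst hl
  subst hf
  refine ⟨⟨root, l, ?_, ?_, h3⟩, ?_⟩
  · intro i u hu
    rcases h1 i u hu with h | ⟨j, hj, hu⟩
    · exact Or.inl h
    · exact Or.inr ⟨j, hj, hu⟩
  · intro i
    ext u
    simp only [Set.mem_inter_iff, Set.mem_empty_iff_false, iff_false, not_and]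
    intro hu
    have := h2 i u hu
    rintro (h | ⟨j, hj, hu'⟩)
    · exact this.1 h
    · exact this.2 j hj hu'
  · simp only [EarDecomp.evenEars]
    rw [aux_count]
    simp

theorem aux_three {V : Type*} {G : SimpleGraph V} (P : Ear G) (x v y z : V)
    (h : P.walk.support = [x, v, y, z]) :
    P.a = x ∧ P.b = z ∧ P.edges = [s(x,v), s(v,y), s(y,z)] ∧ P.walk.length = 3 ∧
    x ≠ v ∧ x ≠ y ∧ v ≠ y ∧ v ≠ z ∧ y ≠ z ∧ G.Adj v y ∧ G.Adj x v ∧ G.Adj y z := by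
  obtain ⟨a, b, w, hp, he⟩ := P
  simp only [Ear.edges] at *
  match w, h, he with
  | .cons h1 (.cons h2 (.cons h3 .nil)), h, he =>
    simp at h
    obtain ⟨rfl, rfl, rfl, rfl⟩ := h
    rcases he with ⟨hne, he⟩ | ⟨rfl, he⟩
    · simp at he
      simp_all
    · have := he.support_nodup
      simp at this
      simp_all
      grind
  | .cons h1 (.cons h2 (.cons h3 (.cons h4 w))), h, he =>
    simp at h

theorem aux_dir {V : Type*} {G : SimpleGraph V} (Q : Ear G) (x y : V) (hxy : x ≠ y)
    (h : (Q.a = x ∧ Q.b = y) ∨ (Q.a = y ∧ Q.b = x)) :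
    ∃ w : G.Walk x y, w.IsPath ∧ w.length = Q.walk.length ∧
      (∀ u, u ∈ w.support ↔ u ∈ Q.vertices) ∧ (∀ e, e ∈ w.edges ↔ e ∈ Q.edges) ∧
      (∀ u, u ∈ Q.vertices → u = x ∨ u = y ∨ u ∈ Q.internal) := by
  obtain ⟨a, b, w, hp, he⟩ := Q
  simp only [Ear.edges, Ear.vertices, Ear.internal, Ear.endpoints] at *
  rcases h with ⟨rfl, rfl⟩ | ⟨rfl, rfl⟩
  · rcases he with ⟨_, he⟩ | ⟨h, _⟩
    · refine ⟨w, he, rfl, by simp, by simp, ?_⟩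
      intro u hu
      simp at hu ⊢
      tauto
    · exact absurd h hxy
  · rcases he with ⟨_, he⟩ | ⟨h, _⟩
    · refine ⟨w.reverse, he.reverse, by simp, by simp, by simp, ?_⟩
      intro u hu
      simp at hu ⊢
      tauto
    · exact absurd h.symm hxy

theorem aux_join {V : Type*} {G : SimpleGraph V} {x y v z : V} (w1 : G.Walk x y) (w2 : G.Walk v z)
    (h : G.Adj y v) (hxv : x ≠ v) (p1 : w1.IsPath) (p2 : w2.IsPath)
    (hd : ∀ u, u ∈ w1.support → u ∈ w2.support → u = x ∧ u = z)
    (hxz : x = z → s(y,v) ∉ w1.edges ∧ s(y,v) ∉ w2.edges ∧ ∀ e ∈ w1.edges, e ∉ w2.edges) :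
    ∃ R : Ear G, R.a = x ∧ R.b = z ∧ R.walk.length = w1.length + 1 + w2.length ∧
      (∀ u, u ∈ R.vertices ↔ u ∈ w1.support ∨ u ∈ w2.support) ∧
      (∀ e, e ∈ R.edges ↔ e = s(y,v) ∨ e ∈ w1.edges ∨ e ∈ w2.edges) := by
  have hs1 := p1.support_nodup
  have hs2 := p2.support_nodup
  refine ⟨⟨x, z, w1.append (.cons h w2), by simp; omega, ?_⟩, rfl, rfl, by simp; omega, ?_, ?_⟩
  · by_cases hz : x = z
    · right
      refine ⟨hz, ?_⟩
      obtain ⟨n1, n2, n3⟩ := hxz hz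
      subst hz
      rw [Walk.copy_rfl_rfl, Walk.isCycle_def]
      refine ⟨?_, ?_, ?_⟩
      · rw [Walk.isTrail_def, Walk.edges_append, Walk.edges_cons, List.nodup_append]
        refine ⟨p1.isTrail.edges_nodup, ?_, ?_⟩
        · simp [n2, p2.isTrail.edges_nodup]
        · rintro e he e' he' rfl
          simp at he'
          rcases he' with rfl | he'
          · exact n1 he
          · exact n3 _ he he'
      · intro h'
        have := congrArg Walk.length h'
        simp at this
      · rw [Walk.tail_support_append, Walk.support_cons, List.tail_cons, List.nodup_append]
        refine ⟨hs1.tail, hs2, ?_⟩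
        rintro u hu u' hu' rfl
        have := (hd u (List.mem_of_mem_tail hu) hu').1
        subst this
        rw [← Walk.cons_tail_support] at hs1
        exact (List.nodup_cons.1 hs1).1 hu
    · left
      refine ⟨hz, ?_⟩
      rw [Walk.isPath_def, Walk.support_append, Walk.support_cons, List.tail_cons, List.nodup_append]
      refine ⟨hs1, hs2, ?_⟩
      rintro u hu u' hu' rfl
      have := hd u hu hu'
      exact hz (this.1.symm.trans this.2)
  · intro u
    simp only [Ear.vertices, Set.mem_ofPred_eq, Walk.mem_support_append_iff, Walk.support_cons,
      List.mem_cons]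
    have := w1.end_mem_support
    constructor
    · rintro (h | rfl | h) <;> tauto
    · tauto
  · intro e
    simp [Ear.edges]
    tauto

set_option maxHeartbeats 1000000 in
theorem aux_main {V : Type*} [Fintype V] [DecidableEq V] (G : SimpleGraph V)
    (h2 : TwoVertexConnected G)
    (D : EarDecomp G) (hopen : D.IsOpen) (hmin : D.evenEars = phi G)
    (p : Fin D.ears.length) (x v y z : V)
    (hsupp : (D.ears.get p).walk.support = [x, v, y, z]) :
    ¬ ∃ q1 q2 : Fin D.ears.length,
      (((D.ears.get q1).a = x ∧ (D.ears.get q1).b = y) ∨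
        ((D.ears.get q1).a = y ∧ (D.ears.get q1).b = x)) ∧
      (((D.ears.get q2).a = v ∧ (D.ears.get q2).b = z) ∨
        ((D.ears.get q2).a = z ∧ (D.ears.get q2).b = v)) ∧
      Even (D.ears.get q1).walk.length ∧ Even (D.ears.get q2).walk.length := by
  rintro ⟨q1, q2, hq1, hq2, e1, e2⟩
  have F1 : ∀ i, ∀ u ∈ (D.ears.get i).endpoints,
      u = D.root ∨ ∃ j, j < i ∧ u ∈ (D.ears.get j).vertices := by
    intro i u hu
    rcases D.endpoints_sub i hu with h | ⟨j, hj, h⟩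
    · exact Or.inl h
    · exact Or.inr ⟨j, hj, h⟩
  have F2 : ∀ i, ∀ u ∈ (D.ears.get i).internal,
      u ≠ D.root ∧ ∀ j, j < i → u ∉ (D.ears.get j).vertices := by
    intro i u hu
    have h := D.internal_new i
    have h' : u ∉ priorVerts D.root D.ears i := fun h' => by
      have : u ∈ (∅ : Set V) := h ▸ ⟨hu, h'⟩
      exact this
    exact ⟨fun h => h' (Or.inl h), fun j hj h => h' (Or.inr ⟨j, hj, h⟩)⟩
  have F3 : ∀ i j e, e ∈ (D.ears.get i).edges → e ∈ (D.ears.get j).edges → i = j := by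
    intro i j e hi hj
    exact (D.edge_cover e (Walk.edges_subset_edgeSet _ hi)).unique hi hj
  have F4 : ∀ e ∈ G.edgeSet, ∃ i, e ∈ (D.ears.get i).edges := by
    intro e he
    exact (D.edge_cover e he).exists
  have hcount : D.evenEars =
      (Finset.univ.filter fun i => Even (D.ears.get i).walk.length).card :=
    aux_count (fun P : Ear G => Even P.walk.length) D.ears
  have key : ∃ D' : EarDecomp G, D'.evenEars < D.evenEars := by
    rw [hcount]
    obtain ⟨pa, pb, pe, pl, xv, xy, vy, vz, yz, avy, axv, ayz⟩ := aux_three _ x v y z hsupp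
    have pv : ∀ u, u ∈ (D.ears.get p).vertices ↔ u = x ∨ u = v ∨ u = y ∨ u = z := by
      intro u; simp only [Ear.vertices, Set.mem_ofPred_eq, hsupp]; simp
    obtain ⟨w1, w1p, w1l, w1v, w1e, w1i⟩ := aux_dir _ x y xy hq1
    obtain ⟨w2, w2p, w2l, w2v, w2e, w2i⟩ := aux_dir _ v z vz hq2
    have pe' : ∀ u, u ∈ (D.ears.get p).endpoints ↔ u = x ∨ u = z := by
      intro u; simp [Ear.endpoints, -List.get_eq_getElem, pa, pb]
    have q1e : ∀ u, u ∈ (D.ears.get q1).endpoints ↔ u = x ∨ u = y := by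
      intro u; simp only [Ear.endpoints, Set.mem_insert_iff, Set.mem_singleton_iff]
      rcases hq1 with ⟨h, h'⟩ | ⟨h, h'⟩ <;> rw [h, h']
      tauto
    have q2e : ∀ u, u ∈ (D.ears.get q2).endpoints ↔ u = v ∨ u = z := by
      intro u; simp only [Ear.endpoints, Set.mem_insert_iff, Set.mem_singleton_iff]
      rcases hq2 with ⟨h, h'⟩ | ⟨h, h'⟩ <;> rw [h, h']
      tauto
    have int_iff : ∀ i u, u ∈ (D.ears.get i).internal ↔
        u ∈ (D.ears.get i).vertices ∧ u ∉ (D.ears.get i).endpoints := fun i u => Iff.rfl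
    have end_sub : ∀ i u, u ∈ (D.ears.get i).endpoints → u ∈ (D.ears.get i).vertices := by
      intro i u hu
      rcases hu with h | h
      · rw [h]; exact Walk.start_mem_support _
      · rw [h]; exact Walk.end_mem_support _
    have pe3 : ∀ e, e ∈ (D.ears.get p).edges ↔ e = s(x,v) ∨ e = s(v,y) ∨ e = s(y,z) := by
      intro e; rw [pe]; simp
    have vint : v ∈ (D.ears.get p).internal := by rw [int_iff, pv, pe']; tauto
    have yint : y ∈ (D.ears.get p).internal := by rw [int_iff, pv, pe']; tauto
    have hlt : ∀ i u, u ∈ (D.ears.get p).internal → u ∈ (D.ears.get i).endpoints → p < i := by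
      intro i u hu hu'
      rcases lt_trichotomy p i with h | h | h
      · exact h
      · subst h; exact absurd hu' hu.2
      · exact absurd (end_sub _ _ hu') ((F2 p u hu).2 i h)
    have hp1 : p < q1 := hlt q1 y yint ((q1e y).2 (Or.inr rfl))
    have hp2 : p < q2 := hlt q2 v vint ((q2e v).2 (Or.inl rfl))
    have hq12 : q1 ≠ q2 := by
      intro h
      have h1 := (q2e y).1 (h ▸ (q1e y).2 (Or.inr rfl))
      rcases h1 with h1 | h1
      · exact vy h1.symm
      · exact yz h1
    -- internal vertices occur only in one ear as internal
    have idis : ∀ i j u, i ≠ j → u ∈ (D.ears.get i).internal → u ∉ (D.ears.get j).internal := by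
      intro i j u hij hi hj
      rcases lt_or_gt_of_ne hij with h | h
      · exact (F2 j u hj).2 i h hi.1
      · exact (F2 i u hi).2 j h hj.1
    have n1 : ∀ u ∈ (D.ears.get q1).internal, u ≠ x ∧ u ≠ v ∧ u ≠ y ∧ u ≠ z := by
      intro u hu
      have := (F2 q1 u hu).2 p hp1
      rw [pv] at this
      grind
    have n2 : ∀ u ∈ (D.ears.get q2).internal, u ≠ x ∧ u ≠ v ∧ u ≠ y ∧ u ≠ z := by
      intro u hu
      have := (F2 q2 u hu).2 p hp2
      rw [pv] at this
      grind
    have d12 : ∀ u ∈ (D.ears.get q1).internal, u ∉ (D.ears.get q2).internal :=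
      fun u => idis q1 q2 u hq12
    have hvy : s(y,v) ∈ (D.ears.get p).edges := by
      rw [pe3, Sym2.eq_swap]; tauto
    obtain ⟨R, Ra, Rb, Rl, Rv, Re⟩ := aux_join w1 w2 avy.symm xv w1p w2p (by
      intro u h1 h2
      rw [w1v] at h1; rw [w2v] at h2
      have a1 := w1i u h1
      have a2 := w2i u h2
      have := n1 u
      have := n2 u
      have := d12 u
      grind) (by
      intro _
      refine ⟨fun h => ?_, fun h => ?_, fun e h h' => ?_⟩
      · exact hp1.ne (F3 _ _ _ hvy ((w1e _).1 h))
      · exact hp2.ne (F3 _ _ _ hvy ((w2e _).1 h))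
      · exact hq12 (F3 _ _ _ ((w1e _).1 h) ((w2e _).1 h')))
    simp only [w1v, w2v] at Rv
    simp only [w1e, w2e] at Re
    have tv : ∀ {a b : V} (h : G.Adj a b) u, u ∈ (trivialEar G h).vertices ↔ u = a ∨ u = b := by
      intro a b h u; simp [trivialEar, Ear.vertices]
    have ten : ∀ {a b : V} (h : G.Adj a b) u, u ∈ (trivialEar G h).endpoints ↔ u = a ∨ u = b := by
      intro a b h u; simp [trivialEar, Ear.endpoints]
    have te : ∀ {a b : V} (h : G.Adj a b) e, e ∈ (trivialEar G h).edges ↔ e = s(a,b) := by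
      intro a b h u; simp [trivialEar, Ear.edges]
    have tl : ∀ {a b : V} (h : G.Adj a b), (trivialEar G h).walk.length = 1 := by
      intro a b h; simp [trivialEar]
    have Ren : ∀ u, u ∈ R.endpoints ↔ u = x ∨ u = z := by
      intro u; simp [Ear.endpoints, Ra, Rb]
    obtain ⟨f, fp, f1, f2, fo⟩ : ∃ f : Fin D.ears.length → Ear G, f p = R ∧
        f q1 = trivialEar G axv ∧ f q2 = trivialEar G ayz ∧
        ∀ i, i ≠ p → i ≠ q1 → i ≠ q2 → f i = D.ears.get i := by
      refine ⟨fun i => if i = p then R else if i = q1 then trivialEar G axv else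
        if i = q2 then trivialEar G ayz else D.ears.get i, ?_, ?_, ?_, ?_⟩
      · simp
      · simp [hp1.ne']
      · simp [hp2.ne', hq12.symm]
      · intro i h1 h2 h3; simp [h1, h2, h3]
    have cases4 : ∀ i, i = p ∨ i = q1 ∨ i = q2 ∨ (i ≠ p ∧ i ≠ q1 ∧ i ≠ q2) := by
      intro i; tauto
    have Rint : ∀ u, u ∈ R.internal → u = v ∨ u = y ∨ u ∈ (D.ears.get q1).internal ∨
        u ∈ (D.ears.get q2).internal := by
      rintro u ⟨hu, hu'⟩
      rw [Rv] at hu; rw [Ren] at hu'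
      have := w1i u; have := w2i u
      grind
    have Rend1 : x ∈ R.vertices := (Rv x).2 (Or.inl (end_sub _ _ ((q1e x).2 (Or.inl rfl))))
    have Rend2 : y ∈ R.vertices := (Rv y).2 (Or.inl (end_sub _ _ ((q1e y).2 (Or.inr rfl))))
    have Rend3 : v ∈ R.vertices := (Rv v).2 (Or.inr (end_sub _ _ ((q2e v).2 (Or.inl rfl))))
    have Rend4 : z ∈ R.vertices := (Rv z).2 (Or.inr (end_sub _ _ ((q2e z).2 (Or.inr rfl))))
    -- old vertices are covered
    have up : ∀ i j u, j < i → u ∈ (D.ears.get j).vertices → ∃ j, j < i ∧ u ∈ (f j).vertices := by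
      intro i j u hj hu
      rcases cases4 j with rfl | rfl | rfl | ⟨h1, h2, h3⟩
      · refine ⟨j, hj, ?_⟩
        rw [fp]
        rcases (pv u).1 hu with rfl | rfl | rfl | rfl <;> assumption
      · exact ⟨p, hp1.trans hj, by rw [fp, Rv]; exact Or.inl hu⟩
      · exact ⟨p, hp2.trans hj, by rw [fp, Rv]; exact Or.inr hu⟩
      · exact ⟨j, hj, by rw [fo j h1 h2 h3]; exact hu⟩
    have G1 : ∀ i, ∀ u ∈ (f i).endpoints, u = D.root ∨ ∃ j, j < i ∧ u ∈ (f j).vertices := by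
      intro i u hu
      have old : u ∈ (D.ears.get i).endpoints → u = D.root ∨ ∃ j, j < i ∧ u ∈ (f j).vertices := by
        intro h
        rcases F1 i u h with h | ⟨j, hj, h⟩
        · exact Or.inl h
        · exact Or.inr (up i j u hj h)
      rcases cases4 i with rfl | rfl | rfl | ⟨h1, h2, h3⟩
      · rw [fp, Ren, ← pe'] at hu
        exact old hu
      · rw [f1, ten] at hu
        refine Or.inr ⟨p, hp1, ?_⟩
        rw [fp]
        rcases hu with rfl | rfl <;> assumption
      · rw [f2, ten] at hu
        refine Or.inr ⟨p, hp2, ?_⟩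
        rw [fp]
        rcases hu with rfl | rfl <;> assumption
      · rw [fo i h1 h2 h3] at hu
        exact old hu
    have G2 : ∀ i, ∀ u ∈ (f i).internal, u ≠ D.root ∧ ∀ j, j < i → u ∉ (f j).vertices := by
      intro i u hu
      rcases cases4 i with rfl | rfl | rfl | ⟨h1, h2, h3⟩
      · rw [fp] at hu
        have : ∃ k, i ≤ k ∧ u ∈ (D.ears.get k).internal := by
          rcases Rint u hu with rfl | rfl | h | h
          · exact ⟨i, le_rfl, vint⟩
          · exact ⟨i, le_rfl, yint⟩
          · exact ⟨q1, hp1.le, h⟩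
          · exact ⟨q2, hp2.le, h⟩
        obtain ⟨k, hk, hu⟩ := this
        refine ⟨(F2 k u hu).1, fun j hj => ?_⟩
        rw [fo j hj.ne (hj.trans hp1).ne (hj.trans hp2).ne]
        exact (F2 k u hu).2 j (hj.trans_le hk)
      · rw [f1] at hu
        exact absurd ((ten _ _).2 ((tv _ _).1 hu.1)) hu.2
      · rw [f2] at hu
        exact absurd ((ten _ _).2 ((tv _ _).1 hu.1)) hu.2
      · rw [fo i h1 h2 h3] at hu
        refine ⟨(F2 i u hu).1, fun j hj hj' => ?_⟩
        have old := (F2 i u hu).2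
        have ip : p < i → u ≠ x ∧ u ≠ v ∧ u ≠ y ∧ u ≠ z := by
          intro h
          have := old p h
          rw [pv] at this
          grind
        rcases cases4 j with rfl | rfl | rfl | ⟨h1', h2', h3'⟩
        · rw [fp, Rv] at hj'
          have := ip hj
          have := w1i u; have := w2i u
          have := idis i q1 u h2 hu
          have := idis i q2 u h3 hu
          grind
        · rw [f1, tv] at hj'
          have := ip (hp1.trans hj)
          grind
        · rw [f2, tv] at hj'
          have := ip (hp2.trans hj)
          grind
        · rw [fo j h1' h2' h3'] at hj'
          exact old j hj hj'
    have s1 : s(x,v) ≠ s(v,y) := by simp; tauto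
    have s2 : s(x,v) ≠ s(y,z) := by simp; tauto
    have s3 : s(v,y) ≠ s(y,z) := by simp; tauto
    have s4 : s(y,v) = s(v,y) := Sym2.eq_swap
    rw [s4] at Re
    -- owner description
    have own : ∀ e i, e ∈ (f i).edges ↔ (i = p ∧ (e = s(v,y) ∨ e ∈ (D.ears.get q1).edges ∨
        e ∈ (D.ears.get q2).edges)) ∨ (i = q1 ∧ e = s(x,v)) ∨ (i = q2 ∧ e = s(y,z)) ∨
        ((i ≠ p ∧ i ≠ q1 ∧ i ≠ q2) ∧ e ∈ (D.ears.get i).edges) := by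
      intro e i
      have a1 := hp1.ne
      have a2 := hp2.ne
      rcases cases4 i with rfl | rfl | rfl | ⟨h1, h2, h3⟩
      · rw [fp, Re]; simp [a1, a2, -List.get_eq_getElem]
      · rw [f1, te]; simp [a1.symm, hq12, -List.get_eq_getElem]
      · rw [f2, te]; simp [a2.symm, hq12.symm, -List.get_eq_getElem]
      · rw [fo i h1 h2 h3]; simp [h1, h2, h3, -List.get_eq_getElem]
    have G3 : ∀ e ∈ G.edgeSet, ∃! i, e ∈ (f i).edges := by
      intro e he
      obtain ⟨k, hk⟩ := F4 e he
      have a1 := hp1.ne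
      have a2 := hp2.ne
      have u1 : ∀ i, e ∈ (D.ears.get i).edges → i = k := fun i hi => F3 i k e hi hk
      have b := pe3 e
      have : ∃ i, e ∈ (f i).edges := by
        simp only [own]
        rcases cases4 k with rfl | rfl | rfl | ⟨h1, h2, h3⟩
        · rcases b.1 hk with h | h | h
          · exact ⟨q1, Or.inr (Or.inl ⟨rfl, h⟩)⟩
          · exact ⟨k, Or.inl ⟨rfl, Or.inl h⟩⟩
          · exact ⟨q2, Or.inr (Or.inr (Or.inl ⟨rfl, h⟩))⟩
        · exact ⟨p, Or.inl ⟨rfl, Or.inr (Or.inl hk)⟩⟩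
        · exact ⟨p, Or.inl ⟨rfl, Or.inr (Or.inr hk)⟩⟩
        · exact ⟨k, Or.inr (Or.inr (Or.inr ⟨⟨h1, h2, h3⟩, hk⟩))⟩
      obtain ⟨i, hi⟩ := this
      refine ⟨i, hi, fun j hj => ?_⟩
      have hj : e ∈ (f j).edges := hj
      rw [own] at hi hj
      have c1 := u1 p
      have c2 := u1 q1
      have c3 := u1 q2
      have c4 := u1 i
      have c5 := u1 j
      clear own u1 F1 F2 F3 F4 G1 G2 up idis cases4 int_iff end_sub
      generalize (e ∈ (D.ears.get p).edges) = A at *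
      generalize (e ∈ (D.ears.get q1).edges) = A1 at *
      generalize (e ∈ (D.ears.get q2).edges) = A2 at *
      generalize (e ∈ (D.ears.get i).edges) = A3 at *
      generalize (e ∈ (D.ears.get j).edges) = A4 at *
      clear * - hi hj b c1 c2 c3 c4 c5 s1 s2 s3 a1 a2 hq12
      grind
    obtain ⟨D', hD'⟩ := aux_mk D.root _ f G1 G2 G3
    refine ⟨D', ?_⟩
    rw [hD']
    apply Finset.card_lt_card
    rw [Finset.ssubset_iff_of_subset]
    · refine ⟨q1, by simpa using e1, ?_⟩
      rw [Finset.mem_filter, f1, tl]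
      simp
    · intro i hi
      rw [Finset.mem_filter] at hi ⊢
      refine ⟨Finset.mem_univ _, ?_⟩
      have hi := hi.2
      rcases cases4 i with rfl | rfl | rfl | ⟨h1, h2, h3⟩
      · rw [fp, Rl, w1l, w2l] at hi
        exfalso
        rw [Nat.even_add, Nat.even_add_one] at hi
        exact hi.2 e2 e1
      · exact e1
      · exact e2
      · rwa [fo i h1 h2 h3] at hi
  obtain ⟨D', hD'⟩ := key
  have : phi G ≤ D'.evenEars := Nat.sInf_le ⟨D', rfl⟩
  omega

/-- In an open ear-decomposition of a 2-vertex-connected graph with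
exactly `φ(G)` even ears, if `P` is a `3`-ear with vertices `x, v, y, z` in order, then
the decomposition cannot contain both an ear `Q₁` with endpoints `x` and `y` and an ear
`Q₂` with endpoints `v` and `z` such that both `Q₁` and `Q₂` are even. -/
theorem statement_4 {V : Type*} [Fintype V] [DecidableEq V] (G : SimpleGraph V)
    (h2 : TwoVertexConnected G)
    (D : EarDecomp G) (hopen : D.IsOpen) (hmin : D.evenEars = phi G)
    (p : Fin D.ears.length) (x v y z : V)
    (hsupp : (D.ears.get p).walk.support = [x, v, y, z]) :
    ¬ ∃ q1 q2 : Fin D.ears.length,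
      (((D.ears.get q1).a = x ∧ (D.ears.get q1).b = y) ∨
        ((D.ears.get q1).a = y ∧ (D.ears.get q1).b = x)) ∧
      (((D.ears.get q2).a = v ∧ (D.ears.get q2).b = z) ∨
        ((D.ears.get q2).a = z ∧ (D.ears.get q2).b = v)) ∧
      Even (D.ears.get q1).walk.length ∧ Even (D.ears.get q2).walk.length := by
  exact aux_main G h2 D hopen hmin p x v y z hsupp
end

section
/- Every 2-vertex-connected simple graph G with minimum degree at least 3 has a nice ear-decomposition with exactly φ(G) even ears; that is, an open ear-decomposition with φ(G) even ears in which all short ears are pendant and no edge of G connects internal vertices of two different short ears. -/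
open SimpleGraph

variable {V : Type*}

section Helper
set_option linter.unusedSectionVars false
variable [DecidableEq V]

def Pth (G : SimpleGraph V) (a : V) (L : List V) (b : V) : Prop :=
  List.IsChain G.Adj (a :: (L ++ [b]))

theorem pth_nil {G : SimpleGraph V} {a b : V} : Pth G a [] b ↔ G.Adj a b := by
  simp [Pth]

theorem pth_cons {G : SimpleGraph V} {a x b : V} {L : List V} :
    Pth G a (x :: L) b ↔ G.Adj a x ∧ Pth G x L b := by
  simp [Pth]

theorem pth_append {G : SimpleGraph V} {a x b : V} {L M : List V} :
    Pth G a (L ++ x :: M) b ↔ Pth G a L x ∧ Pth G x M b := by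
  induction L generalizing a with
  | nil => simp [pth_cons, pth_nil]
  | cons y L ih => simp only [List.cons_append, pth_cons, ih]; tauto

theorem pth_rev' {G : SimpleGraph V} {a b : V} {L : List V} (h : Pth G a L b) :
    Pth G b L.reverse a := by
  induction L generalizing a with
  | nil => rw [pth_nil] at h; simpa [pth_nil] using h.symm
  | cons y L ih =>
    rw [pth_cons] at h
    simp only [List.reverse_cons, pth_append, pth_nil]
    exact ⟨ih h.2, h.1.symm⟩

theorem pth_rev {G : SimpleGraph V} {a b : V} {L : List V} :
    Pth G b L.reverse a ↔ Pth G a L b :=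
  ⟨fun h => by simpa using pth_rev' h, pth_rev'⟩

/-- ear over `X`, possibly closed -/
structure CE (G : SimpleGraph V) (X : Finset V) (a : V) (L : List V) (b : V) : Prop where
  ha : a ∈ X
  hb : b ∈ X
  hcl : a = b → 2 ≤ L.length
  pth : Pth G a L b
  nd : L.Nodup
  new : ∀ x ∈ L, x ∉ X

/-- open ear over `X` (possibly trivial) -/
structure OE (G : SimpleGraph V) (X : Finset V) (a : V) (L : List V) (b : V) : Prop where
  ha : a ∈ X
  hb : b ∈ X
  ne : a ≠ b
  pth : Pth G a L b
  nd : L.Nodup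
  new : ∀ x ∈ L, x ∉ X

theorem OE.rev {G : SimpleGraph V} {X : Finset V} {a b : V} {L : List V} (h : OE G X a L b) :
    OE G X b L.reverse a :=
  ⟨h.hb, h.ha, h.ne.symm, pth_rev.2 h.pth, by simpa using h.nd, by simpa using h.new⟩

theorem OE.mono {G : SimpleGraph V} {X Y : Finset V} {a b : V} {L : List V} (h : OE G X a L b)
    (hXY : X ⊆ Y) (hd : ∀ x ∈ L, x ∉ Y) : OE G Y a L b :=
  ⟨hXY h.ha, hXY h.hb, h.ne, h.pth, h.nd, hd⟩

inductive RR (G : SimpleGraph V) : Finset V → ℕ → Finset V → Prop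
  | refl (X : Finset V) : RR G X 0 X
  | step {X Y : Finset V} {a b : V} {L : List V} {m : ℕ} :
      OE G X a L b → RR G (X ∪ L.toFinset) m Y → RR G X (L.length % 2 + m) Y

inductive RC (G : SimpleGraph V) : Finset V → ℕ → Finset V → Prop
  | refl (X : Finset V) : RC G X 0 X
  | step {X Y : Finset V} {a b : V} {L : List V} {m : ℕ} :
      CE G X a L b → RC G (X ∪ L.toFinset) m Y → RC G X (L.length % 2 + m) Y

theorem RR.sub {G : SimpleGraph V} {X Y : Finset V} {m : ℕ} (h : RR G X m Y) : X ⊆ Y := by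
  induction h with
  | refl => exact subset_rfl
  | step _ _ ih => exact Finset.subset_union_left.trans ih

theorem RR.trans {G : SimpleGraph V} {X Y Z : Finset V} {m n : ℕ} (h : RR G X m Y)
    (h' : RR G Y n Z) : RR G X (m + n) Z := by
  induction h with
  | refl => simpa using h'
  | step he _ ih => rw [add_assoc]; exact RR.step he (ih h')

theorem RR.lift {G : SimpleGraph V} {X Y T : Finset V} {m : ℕ} (h : RR G X m Y)
    (hd : ∀ x ∈ T, x ∈ Y → x ∈ X) : RR G (X ∪ T) m (Y ∪ T) := by
  induction h with
  | refl => exact RR.refl _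
  | @step X Y a b L m he hr ih =>
    have hs := hr.sub
    refine RR.step (he.mono Finset.subset_union_left ?_) ?_
    · intro x hx hx'
      have := he.new x hx
      have h1 : x ∈ Y := hs (by simp [hx])
      grind
    · have := ih (by intro x hx hy; simp [hd x hx hy])
      convert this using 1
      ext x; simp; tauto

/-- splitting an ear at an internal vertex, with parity control -/
theorem CE.split {G : SimpleGraph V} {X : Finset V} {a b : V} {L : List V} (h : CE G X a L b)
    {x : V} (hx : x ∈ L) (l : ℕ) :
    ∃ e f Z M, ((e = a ∧ f = b) ∨ (e = b ∧ f = a)) ∧ Pth G e Z x ∧ Pth G x M f ∧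
      (Z ++ x :: M).Nodup ∧ (∀ y, y ∈ L ↔ y ∈ Z ∨ y = x ∨ y ∈ M) ∧
      (Z.length + 1 + l) % 2 + M.length % 2 ≤ L.length % 2 + l % 2 := by
  obtain ⟨L1, L2, rfl⟩ := List.append_of_mem hx
  have hp := pth_append.1 h.pth
  have hn := h.nd
  by_cases hpar : L2.length % 2 = 0 ∨ L1.length % 2 = 1
  · refine ⟨a, b, L1, L2, Or.inl ⟨rfl, rfl⟩, hp.1, hp.2, hn, by simp, ?_⟩
    simp only [List.length_append, List.length_cons]; omega
  · refine ⟨b, a, L2.reverse, L1.reverse, Or.inr ⟨rfl, rfl⟩, pth_rev.2 hp.2, pth_rev.2 hp.1,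
      ?_, ?_, ?_⟩
    · have := List.nodup_reverse.2 hn
      simpa using this
    · intro y; simp; tauto
    · simp only [List.length_append, List.length_cons, List.length_reverse]; omega

theorem OE.toCE {G : SimpleGraph V} {X : Finset V} {a b : V} {L : List V} (h : OE G X a L b) :
    CE G X a L b := ⟨h.ha, h.hb, fun e => absurd e h.ne, h.pth, h.nd, h.new⟩

theorem RR.cast {G : SimpleGraph V} {X X' Y Y' : Finset V} {m m' : ℕ} (h : RR G X m Y)
    (hX : ∀ x, x ∈ X ↔ x ∈ X') (hY : ∀ x, x ∈ Y ↔ x ∈ Y') (hm : m = m') : RR G X' m' Y' := by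
  obtain rfl : X = X' := Finset.ext hX
  obtain rfl : Y = Y' := Finset.ext hY
  exact hm ▸ h

/-- after splitting an ear at `x`, the leftover part can be put afterwards -/
theorem RR.leftover {G : SimpleGraph V} {X Y W : Finset V} {x f : V} {M : List V} {m : ℕ}
    (hx : x ∈ X) (hf : f ∈ X) (hne : x ≠ f) (hp : Pth G x M f) (hn : M.Nodup)
    (hnew : ∀ y ∈ M, y ∉ X) (h : RR G W m Y) (hW : ∀ y, y ∈ W ↔ y ∈ X ∨ y ∈ M) :
    RR G X (M.length % 2 + m) Y :=
  RR.step ⟨hx, hf, hne, hp, hn, hnew⟩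
    (h.cast (by intro y; simp [hW]) (fun _ => Iff.rfl) rfl)

set_option maxHeartbeats 1000000 in
/-- pulling back: Lemma A -/
theorem RR.pull {G : SimpleGraph V} {S Y : Finset V} {m : ℕ} (h : RR G S m Y) {x : V}
    (hxY : x ∈ Y) (hxS : x ∉ S) (l : ℕ) :
    ∃ s ∈ S, ∃ Z : List V, Pth G s Z x ∧ (Z ++ [x]).Nodup ∧ (∀ y ∈ Z ++ [x], y ∈ Y ∧ y ∉ S) ∧
      ∃ m', RR G (S ∪ (Z ++ [x]).toFinset) m' Y ∧ m' + (Z.length + 1 + l) % 2 ≤ m + l % 2 := by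
  induction h generalizing l with
  | refl => exact absurd hxY hxS
  | @step S Y a b L m he hr ih =>
    have hs := hr.sub
    by_cases hxL : x ∈ L
    · obtain ⟨e, f, Z, M, hef, hZ, hM, hn, hL, hpar⟩ := he.toCE.split hxL l
      have h1 := he.ha
      have h2 := he.hb
      have h3 := he.new
      refine ⟨e, by grind, Z, hZ, by grind, ?_, M.length % 2 + m, ?_, by omega⟩
      · intro y hy
        have : y ∈ L := by rw [hL]; simp at hy; tauto
        exact ⟨hs (by simp [this]), h3 y this⟩
      · refine RR.leftover (x := x) (f := f) (by simp) ?_ ?_ hM (by grind) ?_ hr ?_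
        · grind
        · grind
        · intro y hy
          have : y ∈ L := by rw [hL]; tauto
          have := h3 y this
          clear ih hL
          simp only [List.nodup_append, List.nodup_cons] at hn
          grind [List.mem_toFinset]
        · intro y; simp [hL]; tauto
    · obtain ⟨s, hsS, Z, hZ, hn, hZY, m', hr', hpar⟩ := ih hxY (by simp [hxS, hxL]) l
      by_cases hsS' : s ∈ S
      · refine ⟨s, hsS', Z, hZ, hn, fun y hy => ⟨(hZY y hy).1, fun h => (hZY y hy).2 (by simp [h])⟩,
          L.length % 2 + m', ?_, by omega⟩
        refine RR.leftover (x := a) (f := b) (by simp [he.ha]) (by simp [he.hb]) he.ne he.pth he.nd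
          ?_ hr' (by intro y; simp; tauto)
        intro y hy hy'
        have h3 := he.new y hy
        have : y ∈ Z ++ [x] := by simp at hy' ⊢; tauto
        exact (hZY y this).2 (by simp [hy])
      · have hsL : s ∈ L := by simpa [hsS'] using hsS
        obtain ⟨e, f, Z1, M, hef, hZ1, hM, hn1, hL, hpar1⟩ := he.toCE.split hsL (Z.length + 1 + l)
        have h1 := he.ha
        have h2 := he.hb
        have h3 := he.new
        clear ih
        have hdis : ∀ y ∈ Z ++ [x], y ∉ L ∧ y ∉ S := by
          intro y hy; have := (hZY y hy).2; simp at this; tauto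
        refine ⟨e, by grind, Z1 ++ s :: Z, pth_append.2 ⟨hZ1, hZ⟩, ?_, ?_, M.length % 2 + m', ?_, ?_⟩
        · simp only [List.nodup_append, List.nodup_cons] at hn hn1 ⊢
          grind
        · intro y hy
          have : y ∈ L ∨ y ∈ Z ++ [x] := by rw [hL]; simp at hy ⊢; tauto
          rcases this with h | h
          · exact ⟨hs (by simp [h]), h3 y h⟩
          · exact ⟨(hZY y h).1, (hdis y h).2⟩
        · refine RR.leftover (x := s) (f := f) (by simp) ?_ ?_ hM (by grind) ?_ hr' ?_
          · grind
          · grind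
          · intro y hy hy'
            have h4 : y ∈ L := by rw [hL]; tauto
            have h5 := h3 y h4
            have h6 : y ∉ Z ++ [x] := fun h => (hdis y h).1 h4
            clear hL hZY hdis h3
            simp only [List.nodup_append, List.nodup_cons] at hn1
            simp only [Finset.mem_union, List.mem_toFinset, List.mem_append, List.mem_cons] at hy' h6
            grind
          · intro y; have := hL y; clear * - this; simp only [Finset.mem_union, List.mem_toFinset, List.mem_append, List.mem_cons, List.not_mem_nil] at *; grind
        · simp only [List.length_append, List.length_cons]
          have : Z1.length + (Z.length + 1) + 1 + l = Z1.length + 1 + (Z.length + 1 + l) := by ring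
          omega

end Helper

section HelperB
set_option linter.unusedSectionVars false
variable [DecidableEq V]

theorem mem_lem {X : Finset V} {L : List V} {x : V} : x ∈ X ∪ L.toFinset ↔ x ∈ X ∨ x ∈ L := by
  simp

set_option maxHeartbeats 1000000 in
/-- Lemma N -/
theorem RR.attach [Fintype V] {G : SimpleGraph V} {X Y : Finset V} {m : ℕ} (h : RR G X m Y)
    (hY : Y = Finset.univ) {v t1 t2 x : V} (hv : v ∈ X) (hx : G.Adj v x) (hx1 : x ≠ t1)
    (hx2 : x ≠ t2) :
    ∃ s ∈ X, ∃ N : List V, v ≠ s ∧ Pth G v N s ∧ N.Nodup ∧ (∀ y ∈ N, y ∉ X) ∧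
      (N = [] → s ≠ t1 ∧ s ≠ t2) ∧ ∃ m', RR G (X ∪ N.toFinset) m' Y ∧ m' + N.length % 2 ≤ m := by
  induction h with
  | refl X =>
    subst hY
    exact ⟨x, by simp, [], hx.ne, pth_nil.2 hx, by simp, by simp, fun _ => ⟨hx1, hx2⟩, 0,
      by simpa using RR.refl (G := G) (Finset.univ : Finset V), by simp⟩
  | @step X Y a b L m he hr ih =>
    have h1 := he.ha
    have h2 := he.hb
    have h3 := he.new
    have h4 := he.ne
    by_cases hL : L = []
    · subst hL
      obtain ⟨s, hs, N, q1, q2, q3, q4, q5, m', q6, q7⟩ := ih hY (by simp [hv])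
      exact ⟨s, by simpa using hs, N, q1, q2, q3, by simpa using q4, q5, m', by simpa using q6,
        by simpa using q7⟩
    by_cases hav : a = v
    · subst hav
      exact ⟨b, h2, L, h4, he.pth, he.nd, h3, fun h => absurd h hL, m, hr, by omega⟩
    by_cases hbv : b = v
    · subst hbv
      exact ⟨a, h1, L.reverse, h4.symm, pth_rev.2 he.pth, by simpa using he.nd, by simpa using h3,
        fun h => absurd (by simpa using h) hL, m, by simpa using hr, by simp; omega⟩
    obtain ⟨s, hs, N, q1, q2, q3, q4, q5, m', q6, q7⟩ := ih hY (by simp [hv])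
    clear ih
    have q4' : ∀ y ∈ N, y ∉ X ∧ y ∉ L := by
      intro y hy; have := q4 y hy; rw [mem_lem] at this; tauto
    by_cases hsX : s ∈ X
    · refine ⟨s, hsX, N, q1, q2, q3, fun y hy => (q4' y hy).1, q5, L.length % 2 + m', ?_, by omega⟩
      refine RR.leftover (x := a) (f := b) (by simp [he.ha]) (by simp [he.hb]) he.ne he.pth he.nd
          ?_ q6 (by intro y; simp only [mem_lem]; grind)
      intro y hy; rw [mem_lem]; grind
    · have hsL : s ∈ L := by rw [mem_lem] at hs; tauto
      obtain ⟨e, f, Z1, M, hef, hZ1, hM, hn1, hL', hpar1⟩ := he.toCE.split hsL N.length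
      refine ⟨e, by grind, N ++ s :: Z1.reverse, by grind,
        pth_append.2 ⟨q2, pth_rev.2 hZ1⟩, ?_, ?_, by simp, M.length % 2 + m', ?_, ?_⟩
      · simp only [List.nodup_append, List.nodup_cons, List.nodup_reverse, List.mem_reverse] at hn1 ⊢
        grind
      · intro y hy
        simp only [List.mem_append, List.mem_cons, List.mem_reverse] at hy
        grind
      · refine RR.leftover (x := s) (f := f) (by simp) ?_ ?_ hM (by grind) ?_ q6 ?_
        · grind
        · grind
        · intro y hy
          have h5 : y ∈ L := by rw [hL']; tauto
          have h6 := h3 y h5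
          have h7 : y ∉ N := fun h => (q4' y h).2 h5
          clear hL' q4' q4 h3
          simp only [List.nodup_append, List.nodup_cons] at hn1
          simp only [mem_lem, List.mem_append, List.mem_cons, List.mem_reverse]
          grind
        · intro y; have := hL' y; clear * - this
          simp only [mem_lem, List.mem_append, List.mem_cons, List.mem_reverse]; grind
      · simp only [List.length_append, List.length_cons, List.length_reverse]
        omega

set_option maxHeartbeats 1000000 in
/-- The closed-start version of the pull-back lemma. -/
theorem closed_pull {G : SimpleGraph V} {v x : V} {L : List V} {Y : Finset V} {m : ℕ}
    (hC : CE G {v} v L v) (hr : RR G ({v} ∪ L.toFinset) m Y) (hxY : x ∈ Y) (hxv : x ≠ v) (l : ℕ) :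
    ∃ Z : List V, Pth G v Z x ∧ (Z ++ [x]).Nodup ∧ (∀ y ∈ Z ++ [x], y ∈ Y ∧ y ≠ v) ∧ ∃ m',
      (RR G ({v} ∪ (Z ++ [x]).toFinset) m' Y ∧ m' + (Z.length + 1 + l) % 2 ≤ L.length % 2 + m + l % 2)
      ∨ ((∀ y ∈ Z ++ [x], y ∉ L) ∧ RR G ({v} ∪ L.toFinset ∪ (Z ++ [x]).toFinset) m' Y ∧
        m' + (Z.length + 1 + l) % 2 ≤ m + l % 2) := by
  have h3 := hC.new
  have hs := hr.sub
  by_cases hxL : x ∈ L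
  · obtain ⟨e, f, Z, M, hef, hZ, hM, hn, hL, hpar⟩ := hC.split hxL l
    obtain ⟨rfl, rfl⟩ : e = v ∧ f = v := by tauto
    refine ⟨Z, hZ, by grind, ?_, M.length % 2 + m, Or.inl ⟨?_, by omega⟩⟩
    · intro y hy
      have : y ∈ L := by rw [hL]; simp at hy; tauto
      exact ⟨hs (by simp [this]), by simpa using h3 y this⟩
    · refine RR.leftover (x := x) (f := f) (by simp) (by simp) hxv hM (by grind) ?_ hr ?_
      · intro y hy
        have : y ∈ L := by rw [hL]; tauto
        have := h3 y this
        clear hL h3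
        simp only [List.nodup_append, List.nodup_cons] at hn
        grind [List.mem_toFinset]
      · intro y; have := hL y; clear * - this
        simp only [mem_lem, List.mem_append, List.mem_cons]; grind
  · obtain ⟨s, hsS, Z, hZ, hn, hZY, m', hr', hpar⟩ := hr.pull hxY (by simp [hxv, hxL]) l
    have hdis : ∀ y ∈ Z ++ [x], y ∉ L ∧ y ≠ v := by
      intro y hy; have := (hZY y hy).2; simp at this; tauto
    by_cases hsv : s = v
    · subst hsv
      exact ⟨Z, hZ, hn, fun y hy => ⟨(hZY y hy).1, (hdis y hy).2⟩, m',
        Or.inr ⟨fun y hy => (hdis y hy).1, hr', by omega⟩⟩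
    · have hsL : s ∈ L := by simpa [hsv] using hsS
      obtain ⟨e, f, Z1, M, hef, hZ1, hM, hn1, hL, hpar1⟩ := hC.split hsL (Z.length + 1 + l)
      obtain ⟨rfl, rfl⟩ : e = v ∧ f = v := by tauto
      refine ⟨Z1 ++ s :: Z, pth_append.2 ⟨hZ1, hZ⟩, ?_, ?_, M.length % 2 + m', Or.inl ⟨?_, ?_⟩⟩
      · simp only [List.nodup_append, List.nodup_cons] at hn hn1 ⊢
        grind
      · intro y hy
        have : y ∈ L ∨ y ∈ Z ++ [x] := by rw [hL]; simp at hy ⊢; tauto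
        rcases this with h | h
        · exact ⟨hs (by simp [h]), by simpa using h3 y h⟩
        · exact ⟨(hZY y h).1, (hdis y h).2⟩
      · refine RR.leftover (x := s) (f := f) (by simp) (by simp) hsv hM (by grind) ?_ hr' ?_
        · intro y hy
          have h4 : y ∈ L := by rw [hL]; tauto
          have h5 := h3 y h4
          have h6 : y ∉ Z ++ [x] := fun h => (hdis y h).1 h4
          clear hL hZY hdis h3
          simp only [List.nodup_append, List.nodup_cons] at hn1
          simp only [mem_lem, List.mem_append, List.mem_cons] at h6 ⊢
          grind
        · intro y; have := hL y; clear * - this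
          simp only [mem_lem, List.mem_append, List.mem_cons]; grind
      · simp only [List.length_append, List.length_cons]
        have : Z1.length + (Z.length + 1) + 1 + l = Z1.length + 1 + (Z.length + 1 + l) := by ring
        omega

end HelperB

section HelperC
set_option linter.unusedSectionVars false
variable [DecidableEq V]

set_option maxHeartbeats 1000000 in
theorem open_bridge [Fintype V] {G : SimpleGraph V} {X H W : Finset V} {v x y : V} {L M : List V}
    {m1 m2 : ℕ} (hv : v ∈ X) (hC : CE G {v} v L v) (hLX : ∀ z ∈ L, z ∉ X)
    (hHX : ∀ z ∈ H, z ∉ X) (hr : RR G ({v} ∪ L.toFinset) m1 ({v} ∪ H)) (hx : x ∈ H) (hy : y ∈ X)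
    (hyv : y ≠ v) (hM : Pth G x M y) (hMn : M.Nodup) (hMX : ∀ z ∈ M, z ∉ X ∧ z ∉ H)
    (hW : ∀ z, z ∈ W ↔ z ∈ X ∨ z ∈ H ∨ z ∈ M) (hr2 : RR G W m2 Finset.univ) :
    (∃ m', m' ≤ L.length % 2 + m1 + M.length % 2 + m2 ∧ RR G X m' Finset.univ) ∨
    ∃ E m3, OE G X v E y ∧ x ∈ E ∧ (∀ z ∈ L, z ∉ X ∪ E.toFinset) ∧
      RR G (X ∪ E.toFinset ∪ L.toFinset) m3 Finset.univ ∧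
      m3 + E.length % 2 ≤ m1 + M.length % 2 + m2 := by
  have hxv : x ≠ v := by rintro rfl; exact hHX _ hx hv
  have hs := hr.sub
  have hLH : ∀ z ∈ L, z ∈ H := by
    intro z hz
    have h1 := hs (mem_lem.2 (Or.inr hz))
    have h2 := hC.new z hz
    simp only [Finset.mem_union] at h1
    tauto
  obtain ⟨Z, hZ, hZn, hZH, m', h⟩ := closed_pull hC hr (by simp [hx]) hxv M.length
  have hZH' : ∀ z ∈ Z ++ [x], z ∈ H := by
    intro z hz; have := hZH z hz; simp only [Finset.mem_union, Finset.mem_singleton] at this; tauto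
  clear hZH
  have hE : OE G X v (Z ++ x :: M) y := by
    refine ⟨hv, hy, hyv.symm, pth_append.2 ⟨hZ, hM⟩, ?_, ?_⟩
    · simp only [List.nodup_append, List.nodup_cons] at hZn ⊢
      clear hs hr hr2 hLH hW
      grind
    · intro z hz
      by_cases h : z ∈ M
      · exact (hMX z h).1
      · exact hHX z (hZH' z (by simp only [List.mem_append, List.mem_cons] at hz ⊢; tauto))
  have hlen : (Z ++ x :: M).length = Z.length + 1 + M.length := by simp; omega
  rcases h with ⟨hrr, hpar⟩ | ⟨hd, hrr, hpar⟩
  · left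
    have h1 := hrr.lift (T := X ∪ M.toFinset) (by
      intro z hz hz'
      have := hHX z; have := hMX z
      simp only [Finset.mem_union, List.mem_toFinset, Finset.mem_singleton] at hz hz' ⊢
      grind)
    have h2 := h1.trans (hr2.cast (X' := {v} ∪ H ∪ (X ∪ M.toFinset)) (by
      intro z; have := hW z
      simp only [Finset.mem_union, List.mem_toFinset, Finset.mem_singleton] at *
      grind) (fun _ => Iff.rfl) rfl)
    refine ⟨_, ?_, RR.step hE (h2.cast ?_ (fun _ => Iff.rfl) rfl)⟩
    · rw [hlen]; omega
    · intro z
      simp only [Finset.mem_union, List.mem_toFinset, Finset.mem_singleton, List.mem_append, List.mem_cons]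
      clear * - hv
      grind
  · right
    refine ⟨_, m' + m2, hE, by simp, ?_, ?_, by rw [hlen]; omega⟩
    · intro z hz hz'
      have := hd z
      have h1 := hLX z hz
      have h2 := hMX z
      have h3 := hLH z hz
      simp only [Finset.mem_union, List.mem_toFinset, Finset.mem_singleton, List.mem_append, List.mem_cons] at *
      grind
    · have h1 := hrr.lift (T := X ∪ M.toFinset) (by
        intro z hz hz'
        have := hHX z; have := hMX z
        simp only [Finset.mem_union, List.mem_toFinset, Finset.mem_singleton] at hz hz' ⊢
        grind)
      have h2 := h1.trans (hr2.cast (X' := {v} ∪ H ∪ (X ∪ M.toFinset)) (by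
        intro z; have := hW z
        simp only [Finset.mem_union, List.mem_toFinset, Finset.mem_singleton] at *
        grind) (fun _ => Iff.rfl) rfl)
      refine h2.cast ?_ (fun _ => Iff.rfl) rfl
      intro z
      simp only [Finset.mem_union, List.mem_toFinset, Finset.mem_singleton, List.mem_append, List.mem_cons]
      clear * - hv
      grind

/-- connectivity of `G - v` gives an edge leaving a set -/
theorem exists_edge {G : SimpleGraph V} {v : V} (h : (G.induce ({v}ᶜ : Set V)).Connected)
    (S : Set V) {x y : V} (hx : x ∈ S) (hxv : x ≠ v) (hy : y ∉ S) (hyv : y ≠ v) :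
    ∃ x' y', x' ∈ S ∧ x' ≠ v ∧ y' ∉ S ∧ y' ≠ v ∧ G.Adj x' y' := by
  obtain ⟨p⟩ := h.preconnected ⟨x, hxv⟩ ⟨y, hyv⟩
  obtain ⟨d, hd, h1, h2⟩ := p.exists_boundary_dart {z | z.1 ∈ S} hx hy
  exact ⟨d.fst.1, d.snd.1, h1, d.fst.2, h2, d.snd.2, d.adj⟩

set_option maxHeartbeats 1000000 in
theorem open1 [Fintype V] {G : SimpleGraph V} {v : V} {L : List V}
    (hcon : (G.induce ({v}ᶜ : Set V)).Connected) (hC : CE G {v} v L v) (n : ℕ) :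
    ∀ {X H W U : Finset V} {m1 m2 : ℕ}, Xᶜ.card < n → v ∈ X → (∃ y ∈ X, y ≠ v) → (∀ z ∈ L, z ∉ X) →
    (∀ z ∈ H, z ∉ X) → RR G ({v} ∪ L.toFinset) m1 ({v} ∪ H) → (∀ z, z ∈ W ↔ z ∈ X ∨ z ∈ H) →
    RR G W m2 U → U = Finset.univ → ∃ m', m' ≤ L.length % 2 + m1 + m2 ∧ RR G X m' Finset.univ := by
  induction n with
  | zero => intro X H W U m1 m2 h; omega
  | succ n IH =>
    intro X H W U m1 m2 hn hv hy0 hLX hHX hr1 hW hr2 hU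
    have hL2 := hC.hcl rfl
    have key : ∀ {X H W W' : Finset V} {m1 m2 : ℕ} {x y : V} {M : List V}, Xᶜ.card < n + 1 → v ∈ X →
        (∀ z ∈ L, z ∉ X) → (∀ z ∈ H, z ∉ X) → RR G ({v} ∪ L.toFinset) m1 ({v} ∪ H) →
        (∀ z, z ∈ W ↔ z ∈ X ∨ z ∈ H) → x ∈ H → y ∈ X → y ≠ v → Pth G x M y → M.Nodup → 
        (∀ z ∈ M, z ∉ W) → (∀ z, z ∈ W' ↔ z ∈ W ∨ z ∈ M) → RR G W' m2 Finset.univ →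
        ∃ m', m' ≤ L.length % 2 + m1 + (M.length % 2 + m2) ∧ RR G X m' Finset.univ := by
      intro X H W W' m1 m2 x y M hn hv hLX hHX hr1 hW hx hy hyv hM hMn hMX hW' hr2
      rcases open_bridge hv hC hLX hHX hr1 hx hy hyv hM hMn
        (fun z hz => by have := hMX z hz; rw [hW] at this; tauto)
        (fun z => by rw [hW', hW]; tauto) hr2 with ⟨m', h1, h2⟩ | ⟨E, m3, hE, hxE, hEL, hr, hm⟩
      · exact ⟨m', by omega, h2⟩
      · have hc : (X ∪ E.toFinset)ᶜ.card < Xᶜ.card := by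
          refine Finset.card_lt_card (Finset.ssubset_iff_of_subset ?_ |>.2 ⟨x, ?_, ?_⟩)
          · intro z; simp only [Finset.mem_compl, mem_lem]; tauto
          · simpa using hHX x hx
          · simp [hxE]
        obtain ⟨m', h1, h2⟩ := IH (X := X ∪ E.toFinset) (H := L.toFinset) (m1 := 0) (by omega)
          (by simp [hv]) ⟨y, by simp [hy], hyv⟩ hEL (by simpa using hEL) (RR.refl _)
          (fun z => Finset.mem_union) hr rfl
        exact ⟨_, by omega, RR.step hE h2⟩
    induction hr2 generalizing X H m1 with
    | refl W =>
      subst hU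
      obtain ⟨y, hy, hyv⟩ := hy0
      obtain ⟨x, hx⟩ : ∃ x, x ∈ L := List.exists_mem_of_length_pos (by omega)
      obtain ⟨x', y', h1, h2, h3, h4, h5⟩ := exists_edge hcon {z | z ∉ X} (x := x) (y := y) (hLX x hx)
        (by simpa using hC.new x hx) (by simpa using hy) hyv
      have hx' : x' ∈ H := by have := (hW x').1 (by simp); simp at h1; tauto
      exact key (M := []) hn hv hLX hHX hr1 hW hx' (by simpa using h3) h4 (pth_nil.2 h5) (by simp)
        (by simp) (W' := Finset.univ) (by simp) (RR.refl _)
    | @step W U a b Q m he hr ih =>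
      subst hU
      have ha := (hW a).1 he.ha
      have hb := (hW b).1 he.hb
      have hnew := he.new
      have hnX : ∀ z ∈ Q, z ∉ X := fun z hz h => hnew z hz ((hW z).2 (Or.inl h))
      have hnH : ∀ z ∈ Q, z ∉ H := fun z hz h => hnew z hz ((hW z).2 (Or.inr h))
      have hs := hr1.sub
      have hLH : ∀ z ∈ L, z ∈ H := by
        intro z hz
        have h1 := hs (mem_lem.2 (Or.inr hz))
        have h2 := hC.new z hz
        simp only [Finset.mem_union] at h1
        tauto
      by_cases hA : (a ∈ H ∨ a = v) ∧ (b ∈ H ∨ b = v)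
      · obtain ⟨m', h1, h2⟩ := ih (X := X) (H := H ∪ Q.toFinset) (m1 := m1 + (Q.length % 2 + 0)) hn hv hy0 hLX
          (by
            intro z hz
            simp only [mem_lem] at hz
            exact hz.elim (hHX z) (hnX z)) (by
            refine hr1.trans (RR.step (a := a) (b := b) ⟨?_, ?_, he.ne, he.pth, he.nd, ?_⟩ ?_)
            · clear * - hA; simp; tauto
            · clear * - hA; simp; tauto
            · intro z hz; simp only [Finset.mem_union, Finset.mem_singleton, not_or]; constructor
              · rintro rfl; exact hnX _ hz hv
              · exact hnH z hz
            · refine (RR.refl _).cast (fun _ => Iff.rfl) ?_ rfl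
              intro z; simp only [Finset.mem_union]; clear * -; tauto) (by
            intro z; have := hW z; clear * - this; simp only [mem_lem]; tauto) rfl
        exact ⟨m', by omega, h2⟩
      by_cases hB : a ∈ X ∧ b ∈ X
      · have hc : (X ∪ Q.toFinset)ᶜ.card ≤ Xᶜ.card := by
          refine Finset.card_le_card ?_
          intro z; simp only [Finset.mem_compl, mem_lem]; tauto
        obtain ⟨m', h1, h2⟩ := ih (X := X ∪ Q.toFinset) (H := H) (m1 := m1) (by omega) (by simp [hv])
          (by obtain ⟨y, h, h'⟩ := hy0; exact ⟨y, by simp [h], h'⟩) (by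
            intro z hz hz'
            simp only [mem_lem] at hz'
            exact hz'.elim (hLX z hz) (fun h => hnH z h (hLH z hz))) (by
            intro z hz hz'
            simp only [mem_lem] at hz'
            exact hz'.elim (hHX z hz) (fun h => hnH z h hz)) hr1 (by
            intro z; have := hW z; clear * - this; simp only [mem_lem]; tauto) rfl
        exact ⟨_, by omega, RR.step ⟨hB.1, hB.2, he.ne, he.pth, he.nd, hnX⟩ h2⟩
      clear ih
      by_cases hD : a ∈ H
      · have hbX : b ∈ X ∧ b ≠ v := by clear * - hb hA hB hD ha; tauto
        exact key hn hv hLX hHX hr1 hW hD hbX.1 hbX.2 he.pth he.nd hnew (W' := W ∪ Q.toFinset) (fun z => mem_lem) hr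
      · have hbX : b ∈ H ∧ a ∈ X ∧ a ≠ v := by
          clear * - hb hA hB hD ha hv
          refine ⟨by tauto, by tauto, ?_⟩
          rintro rfl; tauto
        have he' := he.rev
        obtain ⟨m', h1, h2⟩ := key hn hv hLX hHX hr1 hW hbX.1 hbX.2.1 hbX.2.2 he'.pth he'.nd he'.new
          (W' := W ∪ Q.toFinset) (fun z => by simp) hr
        exact ⟨m', by simpa using h1, h2⟩

end HelperC

section HelperD
set_option linter.unusedSectionVars false
variable [DecidableEq V]

theorem RC.opened [Fintype V] {G : SimpleGraph V}
    (hcon : ∀ v, (G.induce ({v}ᶜ : Set V)).Connected) {X U : Finset V} {m : ℕ} (h : RC G X m U)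
    (hU : U = Finset.univ) (hX : ∀ v ∈ X, ∃ y ∈ X, y ≠ v) :
    ∃ m', m' ≤ m ∧ RR G X m' Finset.univ := by
  induction h with
  | refl X => subst hU; exact ⟨0, le_rfl, RR.refl _⟩
  | @step X U a b L m he hr ih =>
    obtain ⟨m', h1, h2⟩ := ih hU (by
      intro v hv
      by_cases hvX : v ∈ X
      · obtain ⟨y, h, h'⟩ := hX v hvX
        exact ⟨y, by simp [h], h'⟩
      · exact ⟨a, by simp [he.ha], by rintro rfl; exact hvX he.ha⟩)
    by_cases hab : a = b
    · subst hab
      have hC : CE G {a} a L a := ⟨by simp, by simp, he.hcl, he.pth, he.nd, by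
        intro x hx; have := he.new x hx; simp; rintro rfl; exact this he.ha⟩
      obtain ⟨m'', h3, h4⟩ := open1 (hcon a) hC (Xᶜ.card + 1) (X := X) (H := L.toFinset) (m1 := 0)
        (Nat.lt_succ_self _) he.ha (hX a he.ha) he.new (by simpa using he.new) (RR.refl _)
        (fun z => Finset.mem_union) h2 rfl
      exact ⟨m'', by omega, h4⟩
    · exact ⟨_, by omega, RR.step ⟨he.ha, he.hb, hab, he.pth, he.nd, he.new⟩ h2⟩

theorem hit {G : SimpleGraph V} {X : Finset V} {x y t : V}
    (hcon : (G.induce ({x}ᶜ : Set V)).Connected) (hx : x ∈ X) (hxy : G.Adj x y) (hy : y ∉ X)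
    (ht : t ∈ X) (htx : t ≠ x) : ∃ L s, OE G X x L s ∧ L ≠ [] := by
  obtain ⟨z, y', ⟨L, hL, hn, hX⟩, hzx, hy', hyx, hadj⟩ := exists_edge hcon
    {z | ∃ L, Pth G x L z ∧ (L ++ [z]).Nodup ∧ ∀ w ∈ L ++ [z], w ∉ X} (x := y) (y := t)
    ⟨[], pth_nil.2 hxy, by simp, by simpa using hy⟩ hxy.ne' (by
      rintro ⟨L, -, -, h⟩; exact h t (by simp) ht) htx
  by_cases hy'X : y' ∈ X
  · exact ⟨L ++ [z], y', ⟨hx, hy'X, hyx.symm, pth_append.2 ⟨hL, pth_nil.2 hadj⟩, hn, hX⟩, by simp⟩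
  · exfalso
    apply hy'
    by_cases hyL : y' ∈ L
    · obtain ⟨L1, L2, rfl⟩ := List.append_of_mem hyL
      refine ⟨L1, (pth_append.1 hL).1, ?_, ?_⟩
      · simp only [List.nodup_append, List.nodup_cons] at hn ⊢
        grind
      · intro w hw; apply hX; simp at hw ⊢; tauto
    · refine ⟨L ++ [z], pth_append.2 ⟨hL, pth_nil.2 hadj⟩, ?_, ?_⟩
      · have := hadj.ne
        simp only [List.nodup_append, List.nodup_cons] at hn ⊢
        grind
      · intro w hw
        rw [List.mem_append] at hw
        rcases hw with h | h
        · exact hX w h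
        · simp at h; rw [h]; exact hy'X

theorem exists_RR [Fintype V] {G : SimpleGraph V}
    (hcon : ∀ v, (G.induce ({v}ᶜ : Set V)).Connected) (n : ℕ) : ∀ {X : Finset V} {p q : V},
    Xᶜ.card < n → p ∈ X → q ∈ X → p ≠ q → ∃ m, RR G X m Finset.univ := by
  induction n with
  | zero => intro X p q h; omega
  | succ n ih =>
    intro X p q hn hp hq hpq
    by_cases hX : X = Finset.univ
    · subst hX; exact ⟨0, RR.refl _⟩
    · obtain ⟨y, hy⟩ : ∃ y, y ∉ X := by
        by_contra! h; exact hX (Finset.eq_univ_iff_forall.2 h)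
      obtain ⟨a, b, ha, -, hb, -, hab⟩ := exists_edge (hcon p) {z | z ∈ X} (x := q) (y := y) hq
        hpq.symm hy (by rintro rfl; exact hy hp)
      have : ∃ t ∈ X, t ≠ a := by
        by_cases h : p = a
        · exact ⟨q, hq, by rintro rfl; exact hpq h⟩
        · exact ⟨p, hp, h⟩
      obtain ⟨t, ht, hta⟩ := this
      obtain ⟨L, s, hE, hne⟩ := hit (hcon a) ha hab hb ht hta
      obtain ⟨z, hz⟩ := List.exists_mem_of_ne_nil L hne
      have hc : (X ∪ L.toFinset)ᶜ.card < Xᶜ.card := by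
        refine Finset.card_lt_card (Finset.ssubset_iff_of_subset ?_ |>.2 ⟨z, ?_, ?_⟩)
        · intro z; simp only [Finset.mem_compl, mem_lem]; tauto
        · simpa using hE.new z hz
        · simp [hz]
      obtain ⟨m, hm⟩ := ih (X := X ∪ L.toFinset) (p := p) (q := q) (by omega) (by simp [hp])
        (by simp [hq]) hpq
      exact ⟨_, RR.step hE hm⟩

theorem CE.two {G : SimpleGraph V} {r : V} {L : List V} (h : CE G {r} r L r) :
    ∃ s t, s ∈ L ∧ t ∈ L ∧ s ≠ t ∧ s ≠ r := by
  have h1 := h.hcl rfl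
  have h2 := h.nd
  have h3 := h.new
  match L, h1, h2, h3 with
  | s :: t :: L, h1, h2, h3 =>
    refine ⟨s, t, by simp, by simp, by grind, by simpa using h3 s (by simp)⟩

theorem exists_start [Fintype V] {G : SimpleGraph V} [DecidableRel G.Adj]
    (hcon : ∀ v, (G.induce ({v}ᶜ : Set V)).Connected) (hdeg : ∀ v : V, 3 ≤ G.degree v) (r : V) :
    ∃ L m, CE G {r} r L r ∧ RR G ({r} ∪ L.toFinset) m Finset.univ := by
  have h1 : 1 < (G.neighborFinset r).card := by
    have := hdeg r; rw [← G.card_neighborFinset_eq_degree] at this; omega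
  obtain ⟨y, hy, t, ht, hyt⟩ := Finset.one_lt_card.1 h1
  rw [mem_neighborFinset] at hy ht
  obtain ⟨L, s, hE, hne⟩ := hit (X := {r, t}) (hcon r) (by simp) hy
    (by simp; exact ⟨hy.ne', hyt⟩) (t := t) (by simp) ht.ne'
  have hs : s = t := by have := hE.hb; have := hE.ne; grind
  subst hs
  have hC : CE G {r} r (L ++ [s]) r := by
    refine ⟨by simp, by simp, ?_, pth_append.2 ⟨hE.pth, pth_nil.2 ht.symm⟩, ?_, ?_⟩
    · intro _; have := List.length_pos_iff.2 hne; simp; omega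
    · have h1 := hE.nd; have h2 := hE.new
      simp only [List.nodup_append, List.nodup_cons] at h1 ⊢
      grind
    · intro x hx; have h2 := hE.new x; have := ht.ne'; grind
  obtain ⟨z, hz⟩ := List.exists_mem_of_ne_nil L hne
  obtain ⟨m, hm⟩ := exists_RR hcon ((({r} ∪ (L ++ [s]).toFinset : Finset V)ᶜ).card + 1)
    (X := {r} ∪ (L ++ [s]).toFinset) (p := r) (q := s) (Nat.lt_succ_self _) (by simp) (by simp) ht.ne
  exact ⟨_, m, hC, hm⟩

theorem triangle_start [Fintype V] {G : SimpleGraph V} (hcard : 4 ≤ Fintype.card V) {r s t : V}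
    (hrs : G.Adj r s) (hst : G.Adj s t) (hrt : G.Adj r t) {X U : Finset V} {m : ℕ}
    (hr : RR G X m U) (hX : ∀ z, z ∈ X ↔ z = r ∨ z = s ∨ z = t) (hU : U = Finset.univ) :
    ∃ p L m', CE G {p} p L p ∧ 3 ≤ L.length ∧ RR G ({p} ∪ L.toFinset) m' Finset.univ ∧
      L.length % 2 + m' ≤ m := by
  induction hr with
  | refl X =>
    exfalso
    subst hU
    have : (Finset.univ : Finset V) ⊆ {r, s, t} := by
      intro z _; have := (hX z).1 (by simp); simpa using this
    have h1 := Finset.card_le_card this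
    have h2 := Finset.card_le_three (a := r) (b := s) (c := t)
    rw [Finset.card_univ] at h1; omega
  | @step X U a b L m he hr ih =>
    subst hU
    by_cases hL : L = []
    · subst hL
      obtain ⟨p, L, m', h1, h2, h3, h4⟩ := ih (by simpa using hX) rfl
      exact ⟨p, L, m', h1, h2, h3, by omega⟩
    clear ih
    have ha := (hX a).1 he.ha
    have hb := (hX b).1 he.hb
    have hne := he.ne
    obtain ⟨c, hac, hcb, hc⟩ : ∃ c, G.Adj a c ∧ G.Adj c b ∧
        ∀ z, z ∈ X ↔ z = a ∨ z = c ∨ z = b := by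
      rcases ha with rfl | rfl | rfl <;> rcases hb with rfl | rfl | rfl <;>
        first
        | exact absurd rfl hne
        | exact ⟨s, by grind [G.adj_comm], by grind [G.adj_comm], by grind⟩
        | exact ⟨r, by grind [G.adj_comm], by grind [G.adj_comm], by grind⟩
        | exact ⟨t, by grind [G.adj_comm], by grind [G.adj_comm], by grind⟩
    have hnew := he.new
    have hlen := List.length_pos_iff.2 hL
    refine ⟨a, c :: b :: L.reverse, m, ⟨by simp, by simp, by simp, ?_, ?_, ?_⟩, ?_, ?_, ?_⟩
    · exact pth_cons.2 ⟨hac, pth_cons.2 ⟨hcb, pth_rev.2 he.pth⟩⟩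
    · have h1 := hnew b; have h2 := hnew c; have := hcb.ne; have := he.nd
      clear hr
      grind
    · intro x hx
      have h1 := hnew x; have := hac.ne; clear hr
      simp at hx ⊢
      grind
    · simp; omega
    · refine hr.cast ?_ (fun _ => Iff.rfl) rfl
      intro z; have := hc z; clear * - this
      simp only [mem_lem, List.mem_cons, List.mem_reverse, Finset.mem_singleton]; grind
    · simp; omega

theorem long_start [Fintype V] {G : SimpleGraph V} 
    (hcon : ∀ v, (G.induce ({v}ᶜ : Set V)).Connected) (hcard : 4 ≤ Fintype.card V) {r : V} {m : ℕ}
    (h : RC G {r} m Finset.univ) :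
    ∃ p L m', CE G {p} p L p ∧ 3 ≤ L.length ∧ RR G ({p} ∪ L.toFinset) m' Finset.univ ∧
      L.length % 2 + m' ≤ m := by
  generalize hX : ({r} : Finset V) = X at h
  generalize hU : (Finset.univ : Finset V) = U at h
  cases h with
  | refl =>
    exfalso
    have := congrArg Finset.card (hU.trans hX.symm)
    simp at this; omega
  | @step _ _ a b L m he hr =>
    subst hX hU
    obtain rfl : r = a := by have := he.ha; simp at this; exact this.symm
    obtain rfl : r = b := by have := he.hb; simp at this; exact this.symm
    obtain ⟨s, t, hs, ht, hst, hsr⟩ := he.two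
    obtain ⟨m', h1, h2⟩ := hr.opened hcon rfl (by
      intro v hv
      by_cases h : v = r
      · subst h; exact ⟨s, by simp [hs], hsr⟩
      · exact ⟨r, by simp, Ne.symm h⟩)
    by_cases hl : 3 ≤ L.length
    · exact ⟨r, L, m', he, hl, h2, by omega⟩
    · have hl2 : L.length = 2 := by have := he.hcl rfl; omega
      obtain ⟨x, y, rfl⟩ := List.length_eq_two.1 hl2
      have hp := he.pth
      rw [pth_cons, pth_cons, pth_nil] at hp
      obtain ⟨p, L', m'', h3, h4, h5, h6⟩ := triangle_start hcard hp.1 hp.2.1 hp.2.2.symm h2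
        (by intro z; simp; tauto) rfl
      exact ⟨p, L', m'', h3, h4, h5, by simp; omega⟩

end HelperD

section HelperE
set_option linter.unusedSectionVars false
variable [DecidableEq V]

/-- `C` is partitioned by internals of short ears over `X`, `e` of them even -/
inductive Cf (G : SimpleGraph V) (X : Finset V) : Finset V → ℕ → Prop
  | nil : Cf G X ∅ 0
  | cons {C : Finset V} {e : ℕ} {a b : V} {L : List V} : OE G X a L b →
      (L.length = 1 ∨ L.length = 2) → (∀ x ∈ L, x ∉ C) → Cf G X C e →
      Cf G X (L.toFinset ∪ C) (L.length % 2 + e)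

theorem Cf.new {G : SimpleGraph V} {X C : Finset V} {e : ℕ} (h : Cf G X C e) :
    ∀ z ∈ C, z ∉ X := by
  induction h with
  | nil => simp
  | cons he _ _ _ ih =>
    intro z hz
    simp only [Finset.mem_union, List.mem_toFinset] at hz
    exact hz.elim (he.new z) (ih z)

theorem Cf.congr {G : SimpleGraph V} {X C C' : Finset V} {e e' : ℕ} (h : Cf G X C e)
    (hc : ∀ z, z ∈ C ↔ z ∈ C') (he : e = e') : Cf G X C' e' := by
  obtain rfl : C = C' := Finset.ext hc
  exact he ▸ h

theorem Cf.toRR {G : SimpleGraph V} {X Y C : Finset V} {e : ℕ} (h : Cf G X C e) (hXY : X ⊆ Y)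
    (hd : ∀ z ∈ C, z ∉ Y) : RR G Y e (Y ∪ C) := by
  induction h generalizing Y with
  | nil => simpa using RR.refl (G := G) Y
  | @cons C e a b L he hl hL hC ih =>
    refine RR.step (he.mono hXY ?_) ?_
    · intro x hx; exact hd x (by simp [hx])
    · have := ih (Y := Y ∪ L.toFinset) (hXY.trans Finset.subset_union_left) (by
        intro z hz; have := hd z (by simp [hz]); have := hL z; simp only [mem_lem]; tauto)
      rwa [Finset.union_assoc] at this

theorem Cf.extract {G : SimpleGraph V} {X C : Finset V} {e : ℕ} (h : Cf G X C e) {w : V}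
    (hw : w ∈ C) : ∃ a b L C' e', OE G X a L b ∧ (L = [w] ∨ ∃ z, L = [w, z]) ∧ Cf G X C' e' ∧
      (∀ x ∈ L, x ∉ C') ∧ (∀ z, z ∈ C ↔ z ∈ L ∨ z ∈ C') ∧ e = L.length % 2 + e' := by
  induction h with
  | nil => simp at hw
  | @cons C e a b L he hl hL hC ih =>
    by_cases hwL : w ∈ L
    · rcases hl with hl | hl
      · obtain ⟨x, rfl⟩ := List.length_eq_one_iff.1 hl
        obtain rfl : w = x := by simpa using hwL
        exact ⟨a, b, [w], C, e, he, Or.inl rfl, hC, hL, by simp, rfl⟩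
      · obtain ⟨x, y, rfl⟩ := List.length_eq_two.1 hl
        simp at hwL
        rcases hwL with rfl | rfl
        · exact ⟨a, b, [w, y], C, e, he, Or.inr ⟨_, rfl⟩, hC, hL, by intro z; simp; tauto, rfl⟩
        · exact ⟨b, a, [w, x], C, e, by simpa using he.rev, Or.inr ⟨_, rfl⟩, hC,
            by simpa [and_comm] using hL, by intro z; simp; tauto, rfl⟩
    · obtain ⟨a', b', L', C', e', h1, h2, h3, h4, h5, h6⟩ := ih (by simpa [hwL] using hw)
      refine ⟨a', b', L', L.toFinset ∪ C', L.length % 2 + e', h1, h2, Cf.cons he hl ?_ h3, ?_, ?_, ?_⟩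
      · intro x hx hx'; exact hL x hx ((h5 x).2 (Or.inr hx'))
      · intro x hx; simp only [Finset.mem_union, List.mem_toFinset, not_or]
        exact ⟨fun h => hL x h ((h5 x).2 (Or.inl hx)), h4 x hx⟩
      · intro z; have := h5 z; simp only [Finset.mem_union, List.mem_toFinset]; tauto
      · omega

def Win [Fintype V] (G : SimpleGraph V) (X : Finset V) (m : ℕ) : Prop :=
  (∃ a L b m', OE G X a L b ∧ 3 ≤ L.length ∧ RR G (X ∪ L.toFinset) m' Finset.univ ∧
    L.length % 2 + m' ≤ m) ∨ ∃ m', m' < m ∧ RR G X m' Finset.univ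

theorem win1 [Fintype V] {G : SimpleGraph V} {X C W : Finset V} {E : List V} {a b : V} {e m m' : ℕ}
    (hC : Cf G X C e) (ha : a ∈ X) (hb : b ∈ X) (hab : a ≠ b) (hE : Pth G a E b) (hn : E.Nodup)
    (hnew : ∀ z ∈ E, z ∉ X ∧ z ∉ C) (hW : ∀ z, z ∈ W ↔ z ∈ X ∨ z ∈ E ∨ z ∈ C)
    (hr : RR G W m' Finset.univ)
    (hm : (3 ≤ E.length ∧ E.length % 2 + e + m' ≤ m) ∨ E.length % 2 + e + m' < m) : Win G X m := by
  have h1 : OE G X a E b := ⟨ha, hb, hab, hE, hn, fun z hz => (hnew z hz).1⟩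
  have h2 := hC.toRR (Y := X ∪ E.toFinset) Finset.subset_union_left (by
    intro z hz; have := hC.new z hz; have := hnew z; simp only [mem_lem]; tauto)
  have h3 := h2.trans (hr.cast (X' := X ∪ E.toFinset ∪ C) (by
    intro z; rw [hW]; simp only [Finset.mem_union, List.mem_toFinset]; clear * -; grind) (fun _ => Iff.rfl) rfl)
  rcases hm with ⟨h, h'⟩ | h
  · exact Or.inl ⟨a, E, b, _, h1, h, h3, by omega⟩
  · exact Or.inr ⟨_, by omega, RR.step h1 h3⟩

theorem win2 [Fintype V] {G : SimpleGraph V} {X C W : Finset V} {E F : List V} {a b p q : V}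
    {e m m' : ℕ}
    (hC : Cf G X C e) (ha : a ∈ X) (hb : b ∈ X) (hab : a ≠ b) (hE : Pth G a E b)
    (hF : Pth G p F q) (hpq : p ≠ q) (hp : p ∈ X ∨ p ∈ E ∨ p ∈ C) (hq : q ∈ X ∨ q ∈ E ∨ q ∈ C)
    (hn : (E ++ F).Nodup) (hnew : ∀ z ∈ E ++ F, z ∉ X ∧ z ∉ C)
    (hW : ∀ z, z ∈ W ↔ z ∈ X ∨ z ∈ E ++ F ∨ z ∈ C) (hr : RR G W m' Finset.univ)
    (hm : (3 ≤ E.length ∧ E.length % 2 + e + F.length % 2 + m' ≤ m)) : Win G X m := by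
  have hn' := List.nodup_append.1 hn
  refine win1 (W := X ∪ E.toFinset ∪ C) (m' := F.length % 2 + m') hC ha hb hab hE hn'.1
    (fun z hz => hnew z (by simp [hz])) (by
      intro z; simp only [Finset.mem_union, List.mem_toFinset]; clear * -; grind)
    (RR.step (a := p) (b := q) ⟨?_, ?_, hpq, hF, hn'.2.1, ?_⟩ (hr.cast ?_ (fun _ => Iff.rfl) rfl))
    (Or.inl ⟨hm.1, by omega⟩)
  · simp only [Finset.mem_union, List.mem_toFinset]; clear * - hp; grind
  · simp only [Finset.mem_union, List.mem_toFinset]; clear * - hq; grind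
  · intro z hz
    have h1 := hnew z (by simp [hz])
    have h2 : z ∉ E := fun h => hn'.2.2 z h z hz rfl
    simp only [Finset.mem_union, List.mem_toFinset]; clear * - h1 h2; grind
  · intro z; rw [hW]; simp only [Finset.mem_union, List.mem_toFinset, List.mem_append]; clear * -; grind

theorem OE.other {G : SimpleGraph V} {X : Finset V} {a b p : V} (h : OE G X a [p] b) (q : V) :
    ∃ e ∈ X, e ≠ q ∧ G.Adj e p ∧ G.Adj p e := by
  have h1 := h.pth
  rw [pth_cons, pth_nil] at h1
  by_cases hq : a = q
  · exact ⟨b, h.hb, fun h' => h.ne (hq.trans h'.symm), h1.2.symm, h1.2⟩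
  · exact ⟨a, h.ha, hq, h1.1, h1.1.symm⟩

set_option maxHeartbeats 1000000 in
theorem core1 [Fintype V] {G : SimpleGraph V} {X C W : Finset V} {a b p q : V} {L : List V}
    {e m m' : ℕ} (hC : Cf G X C e) (hP : OE G X a [p] b) (hpC : p ∉ C) (hL : Pth G p L q)
    (hLn : L.Nodup) (hLX : ∀ z ∈ L, z ∉ X ∧ z ∉ C ∧ z ≠ p) (hq : q ∈ X ∨ q ∈ C)
    (hLe : L = [] → q ∈ C) (hW : ∀ z, z ∈ W ↔ z ∈ X ∨ z = p ∨ z ∈ C ∨ z ∈ L)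
    (hr : RR G W m' Finset.univ) (hm : 1 + e + L.length % 2 + m' ≤ m) : Win G X m := by
  have hpX : p ∉ X := hP.new p (by simp)
  rcases hq with hq | hq
  · obtain ⟨f, hf, hfq, hfp, -⟩ := hP.other q
    have hL0 : L ≠ [] := fun h => hC.new q (hLe h) hq
    have := List.length_pos_iff.2 hL0
    refine win1 (E := p :: L) hC hf hq hfq (pth_cons.2 ⟨hfp, hL⟩) ?_ ?_ ?_ hr ?_
    · grind
    · intro z hz; have := hLX z; clear hr; grind
    · intro z; have := hW z; clear * - this; grind
    · simp only [List.length_cons]; omega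
  · obtain ⟨c, d, S, C', e', hS, hSl, hC', hSC, hCC, rfl⟩ := hC.extract hq
    have hSX := hS.new
    rcases hSl with rfl | ⟨z, rfl⟩
    · obtain ⟨f, hf, hfq, hfp, -⟩ := hP.other d
      refine win1 (E := p :: L ++ [q]) hC' hf hS.hb hfq ?_ ?_ ?_ ?_ hr ?_
      · have := hS.pth
        simp only [pth_cons, pth_append, pth_nil, List.cons_append] at this ⊢
        exact ⟨hfp, hL, this.2⟩
      · clear hr hW; grind
      · intro z hz; have := hLX z; clear hr hW; grind
      · intro z; have := hW z; have := hCC z; clear hr hW hCC; grind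
      · simp only [List.length_cons, List.length_append, List.length_nil] at hm ⊢; omega
    · obtain ⟨f, hf, hfq, hfp, -⟩ := hP.other d
      have := hS.nd
      refine win1 (E := p :: L ++ [q, z]) hC' hf hS.hb hfq ?_ ?_ ?_ ?_ hr ?_
      · have := hS.pth
        simp only [pth_cons, pth_append, pth_nil, List.cons_append] at this ⊢
        exact ⟨hfp, hL, this.2⟩
      · clear hr hW; grind
      · intro z hz; have := hLX z; clear hr hW; grind
      · intro z; have := hW z; have := hCC z; clear hr hW hCC; grind
      · simp only [List.length_cons, List.length_append, List.length_nil] at hm ⊢; omega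

end HelperE

section HelperF
set_option linter.unusedSectionVars false
set_option linter.unusedSimpArgs false
variable [DecidableEq V]

theorem nda {A B : List V} : (A ++ B).Nodup ↔ A.Nodup ∧ B.Nodup ∧ ∀ x ∈ A, x ∉ B := by
  rw [List.nodup_append]; grind

set_option maxHeartbeats 2000000 in
theorem typeI [Fintype V] {G : SimpleGraph V} {X C W : Finset V} {a b u v x : V} {L : List V}
    {e m m' : ℕ} (hC : Cf G X C e) (hP : OE G X a [u, v] b) (huC : u ∉ C) (hvC : v ∉ C)
    (hL : Pth G u L b) (hLn : L.Nodup) (hLX : ∀ z ∈ L, z ∉ X ∧ z ∉ C ∧ z ≠ u ∧ z ≠ v)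
    (hLe : L ≠ []) (hW : ∀ z, z ∈ W ↔ z ∈ X ∨ z = u ∨ z = v ∨ z ∈ C ∨ z ∈ L)
    (hr : RR G W m' Finset.univ) (hm : e + L.length % 2 + m' ≤ m)
    (hx : G.Adj v x) (hxu : x ≠ u) (hxb : x ≠ b) : Win G X m := by
  have hl := List.length_pos_iff.2 hLe
  obtain ⟨s, hs, N, hvs, hN, hNn, hNW, hNe, m2, hr2, hm2⟩ :=
    hr.attach rfl (v := v) ((hW v).2 (by simp)) hx hxu hxb
  have huX : u ∉ X := hP.new u (by simp)
  have hvX : v ∉ X := hP.new v (by simp)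
  have huv : u ≠ v := by have := hP.nd; simp at this; exact this
  have hp := hP.pth
  simp only [pth_cons, pth_nil] at hp
  obtain ⟨hau, huv', hvb⟩ := hp
  have hNX : ∀ z ∈ N, z ∉ X ∧ z ∉ C ∧ z ∉ L ∧ z ≠ u ∧ z ≠ v := by
    intro z hz; have := hNW z hz; rw [hW] at this; clear * - this; tauto
  have hW2 : ∀ z, z ∈ W ∪ N.toFinset ↔ z ∈ X ∨ z = u ∨ z = v ∨ z ∈ C ∨ z ∈ L ∨ z ∈ N := by
    intro z; rw [mem_lem, hW]; clear * -; tauto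
  generalize W ∪ N.toFinset = W2 at hr2 hW2
  have hs' := (hW s).1 hs
  have ha := hP.ha
  have hb := hP.hb
  have hab := hP.ne
  have hLr := pth_rev.2 hL
  have hNr := pth_rev.2 hN
  clear hNW hr hs hW hx
  rcases hs' with hsX | rfl | rfl | hsC | hsL
  · by_cases hsb : s = b
    · subst hsb
      have hN0 : N ≠ [] := fun h => (hNe h).2 rfl
      have hn := List.length_pos_iff.2 hN0
      refine win2 (E := u :: v :: N) (F := L) (p := u) (q := s) hC ha hsX hab ?_ hL ?_ (by simp)
        (by simp [hsX]) ?_ ?_ ?_ hr2 ?_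
      · simp only [pth_cons]; exact ⟨hau, huv', hN⟩
      · rintro rfl; exact huX hsX
      · clear hr2 hW2 hL hLr hN hNr hP hC hm hm2
        simp only [nda, List.nodup_cons, List.nodup_reverse, List.mem_append, List.mem_cons,
          List.mem_reverse, List.not_mem_nil, List.nodup_nil, or_false] at *
        grind
      · intro z hz; have := hLX z; have := hNX z; clear hr2 hW2 hLX hNX; grind
      · intro z; have := hW2 z; clear * - this; grind
      · simp only [List.length_cons]; omega
    · refine win1 (E := L.reverse ++ u :: v :: N) hC hb hsX (Ne.symm hsb) ?_ ?_ ?_ ?_ hr2 ?_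
      · simp only [pth_append, pth_cons]; exact ⟨hLr, huv', hN⟩
      · clear hr2 hW2 hL hLr hN hNr hP hC hm hm2
        simp only [nda, List.nodup_cons, List.nodup_reverse, List.mem_append, List.mem_cons,
          List.mem_reverse, List.not_mem_nil, List.nodup_nil, or_false] at *
        grind
      · intro z hz; have := hLX z; have := hNX z; clear hr2 hW2 hLX hNX; grind
      · intro z; have := hW2 z; clear * - this; grind
      · simp only [List.length_cons, List.length_append, List.length_reverse]; omega
  · have hN0 : N ≠ [] := fun h => (hNe h).1 rfl
    have hn := List.length_pos_iff.2 hN0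
    refine win2 (E := s :: N.reverse ++ [v]) (F := L) (p := s) (q := b) hC ha hb hab ?_ hL ?_ (by simp)
        (by simp [hb]) ?_ ?_ ?_ hr2 ?_
    · simp only [pth_append, List.cons_append, pth_cons, pth_nil]; exact ⟨hau, hNr, hvb⟩
    · rintro rfl; exact huX hb
    · clear hr2 hW2 hL hLr hN hNr hP hC hm hm2
      simp only [nda, List.nodup_cons, List.nodup_reverse, List.mem_append, List.mem_cons,
        List.mem_reverse, List.not_mem_nil, List.nodup_nil, or_false] at *
      grind
    · intro z hz; have := hLX z; have := hNX z; clear hr2 hW2 hLX hNX; grind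
    · intro z; have := hW2 z; clear * - this; grind
    · simp only [List.length_cons, List.length_append, List.length_reverse, List.length_nil]; omega
  · exact absurd rfl hvs
  · obtain ⟨c, d, S, C', e', hS, hSl, hC', hSC, hCC, rfl⟩ := hC.extract hsC
    have hSX := hS.new
    have hSn := hS.nd
    have hd := hS.hb
    rcases hSl with rfl | ⟨y, rfl⟩
    · obtain ⟨f, hf, hfa, -, hsf⟩ := hS.other a
      refine win2 (E := u :: v :: N ++ [s]) (F := L) (p := u) (q := b) hC' ha hf hfa.symm ?_ hL ?_
        (by simp) (by simp [hb]) ?_ ?_ ?_ hr2 ?_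
      · simp only [pth_append, List.cons_append, pth_cons, pth_nil]; exact ⟨hau, huv', hN, hsf⟩
      · rintro rfl; exact huX hb
      · clear hr2 hW2 hL hLr hN hNr hP hC hm hm2
        simp only [nda, List.nodup_cons, List.nodup_reverse, List.mem_append, List.mem_cons,
          List.mem_reverse, List.not_mem_nil, List.nodup_nil, or_false] at *
        grind
      · intro z hz; have := hLX z; have := hNX z; clear hr2 hW2 hLX hNX; grind
      · intro z; have := hW2 z; have := hCC z; clear hr2 hW2 hCC hLX hNX; grind
      · simp only [List.length_cons, List.length_append, List.length_reverse, List.length_nil] at hm ⊢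
        omega
    · have hSp := hS.pth
      simp only [pth_cons, pth_nil] at hSp
      by_cases hda : d = a
      · subst hda
        refine win1 (E := L.reverse ++ u :: v :: N ++ [s, y]) hC' hb hd hab.symm ?_ ?_ ?_ ?_ hr2 ?_
        · simp only [pth_append, List.cons_append, List.append_assoc, pth_cons, pth_nil]
          exact ⟨hLr, huv', hN, hSp.2⟩
        · clear hr2 hW2 hL hLr hN hNr hP hC hm hm2
          simp only [nda, List.nodup_cons, List.nodup_reverse, List.mem_append, List.mem_cons,
            List.mem_reverse, List.not_mem_nil, List.nodup_nil, or_false] at *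
          grind
        · intro z hz; have := hLX z; have := hNX z; clear hr2 hW2 hLX hNX; grind
        · intro z; have := hW2 z; have := hCC z; clear hr2 hW2 hCC hLX hNX; grind
        · simp only [List.length_cons, List.length_append, List.length_reverse, List.length_nil] at hm ⊢
          omega
      · refine win2 (E := u :: v :: N ++ [s, y]) (F := L) (p := u) (q := b) hC' ha hd (Ne.symm hda) ?_ hL ?_
          (by simp) (by simp [hb]) ?_ ?_ ?_ hr2 ?_
        · simp only [pth_append, List.cons_append, pth_cons, pth_nil]; exact ⟨hau, huv', hN, hSp.2⟩
        · rintro rfl; exact huX hb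
        · clear hr2 hW2 hL hLr hN hNr hP hC hm hm2
          simp only [nda, List.nodup_cons, List.nodup_reverse, List.mem_append, List.mem_cons,
            List.mem_reverse, List.not_mem_nil, List.nodup_nil, or_false] at *
          grind
        · intro z hz; have := hLX z; have := hNX z; clear hr2 hW2 hLX hNX; grind
        · intro z; have := hW2 z; have := hCC z; clear hr2 hW2 hCC hLX hNX; grind
        · simp only [List.length_cons, List.length_append, List.length_reverse, List.length_nil] at hm ⊢
          omega
  · have hsX : s ∉ X := (hLX s hsL).1
    obtain ⟨L1, L2, rfl⟩ := List.append_of_mem hsL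
    have hL12 := pth_append.1 hL
    by_cases hpar : L2.length % 2 = 0 ∨ L1.length % 2 = 1
    · refine win2 (E := u :: L1 ++ s :: N.reverse ++ [v]) (F := L2) (p := s) (q := b) hC ha hb hab ?_ hL12.2 ?_
        (by simp) (by simp [hb]) ?_ ?_ ?_ hr2 ?_
      · simp only [pth_append, List.cons_append, List.append_assoc, pth_cons, pth_nil]
        exact ⟨hau, hL12.1, hNr, hvb⟩
      · rintro rfl; exact hsX hb
      · clear hr2 hW2 hL hLr hN hNr hP hC hm hm2
        simp only [nda, List.nodup_cons, List.nodup_reverse, List.mem_append, List.mem_cons,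
          List.mem_reverse, List.not_mem_nil, List.nodup_nil, or_false] at *
        grind
      · intro z hz; have := hLX z; have := hNX z; clear hr2 hW2 hLX hNX; grind
      · intro z; have := hW2 z; clear * - this; grind
      · simp only [List.length_cons, List.length_append, List.length_reverse, List.length_nil] at hm ⊢
        omega
    · refine win2 (E := u :: v :: N ++ s :: L2) (F := L1) (p := u) (q := s) hC ha hb hab ?_ hL12.1 ?_
        (by simp) (by simp) ?_ ?_ ?_ hr2 ?_
      · simp only [pth_append, List.cons_append, List.append_assoc, pth_cons, pth_nil]
        exact ⟨hau, huv', hN, hL12.2⟩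
      · exact (hLX s hsL).2.2.1.symm
      · clear hr2 hW2 hL hLr hN hNr hP hC hm hm2
        simp only [nda, List.nodup_cons, List.nodup_reverse, List.mem_append, List.mem_cons,
          List.mem_reverse, List.not_mem_nil, List.nodup_nil, or_false] at *
        grind
      · intro z hz; have := hLX z; have := hNX z; clear hr2 hW2 hLX hNX; grind
      · intro z; have := hW2 z; clear * - this; grind
      · simp only [List.length_cons, List.length_append, List.length_reverse, List.length_nil] at hm ⊢
        omega

end HelperF

section HelperG
set_option linter.unusedSectionVars false
set_option linter.unusedSimpArgs false
variable [DecidableEq V]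

set_option maxHeartbeats 4000000 in
theorem typeII [Fintype V] {G : SimpleGraph V} {X C W : Finset V} {a b c u v w z x : V} {L : List V}
    {e m m' : ℕ} (hC : Cf G X C e) (hP : OE G X a [u, v] b) (hS0 : OE G X c [w, z] b)
    (huC : u ∉ C) (hvC : v ∉ C) (hwC : w ∉ C) (hzC : z ∉ C) (huw : u ≠ w) (huz : u ≠ z)
    (hvw : v ≠ w) (hvz : v ≠ z)
    (hL : Pth G u L w) (hLn : L.Nodup)
    (hLX : ∀ y ∈ L, y ∉ X ∧ y ∉ C ∧ y ≠ u ∧ y ≠ v ∧ y ≠ w ∧ y ≠ z)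
    (hW : ∀ y, y ∈ W ↔ y ∈ X ∨ y = u ∨ y = v ∨ y = w ∨ y = z ∨ y ∈ C ∨ y ∈ L)
    (hr : RR G W m' Finset.univ) (hm : e + L.length % 2 + m' ≤ m)
    (hx : G.Adj v x) (hxu : x ≠ u) (hxb : x ≠ b) : Win G X m := by
  obtain ⟨s, hs, N, hvs, hN, hNn, hNW, hNe, m2, hr2, hm2⟩ :=
    hr.attach rfl (v := v) ((hW v).2 (by simp)) hx hxu hxb
  have huX : u ∉ X := hP.new u (by simp)
  have hvX : v ∉ X := hP.new v (by simp)
  have hwX : w ∉ X := hS0.new w (by simp)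
  have hzX : z ∉ X := hS0.new z (by simp)
  have huv : u ≠ v := by have := hP.nd; simp at this; exact this
  have hwz : w ≠ z := by have := hS0.nd; simp at this; exact this
  have hp := hP.pth
  simp only [pth_cons, pth_nil] at hp
  obtain ⟨hau, huv', hvb⟩ := hp
  have hp := hS0.pth
  simp only [pth_cons, pth_nil] at hp
  obtain ⟨hcw, hwz', hzb⟩ := hp
  have hNX : ∀ y ∈ N, y ∉ X ∧ y ∉ C ∧ y ∉ L ∧ y ≠ u ∧ y ≠ v ∧ y ≠ w ∧ y ≠ z := by
    intro y hy; have := hNW y hy; rw [hW] at this; clear * - this; tauto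
  have hW2 : ∀ y, y ∈ W ∪ N.toFinset ↔
      y ∈ X ∨ y = u ∨ y = v ∨ y = w ∨ y = z ∨ y ∈ C ∨ y ∈ L ∨ y ∈ N := by
    intro y; rw [mem_lem, hW]; clear * -; tauto
  generalize W ∪ N.toFinset = W2 at hr2 hW2
  have hs' := (hW s).1 hs
  have ha := hP.ha
  have hb := hP.hb
  have hab := hP.ne
  have hLr := pth_rev.2 hL
  have hNr := pth_rev.2 hN
  have hadd : ∀ C' e', Cf G X C' e' → w ∉ C' → z ∉ C' →
      ∃ CS, Cf G X CS e' ∧ ∀ y, y ∈ CS ↔ y = w ∨ y = z ∨ y ∈ C' := by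
    intro C' e' h h1 h2
    refine ⟨[w, z].toFinset ∪ C', (Cf.cons hS0 (by simp) ?_ h).congr (fun _ => Iff.rfl) (by simp), ?_⟩
    · intro y hy; simp at hy; rcases hy with rfl | rfl <;> assumption
    · intro y; simp only [Finset.mem_union, List.mem_toFinset, List.mem_cons, List.not_mem_nil,
        or_false, or_assoc]
  clear hNW hr hs hW hx
  rcases hs' with hsX | rfl | rfl | rfl | rfl | hsC | hsL
  · by_cases hsb : s = b
    · subst hsb
      obtain ⟨CS, hCS', hCS⟩ := hadd C e hC hwC hzC
      clear hadd
      have hN0 : N ≠ [] := fun h => (hNe h).2 rfl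
      have hn := List.length_pos_iff.2 hN0
      refine win2 (E := u :: v :: N) (F := L) (p := u) (q := w) hCS' ha hsX hab ?_ hL huw (by simp)
        (by simp [hCS]) ?_ ?_ ?_ hr2 ?_
      · simp only [pth_append, List.cons_append, List.append_assoc, pth_cons, pth_nil]
        exact ⟨hau, huv', hN⟩
      · clear hr2 hW2 hL hLr hN hNr hP hS0 hC hm hm2
        simp only [nda, List.nodup_cons, List.nodup_reverse, List.mem_append, List.mem_cons,
          List.mem_reverse, List.not_mem_nil, List.nodup_nil, or_false] at *
        grind
      · intro y hy; have := hLX y; have := hNX y; clear hr2 hW2 hLX hNX; grind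
      · intro y; have := hW2 y; have := hCS y; clear hr2 hW2 hCS hLX hNX; grind
      · simp only [List.length_cons, List.length_append, List.length_reverse, List.length_nil] at hm ⊢
        omega
    · clear hadd
      refine win1 (E := N.reverse ++ v :: u :: L ++ [w, z]) hC hsX hb hsb ?_ ?_ ?_ ?_ hr2 ?_
      · simp only [pth_append, List.cons_append, List.append_assoc, pth_cons, pth_nil]
        exact ⟨hNr, huv'.symm, hL, hwz', hzb⟩
      · clear hr2 hW2 hL hLr hN hNr hP hS0 hC hm hm2
        simp only [nda, List.nodup_cons, List.nodup_reverse, List.mem_append, List.mem_cons,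
          List.mem_reverse, List.not_mem_nil, List.nodup_nil, or_false] at *
        grind
      · intro y hy; have := hLX y; have := hNX y; clear hr2 hW2 hLX hNX; grind
      · intro y; have := hW2 y; clear * - this; grind
      · simp only [List.length_cons, List.length_append, List.length_reverse, List.length_nil] at hm ⊢
        omega
  · obtain ⟨CS, hCS', hCS⟩ := hadd C e hC hwC hzC
    clear hadd
    have hN0 : N ≠ [] := fun h => (hNe h).1 rfl
    have hn := List.length_pos_iff.2 hN0
    refine win2 (E := s :: N.reverse ++ [v]) (F := L) (p := s) (q := w) hCS' ha hb hab ?_ hL huw (by simp)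
        (by simp [hCS]) ?_ ?_ ?_ hr2 ?_
    · simp only [pth_append, List.cons_append, List.append_assoc, pth_cons, pth_nil]
      exact ⟨hau, hNr, hvb⟩
    · clear hr2 hW2 hL hLr hN hNr hP hS0 hC hm hm2
      simp only [nda, List.nodup_cons, List.nodup_reverse, List.mem_append, List.mem_cons,
        List.mem_reverse, List.not_mem_nil, List.nodup_nil, or_false] at *
      grind
    · intro y hy; have := hLX y; have := hNX y; clear hr2 hW2 hLX hNX; grind
    · intro y; have := hW2 y; have := hCS y; clear hr2 hW2 hCS hLX hNX; grind
    · simp only [List.length_cons, List.length_append, List.length_reverse, List.length_nil] at hm ⊢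
      omega
  · exact absurd rfl hvs
  · clear hadd
    refine win2 (E := u :: v :: N ++ [s, z]) (F := L) (p := u) (q := s) hC ha hb hab ?_ hL huw (by simp)
        (by simp) ?_ ?_ ?_ hr2 ?_
    · simp only [pth_append, List.cons_append, List.append_assoc, pth_cons, pth_nil]
      exact ⟨hau, huv', hN, hwz', hzb⟩
    · clear hr2 hW2 hL hLr hN hNr hP hS0 hC hm hm2
      simp only [nda, List.nodup_cons, List.nodup_reverse, List.mem_append, List.mem_cons,
        List.mem_reverse, List.not_mem_nil, List.nodup_nil, or_false] at *
      grind
    · intro y hy; have := hLX y; have := hNX y; clear hr2 hW2 hLX hNX; grind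
    · intro y; have := hW2 y; clear * - this; grind
    · simp only [List.length_cons, List.length_append, List.length_reverse, List.length_nil] at hm ⊢
      omega
  · clear hadd
    refine win1 (E := u :: L ++ w :: s :: N.reverse ++ [v]) hC ha hb hab ?_ ?_ ?_ ?_ hr2 ?_
    · simp only [pth_append, List.cons_append, List.append_assoc, pth_cons, pth_nil]
      exact ⟨hau, hL, hwz', hNr, hvb⟩
    · clear hr2 hW2 hL hLr hN hNr hP hS0 hC hm hm2
      simp only [nda, List.nodup_cons, List.nodup_reverse, List.mem_append, List.mem_cons,
        List.mem_reverse, List.not_mem_nil, List.nodup_nil, or_false] at *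
      grind
    · intro y hy; have := hLX y; have := hNX y; clear hr2 hW2 hLX hNX; grind
    · intro y; have := hW2 y; clear * - this; grind
    · simp only [List.length_cons, List.length_append, List.length_reverse, List.length_nil] at hm ⊢
      omega
  · obtain ⟨c', d, S, C', e', hS, hSl, hC', hSC, hCC, rfl⟩ := hC.extract hsC
    have hSX := hS.new
    have hSn := hS.nd
    have hd := hS.hb
    obtain ⟨CS, hCS', hCS⟩ := hadd C' e' hC' (fun h => hwC ((hCC w).2 (Or.inr h)))
      (fun h => hzC ((hCC z).2 (Or.inr h)))
    clear hadd
    rcases hSl with rfl | ⟨y, rfl⟩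
    · obtain ⟨f, hf, hfa, -, hsf⟩ := hS.other a
      refine win2 (E := u :: v :: N ++ [s]) (F := L) (p := u) (q := w) hCS' ha hf hfa.symm ?_ hL huw
        (by simp) (by simp [hCS]) ?_ ?_ ?_ hr2 ?_
      · simp only [pth_append, List.cons_append, List.append_assoc, pth_cons, pth_nil]
        exact ⟨hau, huv', hN, hsf⟩
      · clear hr2 hW2 hL hLr hN hNr hP hS0 hC hm hm2
        simp only [nda, List.nodup_cons, List.nodup_reverse, List.mem_append, List.mem_cons,
          List.mem_reverse, List.not_mem_nil, List.nodup_nil, or_false] at *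
        grind
      · intro y hy; have := hLX y; have := hNX y; clear hr2 hW2 hLX hNX; grind
      · intro y; have := hW2 y; have := hCS y; have := hCC y; clear hr2 hW2 hCC hCS hLX hNX; grind
      · simp only [List.length_cons, List.length_append, List.length_reverse, List.length_nil] at hm ⊢
        omega
    · have hSp := hS.pth
      simp only [pth_cons, pth_nil] at hSp
      by_cases hda : d = a
      · subst hda
        refine win1 (E := z :: w :: L.reverse ++ u :: v :: N ++ [s, y]) hC' hb hd hab.symm ?_ ?_ ?_ ?_ hr2 ?_
        · simp only [pth_append, List.cons_append, List.append_assoc, pth_cons, pth_nil]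
          exact ⟨hzb.symm, hwz'.symm, hLr, huv', hN, hSp.2⟩
        · clear hr2 hW2 hL hLr hN hNr hP hS0 hC hm hm2
          simp only [nda, List.nodup_cons, List.nodup_reverse, List.mem_append, List.mem_cons,
            List.mem_reverse, List.not_mem_nil, List.nodup_nil, or_false] at *
          grind
        · intro y hy; have := hLX y; have := hNX y; clear hr2 hW2 hLX hNX; grind
        · intro y; have := hW2 y; have := hCS y; have := hCC y; clear hr2 hW2 hCC hCS hLX hNX; grind
        · simp only [List.length_cons, List.length_append, List.length_reverse, List.length_nil] at hm ⊢
          omega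
      · refine win2 (E := u :: v :: N ++ [s, y]) (F := L) (p := u) (q := w) hCS' ha hd (Ne.symm hda) ?_ hL huw
          (by simp) (by simp [hCS]) ?_ ?_ ?_ hr2 ?_
        · simp only [pth_append, List.cons_append, List.append_assoc, pth_cons, pth_nil]
          exact ⟨hau, huv', hN, hSp.2⟩
        · clear hr2 hW2 hL hLr hN hNr hP hS0 hC hm hm2
          simp only [nda, List.nodup_cons, List.nodup_reverse, List.mem_append, List.mem_cons,
            List.mem_reverse, List.not_mem_nil, List.nodup_nil, or_false] at *
          grind
        · intro y hy; have := hLX y; have := hNX y; clear hr2 hW2 hLX hNX; grind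
        · intro y; have := hW2 y; have := hCS y; have := hCC y; clear hr2 hW2 hCC hCS hLX hNX; grind
        · simp only [List.length_cons, List.length_append, List.length_reverse, List.length_nil] at hm ⊢
          omega
  · clear hadd
    have hsX : s ∉ X := (hLX s hsL).1
    obtain ⟨L1, L2, rfl⟩ := List.append_of_mem hsL
    have hL12 := pth_append.1 hL
    by_cases hpar : L2.length % 2 = 0 ∨ L1.length % 2 = 1
    · refine win2 (E := u :: L1 ++ s :: N.reverse ++ [v]) (F := L2 ++ [w, z]) (p := s) (q := b) hC ha hb hab
        ?_ (pth_append.2 ⟨hL12.2, pth_cons.2 ⟨hwz', pth_nil.2 hzb⟩⟩) ?_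
        (by simp) (by simp [hb]) ?_ ?_ ?_ hr2 ?_
      · simp only [pth_append, List.cons_append, List.append_assoc, pth_cons, pth_nil]
        exact ⟨hau, hL12.1, hNr, hvb⟩
      · rintro rfl; exact hsX hb
      · clear hr2 hW2 hL hLr hN hNr hP hS0 hC hm hm2
        simp only [nda, List.nodup_cons, List.nodup_reverse, List.mem_append, List.mem_cons,
          List.mem_reverse, List.not_mem_nil, List.nodup_nil, or_false] at *
        grind
      · intro y hy; have := hLX y; have := hNX y; clear hr2 hW2 hLX hNX; grind
      · intro y; have := hW2 y; clear * - this; grind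
      · simp only [List.length_cons, List.length_append, List.length_reverse, List.length_nil] at hm ⊢
        omega
    · refine win2 (E := u :: v :: N ++ s :: L2 ++ [w, z]) (F := L1) (p := u) (q := s) hC ha hb hab ?_ hL12.1 ?_
        (by simp) (by simp) ?_ ?_ ?_ hr2 ?_
      · simp only [pth_append, List.cons_append, List.append_assoc, pth_cons, pth_nil]
        exact ⟨hau, huv', hN, hL12.2, hwz', hzb⟩
      · exact (hLX s hsL).2.2.1.symm
      · clear hr2 hW2 hL hLr hN hNr hP hS0 hC hm hm2
        simp only [nda, List.nodup_cons, List.nodup_reverse, List.mem_append, List.mem_cons,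
          List.mem_reverse, List.not_mem_nil, List.nodup_nil, or_false] at *
        grind
      · intro y hy; have := hLX y; have := hNX y; clear hr2 hW2 hLX hNX; grind
      · intro y; have := hW2 y; clear * - this; grind
      · simp only [List.length_cons, List.length_append, List.length_reverse, List.length_nil] at hm ⊢
        omega

set_option maxHeartbeats 4000000 in
theorem core2 [Fintype V] {G : SimpleGraph V} {X C W : Finset V} {a b u v q x : V} {L : List V}
    {e m m' : ℕ} (hC : Cf G X C e) (hP : OE G X a [u, v] b) (huC : u ∉ C) (hvC : v ∉ C)
    (hL : Pth G u L q) (hLn : L.Nodup) (hLX : ∀ z ∈ L, z ∉ X ∧ z ∉ C ∧ z ≠ u ∧ z ≠ v)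
    (hq : q ∈ X ∨ q = v ∨ q ∈ C)
    (hLe : L = [] → q ∈ C) (hW : ∀ z, z ∈ W ↔ z ∈ X ∨ z = u ∨ z = v ∨ z ∈ C ∨ z ∈ L)
    (hr : RR G W m' Finset.univ) (hm : e + L.length % 2 + m' ≤ m)
    (hx : G.Adj v x) (hxu : x ≠ u) (hxb : x ≠ b) : Win G X m := by
  have huX : u ∉ X := hP.new u (by simp)
  have hvX : v ∉ X := hP.new v (by simp)
  have huv : u ≠ v := by have := hP.nd; simp at this; exact this
  have hp := hP.pth
  simp only [pth_cons, pth_nil] at hp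
  obtain ⟨hau, huv', hvb⟩ := hp
  have ha := hP.ha
  have hb := hP.hb
  have hab := hP.ne
  have hLr := pth_rev.2 hL
  by_cases hqC : q ∈ C
  · obtain ⟨c, d, S, C', e', hS, hSl, hC', hSC, hCC, rfl⟩ := hC.extract hqC
    have hSX := hS.new
    have hSn := hS.nd
    have hd := hS.hb
    have hquv : q ≠ u ∧ q ≠ v := ⟨fun h => huC (h ▸ hqC), fun h => hvC (h ▸ hqC)⟩
    rcases hSl with rfl | ⟨y, rfl⟩
    · obtain ⟨f, hf, hfb, hfq, -⟩ := hS.other b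
      refine win1 (E := q :: L.reverse ++ [u, v]) hC' hf hb hfb ?_ ?_ ?_ ?_ hr ?_
      · simp only [pth_append, List.cons_append, List.append_assoc, pth_cons, pth_nil]
        exact ⟨hfq, hLr, huv', hvb⟩
      · clear hr hW hL hLr hP hC hm
        simp only [nda, List.nodup_cons, List.nodup_reverse, List.mem_append, List.mem_cons,
          List.mem_reverse, List.not_mem_nil, List.nodup_nil, or_false] at *
        grind
      · intro y hy; have := hLX y; have := hCC y; clear hr hW hLX hCC; grind
      · intro y; have := hW y; have := hCC y; clear hr hW hCC hLX; grind
      · simp only [List.length_cons, List.length_append, List.length_reverse, List.length_nil] at hm ⊢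
        omega
    · have hSp := hS.pth
      simp only [pth_cons, pth_nil] at hSp
      have hyC := (hCC y).2 (by simp)
      have hyuv : y ≠ u ∧ y ≠ v := ⟨fun h => huC (h ▸ hyC), fun h => hvC (h ▸ hyC)⟩
      by_cases hdb : d = b
      · subst hdb
        refine typeII hC' hP hS ?_ ?_ ?_ ?_ ?_ ?_ ?_ ?_ hL hLn ?_ (W := W) ?_ hr ?_ hx hxu hxb
        · exact fun h => huC ((hCC _).2 (Or.inr h))
        · exact fun h => hvC ((hCC _).2 (Or.inr h))
        · exact hSC q (by simp)
        · exact hSC y (by simp)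
        · exact hquv.1.symm
        · exact hyuv.1.symm
        · exact hquv.2.symm
        · exact hyuv.2.symm
        · intro z hz
          have h1 := hLX z hz; have h2 := hCC z; clear * - h1 h2 
          simp only [List.mem_cons, List.not_mem_nil, or_false] at h2
          tauto
        · intro z
          have h1 := hW z; have h2 := hCC z; clear * - h1 h2 
          simp only [List.mem_cons, List.not_mem_nil, or_false] at h2
          tauto
        · simp at hm; omega
      · refine win1 (E := v :: u :: L ++ [q, y]) hC' hb hd (Ne.symm hdb) ?_ ?_ ?_ ?_ hr ?_
        · simp only [pth_append, List.cons_append, List.append_assoc, pth_cons, pth_nil]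
          exact ⟨hvb.symm, huv'.symm, hL, hSp.2⟩
        · clear hr hW hL hLr hP hC hm
          simp only [nda, List.nodup_cons, List.nodup_reverse, List.mem_append, List.mem_cons,
            List.mem_reverse, List.not_mem_nil, List.nodup_nil, or_false] at *
          grind
        · intro y hy; have := hLX y; have := hCC y; clear hr hW hLX hCC; grind
        · intro y; have := hW y; have := hCC y; clear hr hW hCC hLX; grind
        · simp only [List.length_cons, List.length_append, List.length_reverse, List.length_nil] at hm ⊢
          omega
  have hL0 : L ≠ [] := fun h => hqC (hLe h)
  have hl := List.length_pos_iff.2 hL0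
  by_cases hqv : q = v
  · subst hqv
    refine win1 (E := u :: L ++ [q]) hC ha hb hab ?_ ?_ ?_ ?_ hr ?_
    · simp only [pth_append, List.cons_append, List.append_assoc, pth_cons, pth_nil]
      exact ⟨hau, hL, hvb⟩
    · clear hr hW hL hLr hP hC hm
      simp only [nda, List.nodup_cons, List.nodup_reverse, List.mem_append, List.mem_cons,
        List.mem_reverse, List.not_mem_nil, List.nodup_nil, or_false] at *
      grind
    · intro y hy; have := hLX y; clear hr hW hLX; grind
    · intro y; have := hW y; clear hr hW hLX; grind
    · simp only [List.length_cons, List.length_append, List.length_reverse, List.length_nil] at hm ⊢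
      omega
  have hqX : q ∈ X := by tauto
  by_cases hqb : q = b
  · subst hqb
    exact typeI hC hP huC hvC hL hLn hLX hL0 hW hr hm hx hxu hxb
  · refine win1 (E := v :: u :: L) hC hb hqX (Ne.symm hqb) ?_ ?_ ?_ ?_ hr ?_
    · simp only [pth_append, List.cons_append, List.append_assoc, pth_cons, pth_nil]
      exact ⟨hvb.symm, huv'.symm, hL⟩
    · clear hr hW hL hLr hP hC hm
      simp only [nda, List.nodup_cons, List.nodup_reverse, List.mem_append, List.mem_cons,
        List.mem_reverse, List.not_mem_nil, List.nodup_nil, or_false] at *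
      grind
    · intro y hy; have := hLX y; clear hr hW hLX; grind
    · intro y; have := hW y; clear hr hW hLX; grind
    · simp only [List.length_cons, List.length_append, List.length_reverse, List.length_nil] at hm ⊢
      omega

end HelperG

section HelperH
set_option linter.unusedSectionVars false
set_option linter.unusedSimpArgs false
variable [DecidableEq V]

theorem third [Fintype V] {G : SimpleGraph V} [DecidableRel G.Adj] (hdeg : ∀ v : V, 3 ≤ G.degree v)
    (v s t : V) : ∃ x, G.Adj v x ∧ x ≠ s ∧ x ≠ t := by
  have h1 : ({s, t} : Finset V).card < (G.neighborFinset v).card := by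
    have := hdeg v; rw [← G.card_neighborFinset_eq_degree] at this
    have := Finset.card_le_two (a := s) (b := t); omega
  obtain ⟨x, hx, hx'⟩ := Finset.exists_mem_notMem_of_card_lt_card h1
  rw [mem_neighborFinset] at hx
  simp at hx'
  exact ⟨x, hx, hx'.1, hx'.2⟩

theorem core [Fintype V] {G : SimpleGraph V} [DecidableRel G.Adj] (hdeg : ∀ v : V, 3 ≤ G.degree v)
    {X C W : Finset V} {a b p q : V} {P L : List V} {e m m' : ℕ} (hC : Cf G X C e)
    (hP : OE G X a P b) (hPl : P.length = 1 ∨ P.length = 2) (hpP : p ∈ P)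
    (hPC : ∀ z ∈ P, z ∉ C) (hL : Pth G p L q)
    (hLn : L.Nodup) (hLX : ∀ z ∈ L, z ∉ X ∧ z ∉ C ∧ z ∉ P) (hq : q ∈ X ∨ q ∈ P ∨ q ∈ C) (hpq : p ≠ q)
    (hLe : L = [] → q ∈ C) (hW : ∀ z, z ∈ W ↔ z ∈ X ∨ z ∈ P ∨ z ∈ C ∨ z ∈ L)
    (hr : RR G W m' Finset.univ) (hm : P.length % 2 + e + L.length % 2 + m' ≤ m) : Win G X m := by
  rcases hPl with hl | hl
  · obtain ⟨x, rfl⟩ := List.length_eq_one_iff.1 hl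
    obtain rfl : p = x := by simpa using hpP
    simp only [List.mem_cons, List.not_mem_nil, or_false] at *
    refine core1 hC hP (hPC p rfl) hL hLn hLX ?_ hLe hW hr (by simpa using hm)
    have := hpq.symm
    clear * - this hq
    tauto
  · have key : ∀ {a b u v : V}, OE G X a [u, v] b → p = u → (∀ z, z ∈ P ↔ z ∈ [u, v]) → Win G X m := by
      intro a b u v hP' hpu hPe
      subst hpu
      obtain ⟨x, h1, h2, h3⟩ := third hdeg v p b
      simp only [hPe, List.mem_cons, List.not_mem_nil, or_false] at *
      refine core2 hC hP' (hPC p (by simp)) (hPC v (by simp)) hL hLn ?_ ?_ hLe (W := W) ?_ hr (by omega)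
        h1 h2 h3
      · intro z hz; have := hLX z hz; clear * - this; tauto
      · have := hpq.symm; clear * - this hq; tauto
      · intro z; rw [hW]; clear * -; tauto
    obtain ⟨x, y, rfl⟩ := List.length_eq_two.1 hl
    rcases List.mem_cons.1 hpP with h | h
    · exact key hP h (fun _ => Iff.rfl)
    · exact key (u := y) (v := x) (by simpa using hP.rev) (by simpa using h)
        (by intro z; simp; tauto)

set_option maxHeartbeats 1000000 in
theorem aug1 [Fintype V] {G : SimpleGraph V} [DecidableRel G.Adj] (hdeg : ∀ v : V, 3 ≤ G.degree v)
    {X C Y U : Finset V} {m e M : ℕ} (hC : Cf G X C e) (h : RR G Y m U) (hU : U = Finset.univ)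
    (hY : ∀ z, z ∈ Y ↔ z ∈ X ∨ z ∈ C) (hm : e + m ≤ M) :
    Win G X M ∨ ∃ C' e', Cf G X C' e' ∧ (∀ z, z ∈ X ∨ z ∈ C') ∧ e' ≤ M := by
  induction h generalizing C e with
  | refl Y => subst hU; exact Or.inr ⟨C, e, hC, fun z => (hY z).1 (by simp), by omega⟩
  | @step Y U p q L m he hr ih =>
    subst hU
    by_cases hL : L = []
    · subst hL; exact ih hC rfl (by simpa using hY) (by simp at hm; omega)
    have hLX : ∀ z ∈ L, z ∉ X ∧ z ∉ C := by
      intro z hz; have := he.new z hz; rw [hY] at this; clear * - this; tauto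
    have key : ∀ {p q : V} {L' : List V}, OE G Y p L' q → (∀ z, z ∈ L ↔ z ∈ L') →
        L.length = L'.length → p ∈ C → Win G X M := by
      intro p q L' he' hLL hlen hp
      clear ih
      obtain ⟨a, b, P, C', e', hP, hPl, hC', hPC, hCC, rfl⟩ := hC.extract hp
      have hq := (hY q).1 he'.hb
      rw [hCC] at hq
      refine core hdeg hC' hP ?_ ?_ hPC he'.pth he'.nd ?_ hq he'.ne ?_ (W := Y ∪ L.toFinset) ?_ hr
        (m := M) (by omega)
      · rcases hPl with rfl | ⟨z, rfl⟩ <;> simp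
      · rcases hPl with rfl | ⟨z, rfl⟩ <;> simp
      · intro z hz
        rw [← hLL] at hz
        have h1 := hLX z hz
        rw [hCC] at h1
        clear * - h1; tauto
      · rintro rfl
        exact absurd (List.length_eq_zero_iff.1 hlen) hL
      · intro z; rw [mem_lem, hY, hCC, hLL]; clear * -; tauto
    by_cases hp : p ∈ C
    · exact Or.inl (key he (fun _ => Iff.rfl) rfl hp)
    by_cases hq : q ∈ C
    · exact Or.inl (key he.rev (by simp) (by simp) hq)
    have hpX : p ∈ X := ((hY p).1 he.ha).resolve_right hp
    have hqX : q ∈ X := ((hY q).1 he.hb).resolve_right hq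
    have hE : OE G X p L q := ⟨hpX, hqX, he.ne, he.pth, he.nd, fun z hz => (hLX z hz).1⟩
    by_cases hl : 3 ≤ L.length
    · left
      refine win1 hC hpX hqX he.ne he.pth he.nd hLX (W := Y ∪ L.toFinset) ?_ hr (Or.inl ⟨hl, by omega⟩)
      intro z; rw [mem_lem, hY]; clear * -; tauto
    · have := List.length_pos_iff.2 hL
      refine ih (Cf.cons hE (by omega) (fun z hz => (hLX z hz).2) hC) rfl ?_ (by omega)
      intro z; rw [mem_lem, hY]; simp only [Finset.mem_union, List.mem_toFinset]; clear * -; tauto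

theorem Cf.list {G : SimpleGraph V} {X C : Finset V} {e : ℕ} (h : Cf G X C e) :
    ∃ S : List (V × List V × V), (∀ s ∈ S, OE G X s.1 s.2.1 s.2.2 ∧
      (s.2.1.length = 1 ∨ s.2.1.length = 2)) ∧ S.Pairwise (fun s t => ∀ x ∈ s.2.1, x ∉ t.2.1) ∧
      (∀ z, z ∈ C ↔ ∃ s ∈ S, z ∈ s.2.1) ∧ (S.map fun s => s.2.1.length % 2).sum = e := by
  induction h with
  | nil => exact ⟨[], by simp⟩
  | @cons C e a b L he hl hL hC ih =>
    obtain ⟨S, h1, h2, h3, h4⟩ := ih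
    refine ⟨(a, L, b) :: S, ?_, ?_, ?_, ?_⟩
    · intro s hs
      rcases List.mem_cons.1 hs with rfl | hs
      · exact ⟨he, hl⟩
      · exact h1 s hs
    · refine List.pairwise_cons.2 ⟨?_, h2⟩
      intro s hs x hx hx'
      exact hL x hx ((h3 x).2 ⟨s, hs, hx'⟩)
    · intro z; simp [h3]
    · simp [h4]

theorem Cf.ofList {G : SimpleGraph V} {X : Finset V} (S : List (V × List V × V)) 
    (h1 : ∀ s ∈ S, OE G X s.1 s.2.1 s.2.2 ∧
      (s.2.1.length = 1 ∨ s.2.1.length = 2)) (h2 : S.Pairwise (fun s t => ∀ x ∈ s.2.1, x ∉ t.2.1)) :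
    ∃ C, Cf G X C (S.map fun s => s.2.1.length % 2).sum ∧ (∀ z, z ∈ C ↔ ∃ s ∈ S, z ∈ s.2.1) := by
  induction S with
  | nil => exact ⟨∅, Cf.nil, by simp⟩
  | cons s S ih =>
    rw [List.pairwise_cons] at h2
    obtain ⟨C, h3, h4⟩ := ih (fun t ht => h1 t (by simp [ht])) h2.2
    have h5 := h1 s (by simp)
    refine ⟨_, Cf.cons h5.1 h5.2 ?_ h3, ?_⟩
    · intro x hx hx'
      obtain ⟨t, ht, h⟩ := (h4 x).1 hx'
      exact h2.1 t ht x hx h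
    · intro z; simp [h4]

def NiceL (G : SimpleGraph V) (X : Finset V) (m : ℕ) (S : List (V × List V × V)) : Prop :=
  (∀ s ∈ S, OE G X s.1 s.2.1 s.2.2 ∧ (s.2.1.length = 1 ∨ s.2.1.length = 2)) ∧
  S.Pairwise (fun s t => ∀ x ∈ s.2.1, x ∉ t.2.1) ∧
  S.Pairwise (fun s t => ∀ x ∈ s.2.1, ∀ y ∈ t.2.1, ¬ G.Adj x y) ∧
  (∀ z, z ∈ X ∨ ∃ s ∈ S, z ∈ s.2.1) ∧ (S.map fun s => s.2.1.length % 2).sum ≤ m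

theorem aug [Fintype V] {G : SimpleGraph V} [DecidableRel G.Adj] (hdeg : ∀ v : V, 3 ≤ G.degree v)
    {X : Finset V} {m : ℕ} (h : RR G X m Finset.univ) : Win G X m ∨ ∃ S, NiceL G X m S := by
  rcases aug1 hdeg (C := ∅) (X := X) Cf.nil h rfl (by simp) (M := m) (by omega) with h | ⟨C, e, hC, hcov, hm⟩
  · exact Or.inl h
  obtain ⟨S, h1, h2, h3, h4⟩ := hC.list
  by_cases hadj : S.Pairwise (fun s t => ∀ x ∈ s.2.1, ∀ y ∈ t.2.1, ¬ G.Adj x y)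
  · exact Or.inr ⟨S, h1, h2, hadj, fun z => by rw [← h3]; exact hcov z, by omega⟩
  left
  rw [List.pairwise_iff_forall_sublist] at hadj
  push Not at hadj
  obtain ⟨s, t, hst, x, hx, y, hy, hxy⟩ := hadj
  obtain ⟨l, hl⟩ := hst.exists_perm_append
  have hsym : Std.Symm (fun s t : V × List V × V => ∀ x ∈ s.2.1, x ∉ t.2.1) :=
    ⟨fun s t h x hx hx' => h x hx' hx⟩
  have h2' := (hl.pairwise_iff (R := fun s t : V × List V × V => ∀ x ∈ s.2.1, x ∉ t.2.1)
    (fun {a b} h => hsym.symm a b h)).1 h2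
  simp only [List.cons_append, List.nil_append] at h2' hl
  rw [List.pairwise_cons] at h2'
  have h1' : ∀ s' ∈ s :: t :: l, OE G X s'.1 s'.2.1 s'.2.2 ∧
      (s'.2.1.length = 1 ∨ s'.2.1.length = 2) := fun s' hs' => h1 s' (hl.mem_iff.2 hs')
  have h4' := (hl.map fun s => s.2.1.length % 2).sum_eq
  obtain ⟨C', hC', hCC⟩ := Cf.ofList (t :: l) (fun s' hs' => h1' s' (List.mem_cons_of_mem _ hs')) h2'.2
  have h5 := h1' s (by simp)
  refine core hdeg hC' h5.1 h5.2 hx ?_ (pth_nil.2 hxy) (by simp) (by simp) ?_ hxy.ne ?_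
    (W := Finset.univ) ?_ (RR.refl _) ?_
  · intro z hz hz'
    obtain ⟨t', ht, h⟩ := (hCC z).1 hz'
    exact h2'.1 t' ht z hz h
  · exact Or.inr (Or.inr ((hCC y).2 ⟨t, by simp, hy⟩))
  · exact fun _ => (hCC y).2 ⟨t, by simp, hy⟩
  · intro z
    simp only [Finset.mem_univ, true_iff]
    rcases hcov z with h | h
    · exact Or.inl h
    · obtain ⟨s', hs', hz⟩ := (h3 z).1 h
      rw [hl.mem_iff, List.mem_cons] at hs'
      rcases hs' with rfl | hs'
      · exact Or.inr (Or.inl hz)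
      · exact Or.inr (Or.inr (Or.inl ((hCC z).2 ⟨s', hs', hz⟩)))
  · rw [List.map_cons, List.sum_cons] at h4'
    simp only [List.length_nil]
    omega

end HelperH

section HelperI
set_option linter.unusedSectionVars false
set_option linter.unusedSimpArgs false
variable [DecidableEq V]

inductive Seq' (G : SimpleGraph V) : Finset V → List (V × List V × V) → Finset V → Prop
  | nil (X : Finset V) : Seq' G X [] X
  | cons {X Y : Finset V} {a b : V} {L : List V} {T : List (V × List V × V)} :
      CE G X a L b → Seq' G (X ∪ L.toFinset) T Y → Seq' G X ((a, L, b) :: T) Y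

theorem Seq'.append {G : SimpleGraph V} {X Y Z : Finset V} {S T : List (V × List V × V)}
    (h : Seq' G X S Y) (h' : Seq' G Y T Z) : Seq' G X (S ++ T) Z := by
  induction h with
  | nil => exact h'
  | cons he _ ih => exact Seq'.cons he (ih h')

theorem Seq'.sub {G : SimpleGraph V} {X Y : Finset V} {S : List (V × List V × V)}
    (h : Seq' G X S Y) : X ⊆ Y := by
  induction h with
  | nil => exact subset_rfl
  | cons _ _ ih => exact Finset.subset_union_left.trans ih

theorem Seq'.ends {G : SimpleGraph V} {X Y : Finset V} {S : List (V × List V × V)}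
    (h : Seq' G X S Y) : ∀ s ∈ S, s.1 ∈ Y ∧ s.2.2 ∈ Y := by
  induction h with
  | nil => simp
  | cons he hr ih =>
    intro s hs
    rcases List.mem_cons.1 hs with rfl | hs
    · exact ⟨hr.sub (by simp [he.ha]), hr.sub (by simp [he.hb])⟩
    · exact ih s hs

def evs (T : List (V × List V × V)) : ℕ := (T.map fun s => s.2.1.length % 2).sum

theorem evs_append (S T : List (V × List V × V)) : evs (S ++ T) = evs S + evs T := by
  simp [evs]

theorem NiceL.seq [Fintype V] {G : SimpleGraph V} {X : Finset V} {m : ℕ} {S : List (V × List V × V)}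
    (h : NiceL G X m S) : Seq' G X S Finset.univ := by
  obtain ⟨h1, h2, -, h4, -⟩ := h
  suffices H : ∀ Y : Finset V, X ⊆ Y → (∀ s ∈ S, ∀ z ∈ s.2.1, z ∉ Y) →
      (∀ z, z ∈ Y ∨ ∃ s ∈ S, z ∈ s.2.1) → Seq' G Y S Finset.univ from
    H X subset_rfl (fun s hs => (h1 s hs).1.new) h4
  clear h4
  induction S with
  | nil =>
    intro Y _ _ h
    have : Y = Finset.univ := Finset.eq_univ_iff_forall.2 (by simpa using h)
    rw [this]; exact Seq'.nil _
  | cons s S ih =>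
    intro Y hXY hd hc
    rw [List.pairwise_cons] at h2
    obtain ⟨a, L, b⟩ := s
    refine Seq'.cons ((h1 (a, L, b) (by simp)).1.mono hXY (hd (a, L, b) (by simp))).toCE ?_
    refine ih (fun t ht => h1 t (by simp [ht])) h2.2 _ (hXY.trans Finset.subset_union_left) ?_ ?_
    · intro t ht z hz hz'
      rcases mem_lem.1 hz' with h | h
      · exact hd t (by simp [ht]) z hz h
      · exact h2.1 t ht z h hz
    · intro z
      rw [mem_lem]
      rcases hc z with h | ⟨t, ht, h⟩
      · exact Or.inl (Or.inl h)
      · rcases List.mem_cons.1 ht with rfl | ht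
        · exact Or.inl (Or.inr h)
        · exact Or.inr ⟨t, ht, h⟩

theorem loop [Fintype V] {G : SimpleGraph V} [DecidableRel G.Adj] (hdeg : ∀ v : V, 3 ≤ G.degree v)
    {p : V} {L : List V} {M : ℕ} (hl : 3 ≤ L.length) (n : ℕ) :
    ∀ {A : List (V × List V × V)} {X : Finset V} {m : ℕ}, Xᶜ.card + m < n → 
    Seq' G {p} ((p, L, p) :: A) X → (∀ t ∈ A, 3 ≤ t.2.1.length ∧ t.1 ≠ t.2.2) →
    RR G X m Finset.univ → evs ((p, L, p) :: A) + m ≤ M →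
    ∃ A X S m, Seq' G {p} ((p, L, p) :: A) X ∧ (∀ t ∈ A, 3 ≤ t.2.1.length ∧ t.1 ≠ t.2.2) ∧
      NiceL G X m S ∧ evs ((p, L, p) :: A) + m ≤ M := by
  induction n with
  | zero => intro A X m h; omega
  | succ n ih =>
    intro A X m hn hS hA hr hm
    rcases aug hdeg hr with (⟨a, E, b, m', hE, hE3, hr', hm'⟩ | ⟨m', hm', hr'⟩) | ⟨S, hN⟩
    · obtain ⟨z, hz⟩ : ∃ z, z ∈ E := List.exists_mem_of_length_pos (by omega)
      have hc : (X ∪ E.toFinset)ᶜ.card < Xᶜ.card := by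
        refine Finset.card_lt_card (Finset.ssubset_iff_of_subset ?_ |>.2 ⟨z, ?_, ?_⟩)
        · intro z; simp only [Finset.mem_compl, mem_lem]; tauto
        · simpa using hE.new z hz
        · simp [hz]
      refine ih (A := A ++ [(a, E, b)]) (X := X ∪ E.toFinset) (m := m') (by omega) ?_ ?_ hr' ?_
      · exact hS.append (Seq'.cons hE.toCE (Seq'.nil _))
      · intro t ht
        rcases List.mem_append.1 ht with h | h
        · exact hA t h
        · obtain rfl : t = (a, E, b) := by simpa using h
          exact ⟨hE3, hE.ne⟩
      · rw [← List.cons_append, evs_append]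
        simp [evs] at hm ⊢
        omega
    · exact ih (by omega) hS hA hr' (by omega)
    · exact ⟨A, X, S, m, hS, hA, hN, hm⟩

namespace Ear
variable {G : SimpleGraph V}

def inn (P : Ear G) : List V := P.walk.support.tail.dropLast

theorem supp (P : Ear G) : P.walk.support = P.a :: (P.inn ++ [P.b]) := by
  have h1 := P.walk.cons_tail_support
  have hne : P.walk.support.tail ≠ [] := by
    intro h
    have h2 := P.walk.length_support
    have := P.length_pos
    have h3 := congrArg List.length h
    rw [List.length_tail, h2, List.length_nil] at h3; omega
  have h2 := List.dropLast_append_getLast hne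
  have h3 : P.walk.support.tail.getLast hne = P.b := by
    rw [List.getLast_tail, Walk.getLast_support]
  rw [h3] at h2
  conv_lhs => rw [← h1, ← h2]
  rfl

theorem wlen (P : Ear G) : P.walk.length = P.inn.length + 1 := by
  have h2 := P.walk.length_support
  rw [P.supp] at h2
  simp at h2; omega

theorem pth (P : Ear G) : Pth G P.a P.inn P.b := by
  have := P.walk.isChain_adj_support
  rw [P.supp] at this
  exact this

theorem props (P : Ear G) : P.inn.Nodup ∧ P.a ∉ P.inn ∧ P.b ∉ P.inn ∧ (P.a = P.b → 2 ≤ P.inn.length) := by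
  have hs := P.supp
  have hl := P.wlen
  rcases P.ear with ⟨hne, hp⟩ | ⟨h, hc⟩
  · have := hp.support_nodup
    rw [hs] at this
    simp only [List.nodup_cons, List.nodup_append] at this
    refine ⟨this.2.1, by grind, by grind, fun h => absurd h hne⟩
  · have h1 := hc.support_nodup
    have h2 := hc.three_le_length
    simp only [Walk.support_copy, Walk.length_copy] at h1 h2
    rw [hs] at h1
    simp only [List.tail_cons, List.nodup_append] at h1
    refine ⟨h1.1, ?_, ?_, fun _ => by omega⟩
    · rw [h]; grind
    · grind

theorem mem_internal (P : Ear G) (v : V) : v ∈ P.internal ↔ v ∈ P.inn := by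
  have h := P.props
  simp only [internal, vertices, endpoints, P.supp, Set.mem_diff, Set.mem_setOf_eq, List.mem_cons,
    List.mem_append, Set.mem_insert_iff, Set.mem_singleton_iff, List.not_mem_nil, or_false]
  grind

theorem mem_vertices (P : Ear G) (v : V) : v ∈ P.vertices ↔ v = P.a ∨ v = P.b ∨ v ∈ P.inn := by
  simp only [vertices, P.supp, Set.mem_setOf_eq, List.mem_cons,
    List.mem_append, List.not_mem_nil, or_false]
  grind

def tri (P : Ear G) : V × List V × V := (P.a, P.inn, P.b)

theorem toCE (P : Ear G) {X : Finset V} (ha : P.a ∈ X) (hb : P.b ∈ X) (h : ∀ x ∈ P.inn, x ∉ X) :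
    CE G X P.a P.inn P.b := ⟨ha, hb, P.props.2.2.2, P.pth, P.props.1, h⟩

end Ear

theorem walk_of_pth {G : SimpleGraph V} {a b : V} {L : List V} (h : Pth G a L b) :
    ∃ p : G.Walk a b, p.support = a :: (L ++ [b]) := by
  induction L generalizing a with
  | nil => exact ⟨Walk.cons (pth_nil.1 h) Walk.nil, by simp⟩
  | cons x L ih =>
    rw [pth_cons] at h
    obtain ⟨p, hp⟩ := ih h.2
    exact ⟨Walk.cons h.1 p, by simp [hp]⟩

theorem CE.ear {G : SimpleGraph V} {X : Finset V} {a b : V} {L : List V} (h : CE G X a L b) :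
    ∃ P : Ear G, P.tri = (a, L, b) := by
  obtain ⟨p, hp⟩ := walk_of_pth h.pth
  have hnd := h.nd
  have hnew := h.new
  have ha := h.ha
  have hb := h.hb
  have hlen : p.length = L.length + 1 := by
    have := p.length_support; rw [hp] at this; simp at this; omega
  refine ⟨⟨a, b, p, by omega, ?_⟩, by simp [Ear.tri, Ear.inn, hp]⟩
  by_cases hab : a = b
  · right
    refine ⟨hab, ?_⟩
    subst hab
    have := h.hcl rfl
    rw [Walk.copy_rfl_rfl]
    rw [Walk.isCycle_iff_isPath_tail_and_le_length]
    refine ⟨?_, by omega⟩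
    rw [Walk.isPath_def, Walk.support_tail_of_not_nil]
    · rw [hp]; simp only [List.tail_cons, List.nodup_append]; grind
    · intro hn; have := Walk.nil_iff_length_eq.1 hn; omega
  · left
    refine ⟨hab, ?_⟩
    rw [Walk.isPath_def, hp]
    simp only [List.nodup_cons, List.nodup_append]
    grind

end HelperI

section HelperJ
set_option linter.unusedSectionVars false
set_option linter.unusedSimpArgs false
variable [DecidableEq V]

theorem Seq'.new {G : SimpleGraph V} {X Y : Finset V} {S : List (V × List V × V)}
    (h : Seq' G X S Y) : ∀ s ∈ S, ∀ x ∈ s.2.1, x ∉ X := by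
  induction h with
  | nil => simp
  | cons he hr ih =>
    intro s hs x hx
    rcases List.mem_cons.1 hs with rfl | hs
    · exact he.new x hx
    · intro h
      exact ih s hs x hx (mem_lem.2 (Or.inl h))

theorem Seq'.inns {G : SimpleGraph V} {X Y : Finset V} {S : List (V × List V × V)}
    (h : Seq' G X S Y) : ∀ s ∈ S, ∀ x ∈ s.2.1, x ∈ Y := by
  induction h with
  | nil => simp
  | cons he hr ih =>
    intro s hs x hx
    rcases List.mem_cons.1 hs with rfl | hs
    · exact hr.sub (mem_lem.2 (Or.inr hx))
    · exact ih s hs x hx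

theorem Seq'.toRC {G : SimpleGraph V} {X Y : Finset V} {S : List (V × List V × V)}
    (h : Seq' G X S Y) : RC G X (evs S) Y := by
  induction h with
  | nil => exact RC.refl _
  | cons he hr ih => simpa [evs] using RC.step he ih

theorem RR.toSeq {G : SimpleGraph V} {X Y : Finset V} {m : ℕ}
    (h : RR G X m Y) : ∃ T, Seq' G X T Y ∧ ∀ t ∈ T, t.2.1 ≠ [] := by
  induction h with
  | refl => exact ⟨[], Seq'.nil _, by simp⟩
  | @step X Y a b L m he hr ih =>
    obtain ⟨T, hT, hT'⟩ := ih
    by_cases hL : L = []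
    · subst hL
      simp at hT
      exact ⟨T, hT, hT'⟩
    · refine ⟨(a, L, b) :: T, Seq'.cons he.toCE hT, ?_⟩
      intro t ht
      rcases List.mem_cons.1 ht with rfl | ht
      · exact hL
      · exact hT' t ht

theorem Seq'.exists_ears {G : SimpleGraph V} {X Y : Finset V} {S : List (V × List V × V)}
    (h : Seq' G X S Y) : ∃ E : List (Ear G), E.map Ear.tri = S := by
  induction h with
  | nil => exact ⟨[], rfl⟩
  | cons he hr ih =>
    obtain ⟨P, hP⟩ := he.ear
    obtain ⟨E, hE⟩ := ih
    exact ⟨P :: E, by simp [hP, hE]⟩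

theorem Seq'.inv {G : SimpleGraph V} {X Y : Finset V} {a b : V} {L : List V} {S : List (V × List V × V)}
    (h : Seq' G X ((a, L, b) :: S) Y) : CE G X a L b ∧ Seq' G (X ∪ L.toFinset) S Y := by
  cases h with
  | cons he hr => exact ⟨he, hr⟩

def prior {G : SimpleGraph V} (X : Finset V) (E : List (Ear G)) (i : ℕ) : Set V :=
  fun v => v ∈ X ∨ ∃ P ∈ E.take i, v ∈ P.vertices

theorem mem_prior {G : SimpleGraph V} {X : Finset V} {E : List (Ear G)} {i : ℕ} {v : V} :
    v ∈ prior X E i ↔ v ∈ X ∨ ∃ P ∈ E.take i, v ∈ P.vertices := Iff.rfl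

theorem priorVerts_eq {G : SimpleGraph V} (r : V) (E : List (Ear G)) (i : ℕ) :
    priorVerts r E i = prior {r} E i := by
  ext v
  rw [mem_prior, priorVerts, Set.mem_insert_iff, Finset.mem_singleton]
  refine or_congr Iff.rfl ⟨?_, ?_⟩
  · rintro ⟨j, hj, hv⟩
    refine ⟨_, ?_, hv⟩
    rw [List.mem_take_iff_getElem]
    exact ⟨j, by have := j.2; omega, rfl⟩
  · rintro ⟨P, hP, hv⟩
    rw [List.mem_take_iff_getElem] at hP
    obtain ⟨j, hj, rfl⟩ := hP
    exact ⟨⟨j, by omega⟩, by simp; omega, hv⟩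

def Good {G : SimpleGraph V} (X : Finset V) (E : List (Ear G)) : Prop :=
  ∀ i (h : i < E.length), (E[i].a ∈ prior X E i ∧ E[i].b ∈ prior X E i) ∧
    ∀ x ∈ E[i].inn, x ∉ prior X E i

theorem prior_cons {G : SimpleGraph V} {X : Finset V} {P : Ear G} {E : List (Ear G)} {i : ℕ}
    (h : P.a ∈ X ∧ P.b ∈ X) : prior X (P :: E) (i + 1) = prior (X ∪ P.inn.toFinset) E i := by
  ext v
  rw [mem_prior, mem_prior, mem_lem]
  simp only [List.take_succ_cons, List.mem_cons, exists_eq_or_imp, P.mem_vertices]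
  grind

theorem good_cons {G : SimpleGraph V} {X : Finset V} {P : Ear G} {E : List (Ear G)} :
    Good X (P :: E) ↔ ((P.a ∈ X ∧ P.b ∈ X) ∧ ∀ x ∈ P.inn, x ∉ X) ∧ Good (X ∪ P.inn.toFinset) E := by
  constructor
  · intro h
    have h0 := h 0 (by simp)
    simp only [mem_prior, List.take_zero, List.getElem_cons_zero, List.not_mem_nil, false_and,
      exists_false, or_false] at h0
    refine ⟨h0, fun i hi => ?_⟩
    have := h (i + 1) (by simp [hi])
    rw [prior_cons h0.1] at this
    simpa using this
  · rintro ⟨h0, h1⟩ i hi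
    cases i with
    | zero => 
      simp only [mem_prior, List.take_zero, List.getElem_cons_zero, List.not_mem_nil, false_and,
        exists_false, or_false]
      exact h0
    | succ i =>
      rw [prior_cons h0.1]
      simpa using h1 i (by simpa using hi)

theorem good_iff {G : SimpleGraph V} {X : Finset V} {E : List (Ear G)} :
    Good X E ↔ ∃ Y, Seq' G X (E.map Ear.tri) Y := by
  induction E generalizing X with
  | nil => exact ⟨fun _ => ⟨X, Seq'.nil _⟩, fun _ i hi => absurd hi (by simp)⟩
  | cons P E ih =>
    rw [good_cons, ih]
    constructor
    · rintro ⟨h, Y, hY⟩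
      exact ⟨Y, Seq'.cons (P.toCE h.1.1 h.1.2 h.2) hY⟩
    · rintro ⟨Y, hY⟩
      obtain ⟨h1, h2⟩ := Seq'.inv hY
      exact ⟨⟨⟨h1.ha, h1.hb⟩, h1.new⟩, Y, h2⟩

theorem decomp_good {G : SimpleGraph V} (D : EarDecomp G) : Good {D.root} D.ears := by
  intro i hi
  have h1 := D.endpoints_sub ⟨i, hi⟩
  have h2 := D.internal_new ⟨i, hi⟩
  rw [priorVerts_eq] at h1 h2
  refine ⟨⟨h1 (by simp [Ear.endpoints]), h1 (by simp [Ear.endpoints])⟩, fun x hx hp => ?_⟩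
  have : x ∈ (∅ : Set V) := h2 ▸ ⟨((Ear.mem_internal _ _).2 hx), hp⟩
  exact this

theorem countP_evs {G : SimpleGraph V} (E : List (Ear G)) :
    (E.countP fun P => decide (Even P.walk.length)) = evs (E.map Ear.tri) := by
  induction E with
  | nil => rfl
  | cons P E ih =>
    rw [List.countP_cons, ih]
    simp only [evs, List.map_cons, List.sum_cons, P.wlen, Nat.even_iff, Ear.tri, decide_eq_true_eq]
    split_ifs <;> omega

theorem decomp_RC [Fintype V] {G : SimpleGraph V} [DecidableRel G.Adj]
    (hdeg : ∀ v : V, 3 ≤ G.degree v) (D : EarDecomp G) :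
    RC G {D.root} D.evenEars Finset.univ := by
  obtain ⟨Y, hY⟩ := good_iff.1 (decomp_good D)
  have : Y = Finset.univ := by
    refine Finset.eq_univ_iff_forall.2 fun v => ?_
    obtain ⟨w, hw⟩ := (G.degree_pos_iff_exists_adj v).1 (by have := hdeg v; omega)
    obtain ⟨i, hi, -⟩ := D.edge_cover s(v, w) hw
    have h1 := Walk.fst_mem_support_of_mem_edges _ hi
    have h2 := ((D.ears.get i).mem_vertices v).1 h1
    have h3 : (D.ears.get i).tri ∈ D.ears.map Ear.tri := List.mem_map.2 ⟨_, by simp, rfl⟩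
    rcases h2 with h | h | h
    · rw [h]; exact (hY.ends _ h3).1
    · rw [h]; exact (hY.ends _ h3).2
    · exact hY.inns _ h3 v h
  rw [← this, EarDecomp.evenEars, countP_evs]
  exact hY.toRC

theorem walk_edge {G : SimpleGraph V} {a b : V} (p : G.Walk a b) {e : Sym2 V} (he : e ∈ p.edges) :
    ∃ M N x y, p.support = M ++ x :: y :: N ∧ e = s(x, y) := by
  induction p with
  | nil => simp at he
  | @cons u v w h p ih =>
    rw [Walk.edges_cons, List.mem_cons] at he
    rcases he with rfl | he
    · exact ⟨[], p.support.tail, u, v, by rw [Walk.support_cons, List.nil_append, Walk.cons_tail_support], rfl⟩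
    · obtain ⟨M, N, x, y, h1, h2⟩ := ih he
      exact ⟨u :: M, N, x, y, by simp [h1], h2⟩

namespace Ear
variable {G : SimpleGraph V}

theorem edge_sub (P : Ear G) {e : Sym2 V} (he : e ∈ P.edges) {x : V} (hx : x ∈ e) :
    x ∈ P.vertices := by
  obtain ⟨M, N, u, v, h, rfl⟩ := walk_edge P.walk he
  simp only [Sym2.mem_iff] at hx
  show x ∈ P.walk.support
  rw [h]
  rcases hx with rfl | rfl <;> simp

theorem edge_inn (P : Ear G) {e : Sym2 V} (he : e ∈ P.edges) (hP : P.inn ≠ []) :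
    ∃ x ∈ P.inn, x ∈ e := by
  obtain ⟨M, N, u, v, h, rfl⟩ := walk_edge P.walk he
  rw [P.supp] at h
  cases M with
  | nil =>
    obtain ⟨z, L, hz⟩ := List.exists_cons_of_ne_nil hP
    rw [hz] at h
    simp at h
    exact ⟨v, by simp [hz, h.2.1], by simp⟩
  | cons c M =>
    simp only [List.cons_append, List.cons.injEq] at h
    have := congrArg List.dropLast h.2
    rw [List.dropLast_concat] at this
    refine ⟨u, ?_, by simp⟩
    rw [this, List.dropLast_append_of_ne_nil (by simp)]
    simp

theorem edge_triv (P : Ear G) (hP : P.inn = []) {e : Sym2 V} : e ∈ P.edges ↔ e = s(P.a, P.b) := by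
  have key : ∀ e ∈ P.edges, e = s(P.a, P.b) := by
    intro e he
    obtain ⟨M, N, u, v, h, rfl⟩ := walk_edge P.walk he
    rw [P.supp, hP] at h
    cases M with
    | nil => simp at h; rw [h.1, h.2.1]
    | cons c M => 
      have := congrArg List.length h
      simp at this; omega
  refine ⟨key e, ?_⟩
  rintro rfl
  have h1 : P.edges.length = 1 := by rw [edges, Walk.length_edges, P.wlen, hP]; rfl
  obtain ⟨f, hf⟩ := List.exists_mem_of_length_pos (l := P.edges) (by omega)
  exact key f hf ▸ hf

end Ear

theorem edge_disj {G : SimpleGraph V} {X Y : Finset V} {E : List (Ear G)}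
    (h : Seq' G X (E.map Ear.tri) Y) (hE : ∀ P ∈ E, P.inn ≠ []) :
    E.Pairwise fun P Q => ∀ e ∈ P.edges, e ∉ Q.edges := by
  induction E generalizing X with
  | nil => exact List.Pairwise.nil
  | cons P E ih =>
    obtain ⟨h1, h2⟩ := Seq'.inv h
    refine List.Pairwise.cons ?_ (ih h2 fun P hP => hE P (by simp [hP]))
    intro Q hQ e he he'
    obtain ⟨x, hx, hxe⟩ := Q.edge_inn he' (hE Q (by simp [hQ]))
    refine h2.new Q.tri (List.mem_map.2 ⟨Q, hQ, rfl⟩) x hx ?_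
    rw [mem_lem]
    rcases (P.mem_vertices x).1 (P.edge_sub he hxe) with rfl | rfl | h
    · exact Or.inl h1.ha
    · exact Or.inl h1.hb
    · exact Or.inr h

theorem triv_list {G : SimpleGraph V} (F : List (Sym2 V)) (hF : ∀ e ∈ F, e ∈ G.edgeSet) :
    ∃ E : List (Ear G), (∀ P ∈ E, P.inn = []) ∧ E.map (fun P => s(P.a, P.b)) = F := by
  induction F with
  | nil => exact ⟨[], by simp, rfl⟩
  | cons e F ih =>
    obtain ⟨E, h1, h2⟩ := ih fun e he => hF e (by simp [he])
    induction e using Sym2.ind with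
    | _ x y =>
    have hadj : G.Adj x y := hF s(x, y) (by simp)
    refine ⟨trivialEar G hadj :: E, ?_, by rw [List.map_cons, h2]; rfl⟩
    intro P hP
    rcases List.mem_cons.1 hP with rfl | hP
    · rfl
    · exact h1 P hP

theorem conv [Fintype V] {G : SimpleGraph V} [DecidableRel G.Adj] {r : V} {B : List (V × List V × V)}
    (hB : Seq' G {r} B Finset.univ) (hne : ∀ t ∈ B, t.2.1 ≠ []) :
    ∃ (D : EarDecomp G) (T : List (V × List V × V)), D.ears.map Ear.tri = B ++ T ∧
      ∀ t ∈ T, t.2.1 = [] ∧ t.1 ≠ t.2.2 := by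
  classical
  obtain ⟨E, rfl⟩ := hB.exists_ears
  have hne' : ∀ P ∈ E, P.inn ≠ [] := fun P hP => hne P.tri (List.mem_map.2 ⟨P, hP, rfl⟩)
  obtain ⟨E', h1, h2⟩ := triv_list (G := G) (G.edgeFinset.filter fun e => ¬ ∃ P ∈ E, e ∈ P.edges).toList
    (by intro e he; simp at he; exact he.1)
  have hS : Seq' G Finset.univ (E'.map Ear.tri) Finset.univ := by
    clear h2
    induction E' with
    | nil => exact Seq'.nil _
    | cons P E' ih =>
      have hP := h1 P (by simp)
      refine Seq'.cons (P.toCE (by simp) (by simp) (by simp [hP])) ?_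
      rw [hP]
      simpa using ih fun P hP => h1 P (by simp [hP])
  have hS2 : Seq' G {r} ((E ++ E').map Ear.tri) Finset.univ := by
    rw [List.map_append]; exact hB.append hS
  have hgood : Good {r} (E ++ E') := good_iff.2 ⟨_, hS2⟩
  have hmem : ∀ e, (∃ P ∈ E', e = s(P.a, P.b)) ↔ e ∈ G.edgeSet ∧ ¬ ∃ P ∈ E, e ∈ P.edges := by
    intro e
    have : e ∈ E'.map (fun P => s(P.a, P.b)) ↔ e ∈ G.edgeSet ∧ ¬ ∃ P ∈ E, e ∈ P.edges := by
      rw [h2]; simp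
    rw [← this, List.mem_map]
    simp only [eq_comm]
  have hpw : (E ++ E').Pairwise fun P Q => ∀ e ∈ P.edges, e ∉ Q.edges := by
    rw [List.pairwise_append]
    refine ⟨edge_disj hB hne', ?_, ?_⟩
    · have : (E'.map (fun P => s(P.a, P.b))).Nodup := by rw [h2]; exact Finset.nodup_toList _
      rw [List.Nodup, List.pairwise_map] at this
      refine this.imp_of_mem ?_
      intro P Q hP hQ hPQ e he he'
      rw [P.edge_triv (h1 P hP)] at he
      rw [Q.edge_triv (h1 Q hQ)] at he'
      exact hPQ (he.symm.trans he')
    · intro P hP Q hQ e he he'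
      rw [Q.edge_triv (h1 Q hQ)] at he'
      exact ((hmem e).1 ⟨Q, hQ, he'⟩).2 ⟨P, hP, he⟩
  refine ⟨⟨r, E ++ E', ?_, ?_, ?_⟩, E'.map Ear.tri, by simp, ?_⟩
  · intro i x hx
    rw [priorVerts_eq]
    have := (hgood i i.2).1
    rcases hx with rfl | rfl
    · exact this.1
    · exact this.2
  · intro i
    rw [priorVerts_eq, Set.eq_empty_iff_forall_notMem]
    rintro x ⟨hx, hx'⟩
    exact (hgood i i.2).2 x ((Ear.mem_internal _ _).1 hx) hx'
  · intro e he
    have : ∃ P ∈ E ++ E', e ∈ P.edges := by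
      by_cases h : ∃ P ∈ E, e ∈ P.edges
      · obtain ⟨P, hP, h⟩ := h
        exact ⟨P, by simp [hP], h⟩
      · obtain ⟨P, hP, h⟩ := (hmem e).2 ⟨he, h⟩
        exact ⟨P, by simp [hP], (P.edge_triv (h1 P hP)).2 h⟩
    obtain ⟨P, hP, hPe⟩ := this
    obtain ⟨i, rfl⟩ := List.mem_iff_get.1 hP
    refine ⟨i, hPe, ?_⟩
    intro j hj
    rw [List.pairwise_iff_get] at hpw
    rcases lt_trichotomy i j with h | h | h
    · exact absurd hj (hpw i j h e hPe)
    · exact h.symm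
    · exact absurd hPe (hpw j i h e hj)
  · intro t ht
    obtain ⟨P, hP, rfl⟩ := List.mem_map.1 ht
    have hp := P.pth
    rw [h1 P hP, pth_nil] at hp
    exact ⟨h1 P hP, hp.ne⟩

theorem nice_of [Fintype V] {G : SimpleGraph V} [DecidableRel G.Adj] (D : EarDecomp G)
    {p : V} {L : List V} {X : Finset V} {m : ℕ} {A S T : List (V × List V × V)}
    (hl : 3 ≤ L.length) (hX : Seq' G {p} ((p, L, p) :: A) X)
    (hA : ∀ t ∈ A, 3 ≤ t.2.1.length ∧ t.1 ≠ t.2.2) (hS : NiceL G X m S)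
    (hT : ∀ t ∈ T, t.2.1 = [] ∧ t.1 ≠ t.2.2)
    (hD : D.ears.map Ear.tri = ((p, L, p) :: A) ++ S ++ T) : D.IsNice := by
  obtain ⟨s1, s2, s3, s4, s5⟩ := hS
  have hmem : ∀ i : Fin D.ears.length, (D.ears.get i).tri ∈ ((p, L, p) :: A) ++ S ++ T := by
    intro i; rw [← hD]; exact List.mem_map.2 ⟨_, by simp, rfl⟩
  have hshort : ∀ i : Fin D.ears.length, (D.ears.get i).IsShort → (D.ears.get i).tri ∈ S := by
    intro i hi
    have hi' : (D.ears.get i).inn.length = 1 ∨ (D.ears.get i).inn.length = 2 := by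
      rw [Ear.IsShort, Ear.wlen] at hi; omega
    have hi'' : (D.ears.get i).tri.2.1.length = 1 ∨ (D.ears.get i).tri.2.1.length = 2 := hi'
    have hm := hmem i
    simp only [List.mem_append, List.mem_cons] at hm
    rcases hm with ((h | h) | h) | h
    · rw [h] at hi''; simp only at hi''; omega
    · have := hA _ h; omega
    · exact h
    · have := (hT _ h).1; rw [this] at hi''; simp at hi''
  refine ⟨?_, ?_, ?_⟩
  · intro i hi
    have hlen : (i : ℕ) - 1 < (A ++ S ++ T).length := by
      have := congrArg List.length hD
      have := i.2
      simp at *; omega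
    have h1 : (D.ears.get i).tri ∈ A ++ S ++ T := by
      have h2 : (D.ears.get i).tri = (D.ears.map Ear.tri)[(i : ℕ)]'(by simp) := by simp
      have h3 : (D.ears.map Ear.tri)[(i : ℕ)]? = (A ++ S ++ T)[(i : ℕ) - 1]? := by
        rw [hD]
        obtain ⟨k, hk⟩ : ∃ k, (i : ℕ) = k + 1 := ⟨i - 1, by omega⟩
        rw [hk]; simp
      rw [List.getElem?_eq_getElem (by simp), List.getElem?_eq_getElem hlen] at h3
      rw [h2, Option.some.inj h3]
      exact List.getElem_mem _
    simp only [List.mem_append] at h1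
    show (D.ears.get i).tri.1 ≠ (D.ears.get i).tri.2.2
    rcases h1 with (h | h) | h
    · exact (hA _ h).2
    · exact (s1 _ h).1.ne
    · exact (hT _ h).2
  · intro i hi
    have h1 := hshort i hi
    have h2 := (s1 _ h1).1.new
    refine ⟨?_, ?_⟩
    · rw [Ear.IsShort] at hi; rw [Ear.IsTrivial]; omega
    · intro j _ hj
      have hends : (D.ears.get j).tri.1 ∈ X ∧ (D.ears.get j).tri.2.2 ∈ X := by
        rcases List.mem_append.1 (hmem j) with h | h
        · rcases List.mem_append.1 h with h | h
          · exact hX.ends _ h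
          · exact ⟨(s1 _ h).1.ha, (s1 _ h).1.hb⟩
        · exfalso
          apply hj
          have h3 : (D.ears.get j).inn = [] := (hT _ h).1
          rw [Ear.IsTrivial, Ear.wlen, h3]; rfl
      rw [Ear.mem_internal, Ear.mem_internal]
      exact ⟨fun h => h2 _ h hends.1, fun h => h2 _ h hends.2⟩
  · have hpw : (D.ears.map Ear.tri).Pairwise fun s t =>
        (s.2.1.length = 1 ∨ s.2.1.length = 2) → (t.2.1.length = 1 ∨ t.2.1.length = 2) →
        ∀ x ∈ s.2.1, ∀ y ∈ t.2.1, ¬ G.Adj x y := by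
      have hbig : ∀ t ∈ (p, L, p) :: A, ¬ (t.2.1.length = 1 ∨ t.2.1.length = 2) := by
        intro t ht
        rcases List.mem_cons.1 ht with rfl | ht
        · simp only; omega
        · have := hA t ht; omega
      have htr : ∀ t ∈ T, ¬ (t.2.1.length = 1 ∨ t.2.1.length = 2) := by
        intro t ht
        rw [(hT t ht).1]; simp
      rw [hD, List.append_assoc, List.pairwise_append, List.pairwise_append]
      refine ⟨?_, ⟨?_, ?_, ?_⟩, ?_⟩
      · refine List.Pairwise.imp_of_mem (R := fun _ _ => True) ?_ (List.pairwise_of_forall (by simp))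
        intro s t hs ht _ h
        exact absurd h (hbig s hs)
      · exact s3.imp fun h _ _ => h
      · refine List.Pairwise.imp_of_mem (R := fun _ _ => True) ?_ (List.pairwise_of_forall (by simp))
        intro s t hs ht _ h
        exact absurd h (htr s hs)
      · intro s hs t ht _ h
        exact absurd h (htr t ht)
      · intro s hs t ht h
        exact absurd h (hbig s hs)
    rw [List.pairwise_map, List.pairwise_iff_get] at hpw
    intro i j hij hi hj u hu v hv
    rw [Ear.mem_internal] at hu hv
    have hi' : (D.ears.get i).inn.length = 1 ∨ (D.ears.get i).inn.length = 2 := by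
      rw [Ear.IsShort, Ear.wlen] at hi; omega
    have hj' : (D.ears.get j).inn.length = 1 ∨ (D.ears.get j).inn.length = 2 := by
      rw [Ear.IsShort, Ear.wlen] at hj; omega
    rcases lt_or_gt_of_ne hij with h | h
    · exact hpw i j h hi' hj' u hu v hv
    · exact fun hadj => hpw j i h hj' hi' v hv u hu hadj.symm

theorem main_thm [Fintype V] (G : SimpleGraph V) [DecidableRel G.Adj]
    (h2 : TwoVertexConnected G) (hdeg : ∀ v : V, 3 ≤ G.degree v) :
    ∃ D : EarDecomp G, D.IsNice ∧ D.evenEars = phi G := by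
  have hcon := h2.2
  obtain ⟨r⟩ : Nonempty V := by
    by_contra h
    rw [not_nonempty_iff] at h
    have := h2.1
    simp at this
  have hcard : 4 ≤ Fintype.card V := by
    have := hdeg r
    have := G.degree_lt_card_verts r
    omega
  have hex : ∃ n, n ∈ {n | ∃ D : EarDecomp G, D.evenEars = n} := by
    obtain ⟨L, m, hL, hr⟩ := exists_start hcon hdeg r
    obtain ⟨T, hT, hT'⟩ := hr.toSeq
    have hLne := hL.hcl rfl
    obtain ⟨D, -⟩ := conv (Seq'.cons hL hT) (by
      intro t ht
      rcases List.mem_cons.1 ht with rfl | ht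
      · rintro h; simp only at h; rw [h] at hLne; simp at hLne
      · exact hT' t ht)
    exact ⟨_, D, rfl⟩
  obtain ⟨D0, hD0⟩ : ∃ D : EarDecomp G, D.evenEars = phi G := Nat.sInf_mem hex
  have h0 := decomp_RC hdeg D0
  rw [hD0] at h0
  obtain ⟨p, L, m', hL, hl, hr, hm⟩ := long_start hcon hcard h0
  obtain ⟨A, X, S, m, hX, hA, hN, hev⟩ := loop (p := p) (L := L) (M := phi G) hdeg hl _
    (A := []) (X := {p} ∪ L.toFinset) (m := m') (Nat.lt_succ_self _)
    (Seq'.cons hL (Seq'.nil _)) (by simp) hr (by simpa [evs] using hm)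
  have hfull := hX.append hN.seq
  obtain ⟨D, T, hD, hT⟩ := conv hfull (by
    intro t ht h
    rcases List.mem_append.1 ht with ht | ht
    · rcases List.mem_cons.1 ht with rfl | ht
      · simp only at h; rw [h] at hl; simp at hl
      · have := (hA t ht).1; rw [h] at this; simp at this
    · have := (hN.1 t ht).2; rw [h] at this; simp at this)
  refine ⟨D, nice_of D hl hX hA hN hT hD, le_antisymm ?_ (Nat.sInf_le ⟨D, rfl⟩)⟩
  have hT0 : evs T = 0 := by
    rw [evs, List.sum_eq_zero_iff]
    intro x hx
    obtain ⟨t, ht, rfl⟩ := List.mem_map.1 hx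
    simp [(hT t ht).1]
  have hS0 : evs S ≤ m := hN.2.2.2.2
  rw [EarDecomp.evenEars, countP_evs, hD, evs_append, evs_append, hT0]
  omega

end HelperJ

/-- Theorem 2. Every 2-vertex-connected simple graph of minimum degree
at least `3` has a nice ear-decomposition with exactly `φ(G)` even ears. -/
theorem statement_5 {V : Type*} [Fintype V] [DecidableEq V] (G : SimpleGraph V)
    [DecidableRel G.Adj]
    (h2 : TwoVertexConnected G) (hdeg : ∀ v : V, 3 ≤ G.degree v) :
    ∃ D : EarDecomp G, D.IsNice ∧ D.evenEars = phi G := by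
  exact main_thm G h2 hdeg
end

section
/- Let D be an open ear-decomposition of a 2-vertex-connected graph G with exactly φ(G) even ears in which all short ears are pendant. Then no edge of G joins the internal vertex of one 2-ear of D to the internal vertex of another 2-ear of D. -/
open SimpleGraph

variable {V : Type*}

namespace EarAux

variable {G : SimpleGraph V}

def VS (L : List (Ear G)) : Set V := {v | ∃ P ∈ L, v ∈ P.vertices}

def Valid : Set V → List (Ear G) → Prop
  | _, [] => True
  | S, P :: L => P.endpoints ⊆ S ∧ P.internal ∩ S = ∅ ∧ Valid (S ∪ P.vertices) L

theorem valid_iff (L : List (Ear G)) : ∀ S : Set V, Valid S L ↔ ∀ i : Fin L.length,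
    (L.get i).endpoints ⊆ S ∪ {v | ∃ j : Fin L.length, (j : ℕ) < i ∧ v ∈ (L.get j).vertices} ∧
    (L.get i).internal ∩ (S ∪ {v | ∃ j : Fin L.length, (j : ℕ) < i ∧ v ∈ (L.get j).vertices})
      = ∅ := by
  induction L with
  | nil => intro S; simp [Valid]
  | cons P L ih =>
    intro S
    have key : ∀ i : Fin L.length,
        S ∪ {v | ∃ j : Fin (P :: L).length, (j : ℕ) < (i.succ : Fin (L.length + 1)) ∧
          v ∈ ((P :: L).get j).vertices} =
        (S ∪ P.vertices) ∪ {v | ∃ j : Fin L.length, (j : ℕ) < i ∧ v ∈ (L.get j).vertices} := by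
      intro i
      ext v
      simp only [Set.mem_union, Set.mem_ofPred_eq]
      have : (∃ j : Fin (P :: L).length, (j : ℕ) < (i.succ : Fin (L.length + 1)) ∧
          v ∈ ((P :: L).get j).vertices) ↔ (v ∈ P.vertices ∨
          ∃ j : Fin L.length, (j : ℕ) < i ∧ v ∈ (L.get j).vertices) := by
        refine (Fin.exists_fin_succ (n := L.length)).trans ?_
        simp
      rw [this, or_assoc]
    refine Iff.trans ?_ (Fin.forall_fin_succ (n := L.length)).symm
    simp only [key]
    rw [Valid, ih]
    simp [and_assoc]

theorem valid_append (A B : List (Ear G)) : ∀ S : Set V,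
    Valid S (A ++ B) ↔ Valid S A ∧ Valid (S ∪ VS A) B := by
  induction A with
  | nil => intro S; simp [Valid, VS]
  | cons P A ih =>
    intro S
    have : S ∪ VS (P :: A) = S ∪ P.vertices ∪ VS A := by
      ext v; simp [VS, or_assoc]
    simp only [List.cons_append, Valid, ih, this, and_assoc]

theorem vertices_eq (P : Ear G) {v : V} (h : v ∈ P.vertices) :
    v ∈ P.endpoints ∨ v ∈ P.internal := by
  by_cases h' : v ∈ P.endpoints
  · exact Or.inl h'
  · exact Or.inr ⟨h, h'⟩

theorem valid_filter (X : Set V) (p : Ear G → Bool) (L : List (Ear G)) : ∀ S S' : Set V,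
    Valid S L → S' ⊆ S → S \ S' ⊆ X →
    (∀ P ∈ L, p P = true → ∀ v ∈ P.endpoints, v ∉ X) →
    (∀ P ∈ L, p P = false → P.internal ⊆ X) →
    Valid S' (L.filter p) ∧ ∀ v ∈ S ∪ VS L, v ∉ X → v ∈ S' ∪ VS (L.filter p) := by
  induction L with
  | nil =>
    intro S S' _ h1 h2 _ _
    refine ⟨trivial, ?_⟩
    rintro v (hv | ⟨P, hP, _⟩) hx
    · by_contra h
      exact hx (h2 ⟨hv, fun h' => h (Or.inl h')⟩)
    · simp at hP
  | cons P L ih =>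
    intro S S' hV h1 h2 h3 h4
    obtain ⟨hV1, hV2, hV3⟩ := hV
    have hvs : S ∪ VS (P :: L) = S ∪ P.vertices ∪ VS L := by
      ext v; simp [VS, or_assoc]
    rw [hvs]
    by_cases hp : p P = true
    · rw [List.filter_cons_of_pos hp]
      have hvs' : S' ∪ VS (P :: L.filter p) = S' ∪ P.vertices ∪ VS (L.filter p) := by
        ext v; simp [VS, or_assoc]
      rw [hvs']
      obtain ⟨r1, r2⟩ := ih (S ∪ P.vertices) (S' ∪ P.vertices) hV3
        (Set.union_subset_union_left _ h1)
        (by rintro v ⟨hv | hv, hv'⟩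
            · exact h2 ⟨hv, fun h => hv' (Or.inl h)⟩
            · exact absurd (Or.inr hv) hv')
        (fun Q hQ => h3 Q (List.mem_cons_of_mem _ hQ))
        (fun Q hQ => h4 Q (List.mem_cons_of_mem _ hQ))
      refine ⟨⟨?_, ?_, r1⟩, r2⟩
      · intro v hv
        by_contra h
        exact h3 P (by simp) hp v hv (h2 ⟨hV1 hv, h⟩)
      · apply Set.eq_empty_of_forall_notMem
        rintro v ⟨ha, hb⟩
        exact Set.notMem_empty v (hV2 ▸ ⟨ha, h1 hb⟩)
    · rw [List.filter_cons_of_neg hp]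
      have hp' : p P = false := by simpa using hp
      refine ih (S ∪ P.vertices) S' hV3 (h1.trans Set.subset_union_left) ?_
        (fun Q hQ => h3 Q (List.mem_cons_of_mem _ hQ))
        (fun Q hQ => h4 Q (List.mem_cons_of_mem _ hQ))
      rintro v ⟨hv | hv, hv'⟩
      · exact h2 ⟨hv, hv'⟩
      · rcases vertices_eq P hv with h | h
        · exact h2 ⟨hV1 h, hv'⟩
        · exact h4 P (by simp) hp' h

theorem valid_trivial (L : List (Ear G)) : ∀ S : Set V,
    (∀ P ∈ L, P.internal = ∅ ∧ P.endpoints ⊆ S) → Valid S L := by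
  induction L with
  | nil => intro S _; trivial
  | cons P L ih =>
    intro S h
    refine ⟨(h P (by simp)).2, by simp [(h P (by simp)).1], ih _ fun Q hQ => ?_⟩
    have := h Q (List.mem_cons_of_mem _ hQ)
    exact ⟨this.1, this.2.trans Set.subset_union_left⟩

theorem edges_nodup (P : Ear G) : P.edges.Nodup := by
  obtain ⟨a, b, w, hl, h | ⟨h, h'⟩⟩ := P
  · exact h.2.isTrail.edges_nodup
  · subst h
    exact h'.isTrail.edges_nodup

theorem unique_iff [DecidableEq V] (L : List (Ear G)) (e : Sym2 V) :
    (∃! i : Fin L.length, e ∈ (L.get i).edges) ↔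
      (L.map fun P => P.edges.count e).sum = 1 := by
  have : (L.map fun P => P.edges.count e).sum
      = (Finset.univ.filter fun i : Fin L.length => e ∈ (L.get i).edges).card := by
    rw [← Fin.sum_univ_fun_getElem L (fun P => P.edges.count e), Finset.card_filter]
    refine Finset.sum_congr rfl fun i _ => ?_
    exact (edges_nodup _).count
  rw [this, Finset.card_eq_one]
  constructor
  · rintro ⟨i, h, h'⟩
    refine ⟨i, ?_⟩
    ext j
    simp only [Finset.mem_filter, Finset.mem_univ, true_and, Finset.mem_singleton]
    exact ⟨h' j, fun hj => hj ▸ h⟩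
  · rintro ⟨i, h⟩
    refine ⟨i, ?_, fun j hj => ?_⟩
    · have : i ∈ ({i} : Finset _) := by simp
      rw [← h] at this
      simpa using this
    · have : j ∈ (Finset.univ.filter fun i : Fin L.length => e ∈ (L.get i).edges) := by
        simpa using hj
      rw [h] at this
      simpa using this

theorem two_ear (P : Ear G) (h : P.walk.length = 2) {u : V} (hu : u ∈ P.internal) :
    ∃ a b, ∃ _ : G.Adj a u, ∃ _ : G.Adj u b, a ≠ b ∧ P.edges = [s(a, u), s(u, b)] ∧
      P.endpoints = {a, b} ∧ P.internal = {u} := by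
  obtain ⟨a, b, w, hl, hE⟩ := P
  match w, hl, hE, h, hu with
  | .cons h1 (.cons h2 .nil), hl, hE, h, hu =>
    rename_i x
    have hab : a ≠ b := by
      rcases hE with hE | ⟨e, hE⟩
      · exact hE.1
      · subst e
        have := hE.three_le_length
        simp at this
    have hi : (⟨a, b, .cons h1 (.cons h2 .nil), hl, hE⟩ : Ear G).internal = {x} := by
      ext y
      simp only [Ear.internal, Ear.vertices, Ear.endpoints, Set.mem_sdiff, Set.mem_ofPred_eq,
        Walk.support_cons, Walk.support_nil, List.mem_cons, List.not_mem_nil, or_false,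
        Set.mem_insert_iff, Set.mem_singleton_iff]
      have := h1.ne
      have := h2.ne
      grind
    rw [hi] at hu
    obtain rfl : u = x := hu
    exact ⟨a, b, h1, h2, hab, rfl, rfl, hi⟩

theorem triv_ear (P : Ear G) (h : P.walk.length = 1) :
    ∃ a b, P.edges = [s(a, b)] ∧ P.endpoints = {a, b} ∧ P.internal = ∅ := by
  obtain ⟨a, b, w, hl, hE⟩ := P
  match w, hl, hE, h with
  | .cons h1 .nil, hl, hE, h =>
    refine ⟨a, b, rfl, rfl, ?_⟩
    ext y
    simp [Ear.internal, Ear.vertices, Ear.endpoints]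
    tauto

theorem three_ear {a u v c : V} (h1 : G.Adj a u) (h2 : G.Adj u v) (h3 : G.Adj v c)
    (hav : a ≠ v) (huc : u ≠ c) :
    ∃ T : Ear G, T.walk.length = 3 ∧ T.edges = [s(a, u), s(u, v), s(v, c)] ∧
      T.endpoints = {a, c} ∧ T.internal = {u, v} ∧ T.vertices = {a, u, v, c} := by
  have hE : (a ≠ c ∧ (Walk.cons h1 (.cons h2 (.cons h3 .nil))).IsPath) ∨
      (∃ h : a = c, ((Walk.cons h1 (.cons h2 (.cons h3 .nil))).copy rfl h.symm).IsCycle) := by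
    have := h1.ne
    have := h2.ne
    have := h3.ne
    by_cases hac : a = c
    · right
      refine ⟨hac, ?_⟩
      subst hac
      simp only [Walk.copy_rfl_rfl]
      rw [Walk.cons_isCycle_iff]
      simp [*, Ne.symm, eq_comm]
    · left
      simp [*]
  refine ⟨⟨a, c, _, by simp, hE⟩, by simp, rfl, rfl, ?_, ?_⟩
  · ext y
    simp only [Ear.internal, Ear.vertices, Ear.endpoints, Set.mem_sdiff, Set.mem_ofPred_eq,
        Walk.support_cons, Walk.support_nil, List.mem_cons, List.not_mem_nil, or_false,
        Set.mem_insert_iff, Set.mem_singleton_iff]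
    have := h1.ne
    have := h3.ne
    grind
  · ext y
    simp [Ear.vertices]

theorem mem_vertices_of_edge (P : Ear G) {x y : V} (h : s(x, y) ∈ P.edges) :
    x ∈ P.vertices ∧ y ∈ P.vertices :=
  ⟨P.walk.fst_mem_support_of_mem_edges h, P.walk.snd_mem_support_of_mem_edges h⟩

theorem internal_unique (D : EarDecomp G) {P Q : Ear G} (hP : P ∈ D.ears) (hQ : Q ∈ D.ears)
    {w : V} (h1 : w ∈ P.internal) (h2 : w ∈ Q.internal) : P = Q := by
  obtain ⟨i, rfl⟩ := List.get_of_mem hP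
  obtain ⟨j, rfl⟩ := List.get_of_mem hQ
  have key : ∀ i j : Fin D.ears.length, i < j → w ∈ (D.ears.get i).internal →
      w ∉ (D.ears.get j).internal := by
    intro i j hij hi hj
    have := D.internal_new j
    exact Set.notMem_empty w (this ▸ ⟨hj, Or.inr ⟨i, hij, hi.1⟩⟩)
  rcases lt_trichotomy i j with h | h | h
  · exact absurd h2 (key i j h h1)
  · rw [h]
  · exact absurd h1 (key j i h h2)

theorem edge_unique (D : EarDecomp G) {i j : Fin D.ears.length} {e : Sym2 V}
    (h1 : e ∈ (D.ears.get i).edges) (h2 : e ∈ (D.ears.get j).edges) : i = j := by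
  obtain ⟨k, _, hk⟩ := D.edge_cover e ((D.ears.get i).walk.edges_subset_edgeSet h1)
  exact (hk i h1).trans (hk j h2).symm

theorem ears_nodup (D : EarDecomp G) : D.ears.Nodup := by
  rw [List.nodup_iff_injective_get]
  intro i j hij
  have : (D.ears.get i).edges ≠ [] := by
    intro h
    have h1 := (D.ears.get i).length_pos
    rw [← Walk.length_edges] at h1
    change 1 ≤ (D.ears.get i).edges.length at h1
    rw [h] at h1
    simp at h1
  obtain ⟨e, he⟩ := List.exists_mem_of_ne_nil _ this
  exact edge_unique D he (hij ▸ he)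

theorem core [DecidableEq V] (D : EarDecomp G) (hmin : D.evenEars = phi G)
    {P Q : Ear G} (hP : P ∈ D.ears) (hQ : Q ∈ D.ears) (hPQ : P ≠ Q)
    (lP : P.walk.length = 2) (lQ : Q.walk.length = 2)
    {u v : V} (hu : u ∈ P.internal) (hv : v ∈ Q.internal)
    (pP : ∀ R ∈ D.ears, R ≠ P → R.walk.length ≠ 1 → u ∉ R.endpoints)
    (pQ : ∀ R ∈ D.ears, R ≠ Q → R.walk.length ≠ 1 → v ∉ R.endpoints)
    (huv : G.Adj u v) : False := by
  classical
  obtain ⟨a, b, hau, hub, hab, eP, endP, inP⟩ := two_ear P lP hu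
  obtain ⟨c, d, hcv, hvd, hcd, eQ, endQ, inQ⟩ := two_ear Q lQ hv
  -- uniqueness of nontrivial ears at u and v
  have unP : ∀ R ∈ D.ears, R.walk.length ≠ 1 → u ∈ R.vertices → R = P := by
    intro R hR lR huR
    by_contra hne
    rcases vertices_eq R huR with h | h
    · exact pP R hR hne lR h
    · exact hne (internal_unique D hR hP h hu)
  have unQ : ∀ R ∈ D.ears, R.walk.length ≠ 1 → v ∈ R.vertices → R = Q := by
    intro R hR lR hvR
    by_contra hne
    rcases vertices_eq R hvR with h | h
    · exact pQ R hR hne lR h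
    · exact hne (internal_unique D hR hQ h hv)
  have vP : v ∉ P.vertices := fun h => hPQ (unQ P hP (by omega) h)
  have uQ : u ∉ Q.vertices := fun h => hPQ (unP Q hQ (by omega) h).symm
  have aP : a ∈ P.vertices := (mem_vertices_of_edge P (x := a) (y := u) (by simp [eP])).1
  have bP : b ∈ P.vertices := (mem_vertices_of_edge P (x := u) (y := b) (by simp [eP])).2
  have cQ : c ∈ Q.vertices := (mem_vertices_of_edge Q (x := c) (y := v) (by simp [eQ])).1
  have dQ : d ∈ Q.vertices := (mem_vertices_of_edge Q (x := v) (y := d) (by simp [eQ])).2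
  have hav : a ≠ v := fun h => vP (h ▸ aP)
  have hbv : b ≠ v := fun h => vP (h ▸ bP)
  have hcu : c ≠ u := fun h => uQ (h ▸ cQ)
  have hdu : d ≠ u := fun h => uQ (h ▸ dQ)
  -- the trivial ear uv
  obtain ⟨k, hk, _⟩ := D.edge_cover s(u, v) huv
  obtain ⟨R, hRk⟩ : ∃ R, R = D.ears.get k := ⟨_, rfl⟩
  have hR : R ∈ D.ears := hRk ▸ List.get_mem _ _
  have eR' : s(u, v) ∈ R.edges := hRk ▸ hk
  have lR : R.walk.length = 1 := by
    by_contra h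
    have := mem_vertices_of_edge R eR'
    exact hPQ ((unP R hR h this.1).symm.trans (unQ R hR h this.2))
  have unR : ∀ R' ∈ D.ears, s(u, v) ∈ R'.edges → R' = R := by
    intro R' hR' h
    obtain ⟨j, rfl⟩ := List.get_of_mem hR'
    rw [hRk, edge_unique D h hk]
  have eR : R.edges = [s(u, v)] := by
    obtain ⟨x, y, h, _⟩ := triv_ear R lR
    rw [h] at eR' ⊢
    rw [List.mem_singleton.1 eR']
  obtain ⟨T, lT, eT, endT, inT, vT⟩ := three_ear hau huv hcv.symm hav (Ne.symm hcu)
  let p : Ear G → Bool := fun E => decide (E.walk.length ≠ 1 ∧ u ∉ E.vertices ∧ v ∉ E.vertices)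
  let q : Ear G → Bool := fun E => decide (E.walk.length = 1 ∧ s(u, v) ∉ E.edges)
  let N := D.ears.filter p
  let M := D.ears.filter q
  have nd := ears_nodup D
  have perm : D.ears.Perm (P :: Q :: R :: (N ++ M)) := by
    rw [List.perm_ext_iff_of_nodup nd]
    · intro E
      simp only [List.mem_cons, List.mem_append, N, M, List.mem_filter, p, q, decide_eq_true_eq]
      constructor
      · intro hE
        by_cases h1 : E.walk.length = 1
        · by_cases h2 : s(u, v) ∈ E.edges
          · exact Or.inr (Or.inr (Or.inl (unR E hE h2)))
          · exact Or.inr (Or.inr (Or.inr (Or.inr ⟨hE, h1, h2⟩)))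
        · by_cases h2 : u ∈ E.vertices
          · exact Or.inl (unP E hE h1 h2)
          · by_cases h3 : v ∈ E.vertices
            · exact Or.inr (Or.inl (unQ E hE h1 h3))
            · exact Or.inr (Or.inr (Or.inr (Or.inl ⟨hE, h1, h2, h3⟩)))
      · rintro (rfl | rfl | rfl | h | h)
        · exact hP
        · exact hQ
        · exact hR
        · exact h.1
        · exact h.1
    · have hPR : P ≠ R := fun h => by rw [← h] at lR; omega
      have hQR : Q ≠ R := fun h => by rw [← h] at lR; omega
      have n1 : (N ++ M).Nodup := by
        refine List.Nodup.append (nd.filter _) (nd.filter _) ?_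
        intro E h1 h2
        simp only [N, M, List.mem_filter, p, q, decide_eq_true_eq] at h1 h2
        exact h1.2.1 h2.2.1
      have n2 : P ∉ N ++ M := by
        simp only [List.mem_append, N, M, List.mem_filter, p, q, decide_eq_true_eq]
        rintro (h | h)
        · exact h.2.2.1 hu.1
        · have := h.2.1
          omega
      have n3 : Q ∉ N ++ M := by
        simp only [List.mem_append, N, M, List.mem_filter, p, q, decide_eq_true_eq]
        rintro (h | h)
        · exact h.2.2.2 hv.1
        · have := h.2.1
          omega
      have n4 : R ∉ N ++ M := by
        simp only [List.mem_append, N, M, List.mem_filter, p, q, decide_eq_true_eq]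
        rintro (h | h)
        · exact h.2.1 lR
        · exact h.2.2 eR'
      rw [List.nodup_cons, List.nodup_cons, List.nodup_cons, List.mem_cons, List.mem_cons,
        List.mem_cons]
      tauto
  let B := trivialEar G hub
  let C := trivialEar G hvd
  have lB : B.walk.length = 1 := rfl
  have lC : C.walk.length = 1 := rfl
  have eB : B.edges = [s(u, b)] := rfl
  have eC : C.edges = [s(v, d)] := rfl
  have endB : B.endpoints = {u, b} := rfl
  have endC : C.endpoints = {v, d} := rfl
  have inB : B.internal = ∅ := by obtain ⟨_, _, _, _, h⟩ := triv_ear B lB; exact h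
  have inC : C.internal = ∅ := by obtain ⟨_, _, _, _, h⟩ := triv_ear C lC; exact h
  let L' := N ++ (T :: (B :: C :: M))
  have perm' : L'.Perm (T :: B :: C :: (N ++ M)) :=
    List.perm_append_comm_assoc N [T, B, C] M
  -- validity
  have V0 : Valid {D.root} D.ears := by
    rw [valid_iff]
    exact fun i => ⟨D.endpoints_sub i, D.internal_new i⟩
  have inM : ∀ E : Ear G, E.walk.length = 1 → E.internal = ∅ := by
    intro E hE
    obtain ⟨_, _, _, _, h⟩ := triv_ear E hE
    exact h
  have rootnot : ∀ E ∈ D.ears, D.root ∉ E.internal := by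
    intro E hE h
    obtain ⟨j, rfl⟩ := List.get_of_mem hE
    exact Set.notMem_empty D.root (D.internal_new j ▸ ⟨h, Or.inl rfl⟩)
  obtain ⟨VN, cov⟩ := valid_filter {u, v} p D.ears {D.root} {D.root} V0 subset_rfl (by simp)
    (by
      intro E hE hp w hw
      simp only [p, decide_eq_true_eq] at hp
      have hw' : w ∈ E.vertices := by
        rcases hw with h | h
        · rw [h]; exact E.walk.start_mem_support
        · rw [Set.mem_singleton_iff.1 h]; exact E.walk.end_mem_support
      rintro (rfl | h)
      · exact hp.2.1 hw'
      · rw [Set.mem_singleton_iff.1 h] at hw'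
        exact hp.2.2 hw')
    (by
      intro E hE hp
      simp only [p, decide_eq_false_iff_not] at hp
      by_cases h1 : E.walk.length = 1
      · simp [inM E h1]
      · by_cases h2 : u ∈ E.vertices
        · rw [unP E hE h1 h2, inP]; simp
        · by_cases h3 : v ∈ E.vertices
          · rw [unQ E hE h1 h3, inQ]; simp
          · exact absurd ⟨h1, h2, h3⟩ hp)
  change Valid {D.root} N at VN
  have unot : u ∉ {D.root} ∪ VS N := by
    rintro (h | ⟨E, hE, h⟩)
    · exact rootnot P hP (Set.mem_singleton_iff.1 h ▸ hu)
    · simp only [N, List.mem_filter, p, decide_eq_true_eq] at hE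
      exact hE.2.2.1 h
  have vnot : v ∉ {D.root} ∪ VS N := by
    rintro (h | ⟨E, hE, h⟩)
    · exact rootnot Q hQ (Set.mem_singleton_iff.1 h ▸ hv)
    · simp only [N, List.mem_filter, p, decide_eq_true_eq] at hE
      exact hE.2.2.2 h
  have cov' : ∀ E ∈ D.ears, ∀ w ∈ E.vertices, w ≠ u → w ≠ v → w ∈ {D.root} ∪ VS N := by
    intro E hE w hw h1 h2
    exact cov w (Or.inr ⟨E, hE, hw⟩) (by simp [h1, h2])
  have cov2 : ∀ E ∈ D.ears, ∀ w ∈ E.vertices, w ∈ {D.root} ∪ VS N ∪ T.vertices := by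
    intro E hE w hw
    by_cases h1 : w = u
    · right; rw [vT, h1]; simp
    by_cases h2 : w = v
    · right; rw [vT, h2]; simp
    exact Or.inl (cov' E hE w hw h1 h2)
  have V1 : Valid {D.root} L' := by
    refine (valid_append _ _ _).2 ⟨VN, ?_, ?_, ?_⟩
    · rw [endT]
      rintro w (rfl | h)
      · exact cov' P hP _ aP hau.ne hav
      · rw [Set.mem_singleton_iff.1 h]
        exact cov' Q hQ _ cQ hcu hcv.ne
    · rw [inT]
      apply Set.eq_empty_of_forall_notMem
      rintro w ⟨rfl | h, h'⟩
      · exact unot h'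
      · exact vnot (Set.mem_singleton_iff.1 h ▸ h')
    · apply valid_trivial
      intro E hE
      rcases List.mem_cons.1 hE with rfl | hE
      · refine ⟨inB, ?_⟩
        rw [endB]
        rintro w (rfl | h)
        · exact cov2 P hP _ hu.1
        · rw [Set.mem_singleton_iff.1 h]; exact cov2 P hP _ bP
      rcases List.mem_cons.1 hE with rfl | hE
      · refine ⟨inC, ?_⟩
        rw [endC]
        rintro w (rfl | h)
        · exact cov2 Q hQ _ hv.1
        · rw [Set.mem_singleton_iff.1 h]; exact cov2 Q hQ _ dQ
      · simp only [M, List.mem_filter, q, decide_eq_true_eq] at hE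
        refine ⟨inM E hE.2.1, ?_⟩
        rintro w (h | h)
        · rw [h]; exact cov2 E hE.1 _ E.walk.start_mem_support
        · rw [Set.mem_singleton_iff.1 h]; exact cov2 E hE.1 _ E.walk.end_mem_support
  rw [valid_iff] at V1
  let D' : EarDecomp G :=
    { root := D.root
      ears := L'
      endpoints_sub := fun i => (V1 i).1
      internal_new := fun i => (V1 i).2
      edge_cover := by
        intro e he
        have h0 := (unique_iff D.ears e).1 (D.edge_cover e he)
        rw [(perm.map _).sum_eq] at h0
        rw [unique_iff, (perm'.map _).sum_eq]
        simp only [List.map_cons, List.sum_cons, eP, eQ, eR, eT, eB, eC, List.count_cons,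
          List.count_nil] at h0 ⊢
        rw [Sym2.eq_swap (a := c)] at h0
        omega }
  have c1 : D.evenEars = (N ++ M).countP (fun P => decide (Even P.walk.length)) + 2 := by
    unfold EarDecomp.evenEars
    rw [perm.countP_eq, List.countP_cons, List.countP_cons, List.countP_cons, lP, lQ, lR]
    simp
  have c2 : D'.evenEars = (N ++ M).countP (fun P => decide (Even P.walk.length)) := by
    change L'.countP (fun P => decide (Even P.walk.length)) = _
    rw [perm'.countP_eq, List.countP_cons, List.countP_cons, List.countP_cons, lT, lB, lC]
    have : ¬ Even 3 := by decide
    simp [this]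
  have c3 : phi G ≤ D'.evenEars := Nat.sInf_le ⟨D', rfl⟩
  omega

end EarAux

/-- In an open ear-decomposition of a 2-vertex-connected graph with
exactly `φ(G)` even ears in which all short ears are pendant, no edge of `G` joins the
internal vertex of one `2`-ear to the internal vertex of another `2`-ear. -/
theorem statement_6 {V : Type*} [Fintype V] [DecidableEq V] (G : SimpleGraph V)
    (h2 : TwoVertexConnected G)
    (D : EarDecomp G) (hopen : D.IsOpen) (hmin : D.evenEars = phi G)
    (hpend : ∀ i : Fin D.ears.length, (D.ears.get i).IsShort → D.IsPendant i) :
    ∀ i j : Fin D.ears.length, i ≠ j →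
      (D.ears.get i).walk.length = 2 → (D.ears.get j).walk.length = 2 →
      ∀ u ∈ (D.ears.get i).internal, ∀ v ∈ (D.ears.get j).internal, ¬ G.Adj u v := by
  intro i j hij li lj u hu v hv huv
  have key : ∀ i : Fin D.ears.length, (D.ears.get i).walk.length = 2 →
      ∀ u ∈ (D.ears.get i).internal, ∀ R ∈ D.ears, R ≠ D.ears.get i → R.walk.length ≠ 1 →
      u ∉ R.endpoints := by
    intro i li u hu R hR hne lR hmem
    obtain ⟨j, rfl⟩ := List.get_of_mem hR
    have := (hpend i (Or.inl li)).2 j (fun h => hne (by rw [h])) lR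
    rcases hmem with h | h
    · exact this.1 (h ▸ hu)
    · exact this.2 (Set.mem_singleton_iff.1 h ▸ hu)
  exact EarAux.core D hmin (List.get_mem _ _) (List.get_mem _ _)
    (fun h => hij (List.nodup_iff_injective_get.1 (EarAux.ears_nodup D) h)) li lj hu hv
    (key i li u hu) (key j lj v hv) huv
end
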